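/- Let U ⊂ X be a 1-quasiopen set, let Ω ⊃ U be an open set, and let u be a μ-measurable function on Ω with −1 ≤ u ≤ 1 and ‖Du‖(Ω) < ∞. Then ‖Du‖(U) = inf{ liminf_{i→∞} ∫_U g_{u_i} dμ : u_i ∈ N^{1,1}_loc(U), u_i → u in L^1_loc(U) }, where each g_{u_i} is the minimal 1-weak upper gradient of u_i in U. -/

import Mathlib

open MeasureTheory Filter Metric Set
open scoped Topology ENNReal NNReal symmDiff

noncomputable section

namespace PaperBV

/-- A rectifiable curve parametrized by arc-length: a `1`-Lipschitz map on `[0, len]`. -/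
structure Curve (X : Type*) [MetricSpace X] where
  len : ℝ
  len_nonneg : 0 ≤ len
  toFun : ℝ → X
  lip : LipschitzOnWith 1 toFun (Set.Icc 0 len)

variable {X : Type*} [MetricSpace X] [MeasurableSpace X] [BorelSpace X]

/-- The curve lies in the set `A`. -/
def Curve.In (γ : Curve X) (A : Set X) : Prop :=
  ∀ t ∈ Set.Icc (0 : ℝ) γ.len, γ.toFun t ∈ A

/-- The curve integral `∫_γ g ds` of a nonnegative function, for an
arc-length parametrized curve. -/
def Curve.integral (γ : Curve X) (g : X → ℝ≥0∞) : ℝ≥0∞ :=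
  ∫⁻ t in Set.Icc (0 : ℝ) γ.len, g (γ.toFun t)

/-- The upper gradient inequality `|u(x) - u(y)| ≤ ∫_γ g ds` along the curve `γ`,
where `x, y` are the endpoints of `γ`. -/
def UGIneq (u : X → ℝ) (g : X → ℝ≥0∞) (γ : Curve X) : Prop :=
  ENNReal.ofReal |u (γ.toFun 0) - u (γ.toFun γ.len)| ≤ γ.integral g

/-- `g` is an upper gradient of `u` on `X`: `g` is nonnegative (automatic in `ℝ≥0∞`),
Borel, and the upper gradient inequality holds along every curve. -/
def IsUpperGradient (u : X → ℝ) (g : X → ℝ≥0∞) : Prop :=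
  Measurable g ∧ ∀ γ : Curve X, UGIneq u g γ

/-- A family of curves has zero `1`-modulus: there is a nonnegative Borel function
`ρ ∈ L¹(X)` whose curve integral is infinite along every curve of the family. -/
def ZeroMod (μ : Measure X) (Γ : Set (Curve X)) : Prop :=
  ∃ ρ : X → ℝ≥0∞, Measurable ρ ∧ (∫⁻ x, ρ x ∂μ) < ∞ ∧ ∀ γ ∈ Γ, γ.integral ρ = ∞

/-- `g` is a `1`-weak upper gradient of `u` in `A`: `g` is nonnegative, `μ`-measurable,
and the upper gradient inequality holds along `1`-a.e. curve in `A`. -/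
def IsWeakUpperGradientOn (μ : Measure X) (u : X → ℝ) (g : X → ℝ≥0∞) (A : Set X) : Prop :=
  AEMeasurable g μ ∧ ZeroMod μ {γ : Curve X | γ.In A ∧ ¬ UGIneq u g γ}

/-- A nonnegative function `g` belongs to `L¹_loc(A)`. -/
def LIntegrableLocOn (μ : Measure X) (g : X → ℝ≥0∞) (A : Set X) : Prop :=
  ∀ x ∈ A, ∃ r > (0 : ℝ), (∫⁻ y in A ∩ Metric.ball x r, g y ∂μ) < ∞

/-- `g` is the minimal `1`-weak upper gradient of `u` in `A`: a `1`-weak upper gradient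
satisfying `g ≤ g'` `μ`-a.e. in `A` for every `1`-weak upper gradient `g' ∈ L¹_loc(A)`. -/
def IsMinimalWUG (μ : Measure X) (u : X → ℝ) (g : X → ℝ≥0∞) (A : Set X) : Prop :=
  IsWeakUpperGradientOn μ u g A ∧
    ∀ g' : X → ℝ≥0∞, IsWeakUpperGradientOn μ u g' A → LIntegrableLocOn μ g' A →
      ∀ᵐ x ∂(μ.restrict A), g x ≤ g' x

/-- The Newtonian norm `‖u‖_{N^{1,1}(A)}` (valued in `ℝ≥0∞`). -/
def NNorm (μ : Measure X) (A : Set X) (u : X → ℝ) : ℝ≥0∞ :=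
  (∫⁻ x in A, ENNReal.ofReal |u x| ∂μ) +
    ⨅ (g : X → ℝ≥0∞) (_ : IsWeakUpperGradientOn μ u g A), ∫⁻ x in A, g x ∂μ

/-- `u ∈ N^{1,1}(A)`. -/
def MemN11 (μ : Measure X) (A : Set X) (u : X → ℝ) : Prop :=
  NNorm μ A u < ∞

/-- `u ∈ N^{1,1}_loc(A)`: every point of `A` has a ball `B` with `u ∈ N^{1,1}(A ∩ B)`. -/
def MemN11Loc (μ : Measure X) (A : Set X) (u : X → ℝ) : Prop :=
  ∀ x ∈ A, ∃ r > (0 : ℝ), NNorm μ (A ∩ Metric.ball x r) u < ∞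

/-- `u ∈ N^{1,1}(Ω')` for every bounded open `Ω' ⊆ X`. -/
def MemN11LocBounded (μ : Measure X) (u : X → ℝ) : Prop :=
  ∀ Ω' : Set X, IsOpen Ω' → Bornology.IsBounded Ω' → NNorm μ Ω' u < ∞

/-- `u ∈ N^{1,1}_0(Ω)`: `u ∈ N^{1,1}(X)` and `u = 0` outside `Ω`. -/
def MemN110 (μ : Measure X) (Ω : Set X) (u : X → ℝ) : Prop :=
  MemN11 μ Set.univ u ∧ ∀ x ∉ Ω, u x = 0

/-- The `1`-capacity `capa₁(A) = inf {‖u‖_{N^{1,1}(X)} : u ∈ N^{1,1}(X), u ≥ 1 on A}`. -/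
def capa1 (μ : Measure X) (A : Set X) : ℝ≥0∞ :=
  ⨅ (u : X → ℝ) (_ : MemN11 μ Set.univ u) (_ : ∀ x ∈ A, 1 ≤ u x), NNorm μ Set.univ u

/-- `U` is `1`-quasiopen: for every `ε > 0` there is an open `G` with `capa₁(G) < ε`
such that `U ∪ G` is open. -/
def QuasiOpen (μ : Measure X) (U : Set X) : Prop :=
  ∀ ε : ℝ, 0 < ε → ∃ G : Set X, IsOpen G ∧ capa1 μ G < ENNReal.ofReal ε ∧ IsOpen (U ∪ G)

/-- `u ∈ L¹_loc(A)`. -/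
def MemL1Loc (μ : Measure X) (A : Set X) (u : X → ℝ) : Prop :=
  AEMeasurable u (μ.restrict A) ∧
    ∀ x ∈ A, ∃ r > (0 : ℝ), (∫⁻ y in A ∩ Metric.ball x r, ENNReal.ofReal |u y| ∂μ) < ∞

/-- `v i → u` in `L¹_loc(A)`: every `x ∈ A` has a ball `B` with `v i → u` in `L¹(A ∩ B)`. -/
def L1LocConv (μ : Measure X) (A : Set X) (v : ℕ → X → ℝ) (u : X → ℝ) : Prop :=
  ∀ x ∈ A, ∃ r > (0 : ℝ),
    Filter.Tendsto (fun i => ∫⁻ y in A ∩ Metric.ball x r, ENNReal.ofReal |v i y - u y| ∂μ)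
      Filter.atTop (𝓝 0)

/-- `u` is locally Lipschitz on `Ω`. -/
def LocLipOn (u : X → ℝ) (Ω : Set X) : Prop :=
  ∀ x ∈ Ω, ∃ r > (0 : ℝ), ∃ K : ℝ≥0, LipschitzOnWith K u (Ω ∩ Metric.ball x r)

/-- The total variation `‖Du‖(Ω)` of `u` in an open set `Ω`: the infimum of
`liminf_i ∫_Ω g_{v i} dμ` over sequences of locally Lipschitz functions `v i → u`
in `L¹_loc(Ω)`, where `g_{v i}` is the minimal `1`-weak upper gradient of `v i` in `Ω`. -/
def tvOpen (μ : Measure X) (Ω : Set X) (u : X → ℝ) : ℝ≥0∞ :=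
  ⨅ (v : ℕ → X → ℝ) (g : ℕ → X → ℝ≥0∞) (_ : ∀ i, LocLipOn (v i) Ω)
    (_ : ∀ i, IsMinimalWUG μ (v i) (g i) Ω) (_ : L1LocConv μ Ω v u),
    Filter.liminf (fun i => ∫⁻ x in Ω, g i x ∂μ) Filter.atTop

/-- The total variation `‖Du‖(A)` of `u` in an arbitrary set `A`:
`inf {‖Du‖(Ω) : Ω ⊇ A open}`. -/
def tv (μ : Measure X) (A : Set X) (u : X → ℝ) : ℝ≥0∞ :=
  ⨅ (Ω : Set X) (_ : IsOpen Ω) (_ : A ⊆ Ω), tvOpen μ Ω u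

/-- The perimeter `P(E, A) = ‖Dχ_E‖(A)` for arbitrary `A`. -/
def perim (μ : Measure X) (E A : Set X) : ℝ≥0∞ :=
  tv μ A (Set.indicator E (fun _ => (1 : ℝ)))

/-- The perimeter `P(E, Ω) = ‖Dχ_E‖(Ω)` for open `Ω`. -/
def perimOpen (μ : Measure X) (E Ω : Set X) : ℝ≥0∞ :=
  tvOpen μ Ω (Set.indicator E (fun _ => (1 : ℝ)))

/-- The measure `μ` is doubling with constant `Cd`. -/
def Doubling (μ : Measure X) (Cd : ℝ) : Prop :=
  1 ≤ Cd ∧ ∀ (x : X) (r : ℝ), 0 < r →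
    0 < μ (Metric.ball x (2 * r)) ∧
      μ (Metric.ball x (2 * r)) ≤ ENNReal.ofReal Cd * μ (Metric.ball x r) ∧
      μ (Metric.ball x r) < ∞

/-- The space supports a `(1,1)`-Poincaré inequality with constants `CP, lam`. -/
def Poincare (μ : Measure X) (CP lam : ℝ) : Prop :=
  1 ≤ CP ∧ 1 ≤ lam ∧ ∀ (x : X) (r : ℝ), 0 < r → ∀ (u : X → ℝ) (g : X → ℝ≥0∞),
    MemL1Loc μ Set.univ u → IsUpperGradient u g →
      ENNReal.ofReal (⨍ y in Metric.ball x r, |u y - ⨍ z in Metric.ball x r, u z ∂μ| ∂μ)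
        ≤ ENNReal.ofReal (CP * r) *
            ((∫⁻ y in Metric.ball x (lam * r), g y ∂μ) / μ (Metric.ball x (lam * r)))

/-- The restricted spherical Hausdorff content of codimension one. -/
def HR (μ : Measure X) (R : ℝ) (A : Set X) : ℝ≥0∞ :=
  ⨅ (c : ℕ → X) (r : ℕ → ℝ) (_ : ∀ i, 0 < r i ∧ r i ≤ R)
    (_ : A ⊆ ⋃ i, Metric.ball (c i) (r i)),
    ∑' i, μ (Metric.ball (c i) (r i)) / ENNReal.ofReal (r i)

/-- The codimension-one Hausdorff measure `H(A) = lim_{R → 0} H_R(A)`. -/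
def Hcodim (μ : Measure X) (A : Set X) : ℝ≥0∞ :=
  ⨆ (R : ℝ) (_ : 0 < R), HR μ R A

/-- The lower approximate limit `u^∧`. -/
def lowerApprox (μ : Measure X) (u : X → ℝ) (x : X) : EReal :=
  sSup ((fun t : ℝ => (t : EReal)) ''
    {t : ℝ | Filter.Tendsto
      (fun r => μ (Metric.ball x r ∩ {y | u y < t}) / μ (Metric.ball x r))
      (𝓝[>] (0 : ℝ)) (𝓝 0)})

/-- The upper approximate limit `u^∨`. -/
def upperApprox (μ : Measure X) (u : X → ℝ) (x : X) : EReal :=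
  sInf ((fun t : ℝ => (t : EReal)) ''
    {t : ℝ | Filter.Tendsto
      (fun r => μ (Metric.ball x r ∩ {y | t < u y}) / μ (Metric.ball x r))
      (𝓝[>] (0 : ℝ)) (𝓝 0)})

/-- `u ∈ BV_loc(X)`: `u ∈ L¹_loc(X)` with `‖Du‖(Ω') < ∞` for every bounded open `Ω'`. -/
def MemBVLoc (μ : Measure X) (u : X → ℝ) : Prop :=
  MemL1Loc μ Set.univ u ∧
    ∀ Ω' : Set X, IsOpen Ω' → Bornology.IsBounded Ω' → tvOpen μ Ω' u < ∞

/-- The measure-theoretic interior `I_E`. -/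
def mInterior (μ : Measure X) (E : Set X) : Set X :=
  {x | Filter.Tendsto (fun r => μ (Metric.ball x r \ E) / μ (Metric.ball x r))
    (𝓝[>] (0 : ℝ)) (𝓝 0)}

/-- The measure-theoretic exterior `O_E`. -/
def mExterior (μ : Measure X) (E : Set X) : Set X :=
  {x | Filter.Tendsto (fun r => μ (Metric.ball x r ∩ E) / μ (Metric.ball x r))
    (𝓝[>] (0 : ℝ)) (𝓝 0)}

/-- The measure-theoretic boundary `∂*E`: the points where both `E` and its complement
have positive upper density. -/
def mBoundary (μ : Measure X) (E : Set X) : Set X :=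
  {x | 0 < Filter.limsup (fun r => μ (Metric.ball x r ∩ E) / μ (Metric.ball x r))
        (𝓝[>] (0 : ℝ)) ∧
       0 < Filter.limsup (fun r => μ (Metric.ball x r \ E) / μ (Metric.ball x r))
        (𝓝[>] (0 : ℝ))}

/-!
Suppose `U` is `1`-quasiopen: there are open sets `G n` of capacity at most `2⁻ⁿ` with `U ∪ G n`
open, and functions `0 ≤ η n ≤ 1` of small Newtonian norm with `η n = 1` on `G n`.

For `≤`, let `v i → u` in `L¹_loc(U)`, truncated to `[-1, 1]`, and let `w i → u` be nearly optimal
for `‖Du‖(Ω)`. The functions `(1 - η n) v i + η n w i` converge to `u` in the open set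
`W = (U ∪ G n) ∩ Ω`. Almost every curve misses some `G m`, and such a curve in `W` splits into
finitely many pieces lying in `U` or in `G n`; so these functions have weak upper gradients in `W`,
with energy at most that of `v i` in `U` plus a small `2 ∫ g_{η n}` plus `∫ η n g_{w i}`. For
arbitrarily large `n` the last term is small for infinitely many `i`, since otherwise a diagonal
sequence of functions `(1 - η n) w i` would converge to `u` with energy below `‖Du‖(Ω)`.

By doubling and the Poincaré inequality, bounded functions with integrable weak upper gradients in
the open set `W` can be replaced by locally Lipschitz ones of almost the same energy, so `‖Du‖(W)`
is at most the limiting energy up to a small error. For this, the Poincaré inequality for distance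
functions weighted by `ρ` joins any two nearby points `x`, `y` at which the maximal function of `ρ`
is at most `Λ` by a curve on which `ρ` has integral at most `C Λ d(x, y)`; a function with upper
gradient `ρ` is thus Lipschitz on the set of such points, and its Lipschitz extensions are glued
along a dyadic partition of unity of `W`.

For `≥`, a locally Lipschitz function in an open set containing `U` lies in `N^{1,1}_loc(U)`, and
passing from that set to `U` does not increase minimal weak upper gradients.
-/

/-! ### Upper gradients on an interval -/

section Interval

variable {h v w η : ℝ → ℝ} {a b c : ℝ → ℝ≥0∞} {L : ℝ}

/-- The upper gradient inequality for a function of one real variable between the parameters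
`s ≤ t`. -/
def UGBetween (h : ℝ → ℝ) (a : ℝ → ℝ≥0∞) (s t : ℝ) : Prop :=
  ENNReal.ofReal |h s - h t| ≤ ∫⁻ τ in Icc s t, a τ

/-- `a` is an upper gradient of `h` on `[0, L]`: the upper gradient inequality holds on every
closed subinterval. This is the form in which curves enter the calculus rules below. -/
def IsUGOnIcc (h : ℝ → ℝ) (a : ℝ → ℝ≥0∞) (L : ℝ) : Prop :=
  ∀ s t, 0 ≤ s → s ≤ t → t ≤ L → UGBetween h a s t

/-- `a ∈ L¹([0, L])` for an `ℝ≥0∞`-valued function. -/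
structure LIntegrableOnIcc (a : ℝ → ℝ≥0∞) (L : ℝ) : Prop where
  aemeasurable : AEMeasurable a (volume.restrict (Icc 0 L))
  lintegral_lt_top : ∫⁻ t in Icc 0 L, a t < ∞

lemma lintegrableOnIcc_const {k : ℝ≥0∞} (hk : k ≠ ∞) (L : ℝ) :
    LIntegrableOnIcc (fun _ => k) L where
  aemeasurable := aemeasurable_const
  lintegral_lt_top := by
    rw [setLIntegral_const, Real.volume_Icc]
    exact ENNReal.mul_lt_top hk.lt_top ENNReal.ofReal_lt_top

lemma LIntegrableOnIcc.integrableOn (ha : LIntegrableOnIcc a L) :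
    IntegrableOn (fun t => (a t).toReal) (Icc 0 L) :=
  integrable_toReal_of_lintegral_ne_top ha.aemeasurable ha.lintegral_lt_top.ne

lemma LIntegrableOnIcc.intervalIntegrable (ha : LIntegrableOnIcc a L) {s t : ℝ} (hs : 0 ≤ s)
    (hst : s ≤ t) (ht : t ≤ L) : IntervalIntegrable (fun τ => (a τ).toReal) volume s t :=
  (intervalIntegrable_iff_integrableOn_Icc_of_le hst).2
    (ha.integrableOn.mono_set (Icc_subset_Icc hs ht))

lemma UGBetween.trans {r s t : ℝ} (hrs : r ≤ s) (hst : s ≤ t) (h₁ : UGBetween h a r s)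
    (h₂ : UGBetween h a s t) : UGBetween h a r t := by
  have hsplit : ∫⁻ τ in Icc r t, a τ = (∫⁻ τ in Icc r s, a τ) + ∫⁻ τ in Icc s t, a τ := by
    rw [setLIntegral_congr (Ioc_ae_eq_Icc (a := s) (b := t)).symm,
      ← Icc_union_Ioc_eq_Icc hrs hst]
    exact lintegral_union measurableSet_Ioc
      (disjoint_left.2 fun x hx hx' => absurd hx.2 (not_le.2 hx'.1))
  calc ENNReal.ofReal |h r - h t|
      ≤ ENNReal.ofReal |h r - h s| + ENNReal.ofReal |h s - h t| := by
        rw [← ENNReal.ofReal_add (abs_nonneg _) (abs_nonneg _)]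
        exact ENNReal.ofReal_le_ofReal (abs_sub_le _ _ _)
    _ ≤ _ := hsplit ▸ add_le_add h₁ h₂

lemma UGBetween.indicator {s t : ℝ} {Z : Set ℝ} (hst : UGBetween h a s t)
    (hZ : ∀ τ ∈ Ioo s t, τ ∉ Z) : UGBetween h (Zᶜ.indicator a) s t := by
  refine le_trans hst ?_
  rw [setLIntegral_congr (Ioo_ae_eq_Icc (a := s) (b := t)).symm,
    setLIntegral_congr (Ioo_ae_eq_Icc (a := s) (b := t)).symm]
  exact setLIntegral_mono' measurableSet_Ioo fun τ hτ => (indicator_of_mem (hZ τ hτ) a).ge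

/-- Only the first and the last point of `Z` matter: `h` vanishes at both. -/
lemma UGBetween.indicator_compl_of_eq_zero (hL : 0 ≤ L) {Z : Set ℝ} (hZ : IsClosed (Z ∩ Icc 0 L))
    (hhZ : ∀ t ∈ Z ∩ Icc 0 L, h t = 0)
    (H : ∀ s t, 0 ≤ s → s ≤ t → t ≤ L → (∀ τ ∈ Ioo s t, τ ∉ Z) → UGBetween h a s t) :
    UGBetween h (Zᶜ.indicator a) 0 L := by
  have H' : ∀ s t, 0 ≤ s → s ≤ t → t ≤ L → (∀ τ ∈ Ioo s t, τ ∉ Z) →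
      UGBetween h (Zᶜ.indicator a) s t := fun s t hs hst ht hZst =>
    (H s t hs hst ht hZst).indicator hZst
  rcases (Z ∩ Icc 0 L).eq_empty_or_nonempty with hempty | hne
  · exact H' 0 L le_rfl hL le_rfl fun τ hτ hτZ =>
      notMem_empty τ (hempty ▸ ⟨hτZ, Ioo_subset_Icc_self hτ⟩)
  · have hbelow : BddBelow (Z ∩ Icc 0 L) := ⟨0, fun x hx => hx.2.1⟩
    have habove : BddAbove (Z ∩ Icc 0 L) := ⟨L, fun x hx => hx.2.2⟩
    have hp := hZ.csInf_mem hne hbelow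
    have hq := hZ.csSup_mem hne habove
    set p := sInf (Z ∩ Icc 0 L)
    set q := sSup (Z ∩ Icc 0 L)
    have hleft : UGBetween h (Zᶜ.indicator a) 0 p :=
      H' 0 p le_rfl hp.2.1 hp.2.2 fun τ hτ hτZ =>
        hτ.2.not_ge (csInf_le hbelow ⟨hτZ, hτ.1.le, hτ.2.le.trans hp.2.2⟩)
    have hright : UGBetween h (Zᶜ.indicator a) q L :=
      H' q L hq.2.1 hq.2.2 le_rfl fun τ hτ hτZ =>
        hτ.1.not_ge (le_csSup habove ⟨hτZ, hq.2.1.trans hτ.1.le, hτ.2.le⟩)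
    have hmiddle : UGBetween h (Zᶜ.indicator a) p q := by
      simp [UGBetween, hhZ p hp, hhZ q hq]
    exact hleft.trans hp.2.1 hp.2.2 (hmiddle.trans (csInf_le hbelow hq) hq.2.2 hright)

lemma IsUGOnIcc.mono (H : IsUGOnIcc h a L)
    (hab : ∀ᵐ t ∂(volume.restrict (Icc 0 L)), a t ≤ b t) : IsUGOnIcc h b L :=
  fun s t hs hst ht => le_trans (H s t hs hst ht)
    (lintegral_mono_ae (ae_mono (Measure.restrict_mono (Icc_subset_Icc hs ht) le_rfl) hab))

lemma IsUGOnIcc.congr (H : IsUGOnIcc v a L) (hvw : EqOn v w (Icc 0 L)) : IsUGOnIcc w a L := by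
  intro s t hs hst ht
  simpa only [UGBetween, hvw ⟨hs, hst.trans ht⟩, hvw ⟨hs.trans hst, ht⟩] using H s t hs hst ht

lemma IsUGOnIcc.abs_sub_le_integral (H : IsUGOnIcc h a L) (ha : LIntegrableOnIcc a L) {s t : ℝ}
    (hs : 0 ≤ s) (hst : s ≤ t) (ht : t ≤ L) : |h s - h t| ≤ ∫ τ in s..t, (a τ).toReal := by
  have hsub : Icc s t ⊆ Icc 0 L := Icc_subset_Icc hs ht
  have hmeas : AEMeasurable a (volume.restrict (Icc s t)) :=
    ha.aemeasurable.mono_measure (Measure.restrict_mono hsub le_rfl)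
  have hfin : ∫⁻ τ in Icc s t, a τ < ∞ :=
    (lintegral_mono_set hsub).trans_lt ha.lintegral_lt_top
  rw [intervalIntegral.integral_of_le hst, ← integral_Icc_eq_integral_Ioc,
    integral_toReal hmeas (ae_lt_top' hmeas hfin.ne), ← ENNReal.ofReal_le_iff_le_toReal hfin.ne]
  exact H s t hs hst ht

lemma IsUGOnIcc.abs_sub_le_primitive (H : IsUGOnIcc h a L) (ha : LIntegrableOnIcc a L) {s t : ℝ}
    (hs : s ∈ Icc 0 L) (ht : t ∈ Icc 0 L) :
    |h s - h t| ≤ |(∫ τ in (0 : ℝ)..s, (a τ).toReal) - ∫ τ in (0 : ℝ)..t, (a τ).toReal| := by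
  wlog hst : s ≤ t generalizing s t
  · rw [abs_sub_comm (h s), abs_sub_comm (∫ τ in (0 : ℝ)..s, (a τ).toReal)]
    exact this ht hs (le_of_not_ge hst)
  rw [abs_sub_comm (∫ τ in (0 : ℝ)..s, (a τ).toReal), intervalIntegral.integral_interval_sub_left
    (ha.intervalIntegrable le_rfl ht.1 ht.2) (ha.intervalIntegrable le_rfl hs.1 hs.2)]
  exact (H.abs_sub_le_integral ha hs.1 hst ht.2).trans (le_abs_self _)

lemma IsUGOnIcc.absolutelyContinuousOnInterval (hL : 0 ≤ L) (H : IsUGOnIcc h a L)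
    (ha : LIntegrableOnIcc a L) : AbsolutelyContinuousOnInterval h 0 L := by
  have hprim := (ha.intervalIntegrable le_rfl hL
    le_rfl).absolutelyContinuousOnInterval_intervalIntegral (c := 0) left_mem_uIcc
  rw [absolutelyContinuousOnInterval_iff] at hprim ⊢
  intro ε hε
  obtain ⟨δ, hδ, hsum⟩ := hprim ε hε
  refine ⟨δ, hδ, fun E hE hElen => lt_of_le_of_lt (Finset.sum_le_sum fun i hi => ?_)
    (hsum E hE hElen)⟩
  have hmem := hE.1 i hi
  rw [uIcc_of_le hL] at hmem
  exact H.abs_sub_le_primitive ha hmem.1 hmem.2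

lemma abs_le_of_hasDerivAt_of_abs_sub_le {f g : ℝ → ℝ} {f' g' t : ℝ} (hf : HasDerivAt f f' t)
    (hg : HasDerivAt g g' t) (hfg : ∀ᶠ s in 𝓝 t, |f s - f t| ≤ |g s - g t|) : |f'| ≤ |g'| := by
  refine le_of_tendsto_of_tendsto (hasDerivAt_iff_tendsto_slope.1 hf).abs
    (hasDerivAt_iff_tendsto_slope.1 hg).abs ?_
  filter_upwards [eventually_nhdsWithin_of_eventually_nhds hfg] with s hs
  simp only [slope_def_field, abs_div]
  gcongr

lemma IsUGOnIcc.ofReal_abs_deriv_le (hL : 0 ≤ L) (H : IsUGOnIcc h a L)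
    (ha : LIntegrableOnIcc a L) :
    ∀ᵐ t ∂(volume.restrict (Icc 0 L)), ENNReal.ofReal |deriv h t| ≤ a t := by
  have hfinite := ae_lt_top' ha.aemeasurable ha.lintegral_lt_top.ne
  rw [← restrict_Ioo_eq_restrict_Icc, ae_restrict_iff' measurableSet_Ioo] at hfinite ⊢
  filter_upwards [(ha.intervalIntegrable le_rfl hL le_rfl).ae_hasDerivAt_integral, hfinite]
    with t hderiv hfin ht
  by_cases hdiff : DifferentiableAt ℝ h t
  swap
  · simp [deriv_zero_of_not_differentiableAt hdiff]
  rw [← ENNReal.ofReal_toReal (hfin ht).ne]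
  refine ENNReal.ofReal_le_ofReal ?_
  rw [← abs_of_nonneg (ENNReal.toReal_nonneg (a := a t))]
  refine abs_le_of_hasDerivAt_of_abs_sub_le hdiff.hasDerivAt
    (hderiv (by rw [uIcc_of_le hL]; exact Ioo_subset_Icc_self ht) 0 left_mem_uIcc) ?_
  filter_upwards [Ioo_mem_nhds ht.1 ht.2] with s hs
  exact H.abs_sub_le_primitive ha (Ioo_subset_Icc_self hs) (Ioo_subset_Icc_self ht)

lemma isUGOnIcc_of_absolutelyContinuousOnInterval (hL : 0 ≤ L)
    (hac : AbsolutelyContinuousOnInterval h 0 L)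
    (hb : ∀ᵐ t ∂(volume.restrict (Icc 0 L)), ENNReal.ofReal |deriv h t| ≤ b t) :
    IsUGOnIcc h b L := by
  intro s t hs hst ht
  have hsub : Icc s t ⊆ Icc 0 L := Icc_subset_Icc hs ht
  have hac_st : AbsolutelyContinuousOnInterval h s t :=
    hac.mono (by rwa [uIcc_of_le hst, uIcc_of_le hL])
  calc ENNReal.ofReal |h s - h t| = ‖∫ τ in Icc s t, deriv h τ‖ₑ := by
        rw [abs_sub_comm, ← hac_st.integral_deriv_eq_sub, intervalIntegral.integral_of_le hst,
          ← integral_Icc_eq_integral_Ioc, Real.enorm_eq_ofReal_abs]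
    _ ≤ ∫⁻ τ in Icc s t, ‖deriv h τ‖ₑ := enorm_integral_le_lintegral_enorm _
    _ ≤ ∫⁻ τ in Icc s t, b τ := by
        refine lintegral_mono_ae ?_
        filter_upwards [ae_mono (Measure.restrict_mono hsub le_rfl) hb] with τ hτ
        rwa [Real.enorm_eq_ofReal_abs]

lemma IsUGOnIcc.min (hL : 0 ≤ L) (Ha : IsUGOnIcc h a L) (Hb : IsUGOnIcc h b L)
    (ha : LIntegrableOnIcc a L) (hb : LIntegrableOnIcc b L) :
    IsUGOnIcc h (fun t => min (a t) (b t)) L := by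
  refine isUGOnIcc_of_absolutelyContinuousOnInterval hL
    (Ha.absolutelyContinuousOnInterval hL ha) ?_
  filter_upwards [Ha.ofReal_abs_deriv_le hL ha, Hb.ofReal_abs_deriv_le hL hb] with t hat hbt
  exact le_min hat hbt

lemma ofReal_abs_convexComb_deriv_le {θ v w v' w' θ' : ℝ} (h0 : 0 ≤ θ) (h1 : θ ≤ 1) :
    ENNReal.ofReal |v' + (θ' * (w - v) + θ * (w' - v'))| ≤
      ENNReal.ofReal (1 - θ) * ENNReal.ofReal |v'| + ENNReal.ofReal |v - w| * ENNReal.ofReal |θ'|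
        + ENNReal.ofReal θ * ENNReal.ofReal |w'| := by
  have h1' : 0 ≤ 1 - θ := sub_nonneg.2 h1
  have hsplit : v' + (θ' * (w - v) + θ * (w' - v')) = (1 - θ) * v' + (w - v) * θ' + θ * w' := by
    ring
  rw [← ENNReal.ofReal_mul h1', ← ENNReal.ofReal_mul (abs_nonneg _), ← ENNReal.ofReal_mul h0,
    ← ENNReal.ofReal_add (by positivity) (by positivity),
    ← ENNReal.ofReal_add (by positivity) (by positivity), hsplit]
  refine ENNReal.ofReal_le_ofReal ((abs_add_three _ _ _).trans_eq ?_)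
  rw [abs_mul, abs_mul, abs_mul, abs_of_nonneg h0, abs_of_nonneg h1', abs_sub_comm w]

/-- The Leibniz rule. Writing the convex combination as `v + η (w - v)`, the derivative of `η`
is weighted by `|v - w|` only. -/
lemma IsUGOnIcc.convexComb (hL : 0 ≤ L) (Hv : IsUGOnIcc v a L) (Hw : IsUGOnIcc w b L)
    (Hη : IsUGOnIcc η c L) (ha : LIntegrableOnIcc a L) (hb : LIntegrableOnIcc b L)
    (hc : LIntegrableOnIcc c L) (hη : ∀ t ∈ Icc 0 L, η t ∈ Icc (0 : ℝ) 1) :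
    IsUGOnIcc (fun t => (1 - η t) * v t + η t * w t)
      (fun t => ENNReal.ofReal (1 - η t) * a t + ENNReal.ofReal |v t - w t| * c t
        + ENNReal.ofReal (η t) * b t) L := by
  have hacv := Hv.absolutelyContinuousOnInterval hL ha
  have hacw := Hw.absolutelyContinuousOnInterval hL hb
  have hacη := Hη.absolutelyContinuousOnInterval hL hc
  have hcomb : (fun t => (1 - η t) * v t + η t * w t) = v + η * (w - v) := by
    ext t
    simp only [Pi.add_apply, Pi.mul_apply, Pi.sub_apply]
    ring
  have hdiff : ∀ {f : ℝ → ℝ}, AbsolutelyContinuousOnInterval f 0 L →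
      ∀ᵐ t ∂(volume.restrict (Icc 0 L)), DifferentiableAt ℝ f t := fun hf => by
    rw [ae_restrict_iff' measurableSet_Icc, ← uIcc_of_le hL]
    exact hf.ae_differentiableAt
  rw [hcomb]
  refine isUGOnIcc_of_absolutelyContinuousOnInterval hL
    (hacv.add (hacη.mul (hacw.sub hacv))) ?_
  filter_upwards [Hv.ofReal_abs_deriv_le hL ha, Hw.ofReal_abs_deriv_le hL hb,
    Hη.ofReal_abs_deriv_le hL hc, hdiff hacv, hdiff hacw, hdiff hacη,
    ae_restrict_mem measurableSet_Icc] with t hvt hwt hηt hv' hw' hη' ht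
  have hderiv : deriv (v + η * (w - v)) t
      = deriv v t + (deriv η t * (w t - v t) + η t * (deriv w t - deriv v t)) :=
    (hv'.hasDerivAt.add (hη'.hasDerivAt.mul (hw'.hasDerivAt.sub hv'.hasDerivAt))).deriv
  rw [hderiv]
  refine (ofReal_abs_convexComb_deriv_le (hη t ht).1 (hη t ht).2).trans ?_
  gcongr

end Interval

/-! ### Modulus and almost every curve -/

section Curve

variable {Y : Type*} [MetricSpace Y] {γ : Curve Y} {u : Y → ℝ} {g : Y → ℝ≥0∞}

lemma Curve.continuousOn (γ : Curve Y) : ContinuousOn γ.toFun (Icc 0 γ.len) :=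
  γ.lip.continuousOn

lemma Curve.zero_mem (γ : Curve Y) : (0 : ℝ) ∈ Icc 0 γ.len := left_mem_Icc.2 γ.len_nonneg

lemma Curve.len_mem (γ : Curve Y) : γ.len ∈ Icc 0 γ.len := right_mem_Icc.2 γ.len_nonneg

lemma Curve.In.mono {A B : Set Y} (h : γ.In A) (hAB : A ⊆ B) : γ.In B :=
  fun t ht => hAB (h t ht)

/-- `g ∈ L¹(γ)`. -/
abbrev Curve.LIntegrable (γ : Curve Y) (g : Y → ℝ≥0∞) : Prop :=
  LIntegrableOnIcc (fun t => g (γ.toFun t)) γ.len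

/-- The restriction of `γ` to `[s, t]`, reparametrized to start at `0`. -/
def Curve.subcurve (γ : Curve Y) (s t : ℝ) (hs : 0 ≤ s) (hst : s ≤ t) (ht : t ≤ γ.len) :
    Curve Y where
  len := t - s
  len_nonneg := sub_nonneg.2 hst
  toFun τ := γ.toFun (s + τ)
  lip p hp q hq := by
    simpa using γ.lip (x := s + p) ⟨by linarith [hp.1], by linarith [hp.2]⟩ (y := s + q)
      ⟨by linarith [hq.1], by linarith [hq.2]⟩

lemma Curve.In.subcurve {A : Set Y} (h : γ.In A) {s t : ℝ} (hs : 0 ≤ s) (hst : s ≤ t)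
    (ht : t ≤ γ.len) : (γ.subcurve s t hs hst ht).In A := fun _ hτ =>
  h _ ⟨add_nonneg hs hτ.1, (le_sub_iff_add_le'.1 hτ.2).trans ht⟩

lemma setLIntegral_Icc_comp_add_left (f : ℝ → ℝ≥0∞) (p q s : ℝ) :
    ∫⁻ τ in Icc p q, f (s + τ) = ∫⁻ τ in Icc (s + p) (s + q), f τ := by
  have himage : (s + ·) '' Icc p q = Icc (s + p) (s + q) := image_const_add_Icc s p q
  rw [← himage, (measurePreserving_add_left volume s).setLIntegral_comp_emb
    (measurableEmbedding_addLeft s)]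

lemma Curve.integral_subcurve (γ : Curve Y) {s t : ℝ} (hs : 0 ≤ s) (hst : s ≤ t) (ht : t ≤ γ.len)
    (g : Y → ℝ≥0∞) :
    (γ.subcurve s t hs hst ht).integral g = ∫⁻ τ in Icc s t, g (γ.toFun τ) := by
  simp only [Curve.integral, Curve.subcurve,
    setLIntegral_Icc_comp_add_left (fun τ => g (γ.toFun τ)), add_zero, add_sub_cancel]

lemma ugIneq_subcurve_iff {s t : ℝ} (hs : 0 ≤ s) (hst : s ≤ t) (ht : t ≤ γ.len) :
    UGIneq u g (γ.subcurve s t hs hst ht) ↔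
      UGBetween (fun τ => u (γ.toFun τ)) (fun τ => g (γ.toFun τ)) s t := by
  unfold UGIneq UGBetween
  rw [γ.integral_subcurve hs hst ht]
  simp [Curve.subcurve]

/-- `g` is an upper gradient of `u` along `γ`: the upper gradient inequality holds along every
subcurve of `γ`. -/
def IsUGAlong (u : Y → ℝ) (g : Y → ℝ≥0∞) (γ : Curve Y) : Prop :=
  IsUGOnIcc (fun t => u (γ.toFun t)) (fun t => g (γ.toFun t)) γ.len

lemma IsUGAlong.ugIneq (h : IsUGAlong u g γ) : UGIneq u g γ :=
  h 0 γ.len le_rfl γ.len_nonneg le_rfl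

lemma isUGAlong_of_ugIneq_subcurve
    (h : ∀ s t (hs : 0 ≤ s) (hst : s ≤ t) (ht : t ≤ γ.len),
      UGIneq u g (γ.subcurve s t hs hst ht)) : IsUGAlong u g γ :=
  fun s t hs hst ht => (ugIneq_subcurve_iff hs hst ht).1 (h s t hs hst ht)

lemma isUGAlong_of_lipschitzOnWith {K : ℝ≥0} {A : Set Y} (hu : LipschitzOnWith K u A)
    (hγ : γ.In A) : IsUGAlong u (fun _ => K) γ := by
  intro s t hs hst ht
  have hs' : s ∈ Icc 0 γ.len := ⟨hs, hst.trans ht⟩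
  have ht' : t ∈ Icc 0 γ.len := ⟨hs.trans hst, ht⟩
  calc ENNReal.ofReal |u (γ.toFun s) - u (γ.toFun t)|
      = edist (u (γ.toFun s)) (u (γ.toFun t)) := by rw [edist_dist, Real.dist_eq]
    _ ≤ K * edist (γ.toFun s) (γ.toFun t) := hu (hγ s hs') (hγ t ht')
    _ ≤ K * edist s t := by
        gcongr
        simpa using γ.lip hs' ht'
    _ = ∫⁻ _ in Icc s t, (K : ℝ≥0∞) := by
        rw [setLIntegral_const, Real.volume_Icc, edist_comm, edist_dist, Real.dist_eq,
          abs_of_nonneg (sub_nonneg.2 hst)]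

end Curve

section Modulus

variable {Y : Type*} [MetricSpace Y] [MeasurableSpace Y] {μ : Measure Y} {Γ Γ' : Set (Curve Y)}

lemma ZeroMod.mono (h : ZeroMod μ Γ) (hs : Γ' ⊆ Γ) : ZeroMod μ Γ' := by
  obtain ⟨ρ, hρ, hfin, htop⟩ := h
  exact ⟨ρ, hρ, hfin, fun γ hγ => htop γ (hs hγ)⟩

lemma ZeroMod.iUnion {ι : Type*} [Countable ι] {Γ : ι → Set (Curve Y)}
    (h : ∀ i, ZeroMod μ (Γ i)) : ZeroMod μ (⋃ i, Γ i) := by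
  choose ρ hρ hfin htop using h
  obtain ⟨δ, hδ, hsum⟩ :=
    ENNReal.exists_pos_tsum_mul_lt_of_countable one_ne_zero _ fun i => (hfin i).ne
  refine ⟨fun x => ∑' i, ρ i x * δ i, Measurable.tsum fun i => (hρ i).mul_const _, ?_,
    fun γ hγ => ?_⟩
  · simp only [lintegral_tsum fun i => ((hρ i).mul_const (δ i : ℝ≥0∞)).aemeasurable,
      lintegral_mul_const _ (hρ _)]
    exact hsum.trans ENNReal.one_lt_top
  · obtain ⟨i, hi⟩ := mem_iUnion.1 hγ
    have htop_i : γ.integral (fun x => ρ i x * δ i) = ∞ := by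
      rw [Curve.integral, lintegral_mul_const' _ _ ENNReal.coe_ne_top]
      exact ENNReal.mul_eq_top.2 (Or.inr ⟨htop i γ hi, ENNReal.coe_ne_zero.2 (hδ i).ne'⟩)
    exact top_le_iff.1 (htop_i.ge.trans (lintegral_mono fun t => ENNReal.le_tsum i))

/-- The filter of `1`-almost every curve: its sets are the complements of the curve families of
zero `1`-modulus. -/
def aeCurve (μ : Measure Y) : Filter (Curve Y) :=
  Filter.ofCountableUnion {Γ | ZeroMod μ Γ}
    (fun S hS h => by
      have := hS.to_subtype
      exact sUnion_eq_iUnion (s := S) ▸ ZeroMod.iUnion fun Γ => h Γ Γ.2)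
    (fun _ h _ hs => ZeroMod.mono h hs)

instance : CountableInterFilter (aeCurve μ) :=
  inferInstanceAs (CountableInterFilter (Filter.ofCountableUnion ..))

lemma eventually_aeCurve {P : Curve Y → Prop} :
    (∀ᶠ γ in aeCurve μ, P γ) ↔ ZeroMod μ {γ | ¬ P γ} := Iff.rfl

lemma eventually_aeCurve_integral_lt_top {ρ : Y → ℝ≥0∞} (hρ : Measurable ρ)
    (hfin : ∫⁻ x, ρ x ∂μ < ∞) : ∀ᶠ γ in aeCurve μ, γ.integral ρ < ∞ :=
  eventually_aeCurve.2 ⟨ρ, hρ, hfin, fun _ hγ => not_lt_top_iff.1 hγ⟩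

/-- A density that is infinite on all of `Γ` is also infinite on every curve with a subcurve
in `Γ`. -/
lemma eventually_aeCurve_subcurve {P : Curve Y → Prop} (h : ∀ᶠ γ in aeCurve μ, P γ) :
    ∀ᶠ γ in aeCurve μ, ∀ s t (hs : 0 ≤ s) (hst : s ≤ t) (ht : t ≤ γ.len),
      P (γ.subcurve s t hs hst ht) := by
  obtain ⟨ρ, hρ, hfin, htop⟩ := eventually_aeCurve.1 h
  refine eventually_aeCurve.2 ⟨ρ, hρ, hfin, fun γ hγ => ?_⟩
  simp only [mem_ofPred_eq, not_forall] at hγ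
  obtain ⟨s, t, hs, hst, ht, hP⟩ := hγ
  rw [← top_le_iff, ← htop _ hP, Curve.integral_subcurve]
  exact lintegral_mono_set (Icc_subset_Icc hs ht)

end Modulus

lemma exists_measurable_ge_ae_eq {α : Type*} [MeasurableSpace α] {μ : Measure α}
    {g : α → ℝ≥0∞} (hg : AEMeasurable g μ) :
    ∃ g' : α → ℝ≥0∞, Measurable g' ∧ g ≤ g' ∧ g =ᵐ[μ] g' := by
  have hN : μ (toMeasurable μ {x | g x ≠ hg.mk g x}) = 0 :=
    (measure_toMeasurable _).trans hg.ae_eq_mk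
  set N := toMeasurable μ {x | g x ≠ hg.mk g x}
  have heq : ∀ x ∉ N, g x = hg.mk g x := fun x hx =>
    not_not.1 fun hne => hx (subset_toMeasurable _ _ hne)
  refine ⟨fun x => hg.mk g x + N.indicator (fun _ => ∞) x, hg.measurable_mk.add
    (measurable_const.indicator (measurableSet_toMeasurable _ _)), fun x => ?_, ?_⟩
  · by_cases hx : x ∈ N
    · simp [hx]
    · simp [hx, heq x hx]
  · filter_upwards [measure_eq_zero_iff_ae_notMem.1 hN] with x hx
    simp [hx, heq x hx]

section AlmostEveryCurve

variable {μ : Measure X} {g : X → ℝ≥0∞} {A : Set X}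

lemma Curve.aemeasurable_comp (γ : Curve X) (hg : Measurable g) :
    AEMeasurable (fun t => g (γ.toFun t)) (volume.restrict (Icc 0 γ.len)) :=
  hg.comp_aemeasurable (γ.continuousOn.aemeasurable measurableSet_Icc)

lemma eventually_aeCurve_ae {P : X → Prop} (hP : ∀ᵐ x ∂μ, P x) :
    ∀ᶠ γ in aeCurve μ, ∀ᵐ t ∂(volume.restrict (Icc (0 : ℝ) γ.len)), P (γ.toFun t) := by
  set N := toMeasurable μ {x | ¬ P x}
  have hPN : ∀ x, ¬ P x → x ∈ N := subset_toMeasurable μ {x | ¬ P x}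
  have hN : μ N = 0 := (measure_toMeasurable _).trans hP
  have hNm : MeasurableSet N := measurableSet_toMeasurable _ _
  have hmeas : Measurable (N.indicator fun _ => (∞ : ℝ≥0∞)) := measurable_const.indicator hNm
  filter_upwards [eventually_aeCurve_integral_lt_top (μ := μ) hmeas
    (by simp [lintegral_indicator hNm, hN])] with γ hγ
  filter_upwards [ae_lt_top' (γ.aemeasurable_comp hmeas) hγ.ne] with t ht
  by_contra hPt
  simp [indicator_of_mem (hPN _ hPt)] at ht

lemma eventually_aeCurve_lintegrable (hg : AEMeasurable g μ) (hfin : ∫⁻ x, g x ∂μ < ∞) :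
    ∀ᶠ γ in aeCurve μ, γ.LIntegrable g := by
  obtain ⟨g', hg', hle, heq⟩ := exists_measurable_ge_ae_eq hg
  rw [lintegral_congr_ae heq] at hfin
  filter_upwards [eventually_aeCurve_integral_lt_top hg' hfin, eventually_aeCurve_ae heq]
    with γ hγ hγeq
  exact ⟨(γ.aemeasurable_comp hg').congr (EventuallyEq.symm hγeq),
    (lintegral_mono fun t => hle (γ.toFun t)).trans_lt hγ⟩

lemma eventually_aeCurve_lintegrable_indicator (hg : AEMeasurable g μ)
    (hA : NullMeasurableSet A μ) (hfin : ∫⁻ x in A, g x ∂μ < ∞) :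
    ∀ᶠ γ in aeCurve μ, γ.LIntegrable (A.indicator g) :=
  eventually_aeCurve_lintegrable (hg.indicator₀ hA) (by rwa [lintegral_indicator₀ hA])

lemma Curve.In.lintegrable_of_indicator {Y : Type*} [MetricSpace Y] {γ : Curve Y} {B : Set Y}
    {g : Y → ℝ≥0∞} (hγ : γ.In B) (h : γ.LIntegrable (B.indicator g)) : γ.LIntegrable g := by
  have heq : EqOn (fun t => B.indicator g (γ.toFun t)) (fun t => g (γ.toFun t)) (Icc 0 γ.len) :=
    fun t ht => indicator_of_mem (hγ t ht) g
  exact ⟨h.aemeasurable.congr (ae_restrict_of_forall_mem measurableSet_Icc heq),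
    (setLIntegral_congr_fun measurableSet_Icc heq) ▸ h.lintegral_lt_top⟩

lemma eventually_aeCurve_lintegrable_of_in (hg : AEMeasurable g μ) (hA : NullMeasurableSet A μ)
    (hfin : ∫⁻ x in A, g x ∂μ < ∞) : ∀ᶠ γ in aeCurve μ, γ.In A → γ.LIntegrable g := by
  filter_upwards [eventually_aeCurve_lintegrable_indicator hg hA hfin] with γ hγ hγA
  exact hγA.lintegrable_of_indicator hγ

lemma Curve.lintegrable_of_subset_biUnion {Y ι : Type*} [MetricSpace Y] {γ : Curve Y}
    {g : Y → ℝ≥0∞} {B : ι → Set Y} (F : Finset ι)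
    (hg : AEMeasurable (fun t => g (γ.toFun t)) (volume.restrict (Icc 0 γ.len)))
    (hB : ∀ i ∈ F, γ.LIntegrable ((B i).indicator g)) (hcover : γ.In (⋃ i ∈ F, B i)) :
    γ.LIntegrable g := by
  refine ⟨hg, lt_of_le_of_lt ?_ (ENNReal.sum_lt_top.2 fun i hi => (hB i hi).lintegral_lt_top)⟩
  rw [← lintegral_finsetSum' F fun i hi => (hB i hi).aemeasurable]
  refine setLIntegral_mono' measurableSet_Icc fun t ht => ?_
  obtain ⟨i, hi, hti⟩ := mem_iUnion₂.1 (hcover t ht)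
  calc g (γ.toFun t) = (B i).indicator g (γ.toFun t) := (indicator_of_mem hti g).symm
    _ ≤ _ := Finset.single_le_sum (f := fun i => (B i).indicator g (γ.toFun t))
        (fun _ _ => zero_le) hi

lemma eventually_aeCurve_lintegrable_of_lintegrableLocOn [SecondCountableTopology X]
    (hg : AEMeasurable g μ) (hA : NullMeasurableSet A μ) (hloc : LIntegrableLocOn μ g A) :
    ∀ᶠ γ in aeCurve μ, γ.In A → γ.LIntegrable g := by
  choose! r hr hfin using hloc
  obtain ⟨T, hTA, hTc, hT⟩ := TopologicalSpace.countable_cover_nhdsWithin (s := A)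
    (f := fun x => ball x (r x))
    (fun x hx => mem_nhdsWithin_of_mem_nhds (ball_mem_nhds x (hr x hx)))
  have hball : ∀ᶠ γ in aeCurve μ, ∀ x ∈ T, γ.LIntegrable ((A ∩ ball x (r x)).indicator g) :=
    (eventually_countable_ball hTc).2 fun x hx => eventually_aeCurve_lintegrable_indicator hg
      (hA.inter measurableSet_ball.nullMeasurableSet) (hfin x (hTA hx))
  filter_upwards [hball, eventually_aeCurve_ae hg.ae_eq_mk] with γ hγ hmk hγA
  have hcpt : IsCompact (γ.toFun '' Icc 0 γ.len) :=
    isCompact_Icc.image_of_continuousOn γ.continuousOn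
  obtain ⟨F, hFT, hF, hcover⟩ := hcpt.elim_finite_subcover_image (c := fun x => ball x (r x))
    (fun _ _ => isOpen_ball) ((image_subset_iff.2 hγA).trans hT)
  lift F to Finset X using hF
  refine Curve.lintegrable_of_subset_biUnion F
    ((γ.aemeasurable_comp hg.measurable_mk).congr (EventuallyEq.symm hmk))
    (fun x hx => hγ x (hFT hx)) fun t ht => ?_
  obtain ⟨x, hx, htx⟩ := mem_iUnion₂.1 (hcover (mem_image_of_mem _ ht))
  exact mem_iUnion₂.2 ⟨x, hx, hγA t ht, htx⟩

end AlmostEveryCurve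

/-! ### Weak upper gradients -/

section WeakUpperGradient

variable {Y : Type*} [MetricSpace Y] [MeasurableSpace Y] {μ : Measure Y} {u : Y → ℝ}
  {g h : Y → ℝ≥0∞} {A B : Set Y}

lemma isWeakUpperGradientOn_iff_ugIneq : IsWeakUpperGradientOn μ u g A ↔
    AEMeasurable g μ ∧ ∀ᶠ γ in aeCurve μ, γ.In A → UGIneq u g γ := by
  simp only [IsWeakUpperGradientOn, eventually_aeCurve, Classical.not_imp]

/-- The inequality may be imposed on all subcurves at once, because the curves with a subcurve in
a family of zero modulus again form such a family. -/
lemma isWeakUpperGradientOn_iff_isUGAlong : IsWeakUpperGradientOn μ u g A ↔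
    AEMeasurable g μ ∧ ∀ᶠ γ in aeCurve μ, γ.In A → IsUGAlong u g γ := by
  rw [isWeakUpperGradientOn_iff_ugIneq]
  refine and_congr_right fun _ => ⟨fun hug => ?_, fun hug => hug.mono fun γ hγ hγA =>
    (hγ hγA).ugIneq⟩
  filter_upwards [eventually_aeCurve_subcurve hug] with γ hγ hγA
  exact isUGAlong_of_ugIneq_subcurve fun s t hs hst ht =>
    hγ s t hs hst ht (hγA.subcurve hs hst ht)

lemma IsWeakUpperGradientOn.eventually_isUGAlong (hg : IsWeakUpperGradientOn μ u g A) :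
    ∀ᶠ γ in aeCurve μ, γ.In A → IsUGAlong u g γ :=
  (isWeakUpperGradientOn_iff_isUGAlong.1 hg).2

lemma IsWeakUpperGradientOn.mono_set (hg : IsWeakUpperGradientOn μ u g A) (hBA : B ⊆ A) :
    IsWeakUpperGradientOn μ u g B :=
  ⟨hg.1, hg.2.mono fun _ hγ => ⟨hγ.1.mono hBA, hγ.2⟩⟩

lemma IsWeakUpperGradientOn.comp_lipschitzWith_one {φ : ℝ → ℝ} (hφ : LipschitzWith 1 φ)
    (hg : IsWeakUpperGradientOn μ u g A) : IsWeakUpperGradientOn μ (fun x => φ (u x)) g A := by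
  refine ⟨hg.1, hg.2.mono fun γ hγ => ⟨hγ.1, fun hug => hγ.2 (le_trans ?_ hug)⟩⟩
  simpa only [Real.dist_eq, NNReal.coe_one, one_mul] using
    ENNReal.ofReal_le_ofReal (hφ.dist_le_mul (u (γ.toFun 0)) (u (γ.toFun γ.len)))

lemma isWeakUpperGradientOn_top : IsWeakUpperGradientOn μ u (fun _ => ∞) A := by
  refine isWeakUpperGradientOn_iff_ugIneq.2 ⟨aemeasurable_const, .of_forall fun γ _ => ?_⟩
  rcases γ.len_nonneg.eq_or_lt with hlen | hlen
  · simp [UGIneq, ← hlen]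
  · simp [UGIneq, Curve.integral, hlen]

lemma LIntegrableLocOn.mono (hg : LIntegrableLocOn μ g A) (hhg : h ≤ g) :
    LIntegrableLocOn μ h A := fun x hx =>
  let ⟨r, hr, hfin⟩ := hg x hx
  ⟨r, hr, (lintegral_mono hhg).trans_lt hfin⟩

lemma lintegrableLocOn_of_lintegral_lt_top (hg : ∫⁻ x in A, g x ∂μ < ∞) :
    LIntegrableLocOn μ g A := fun _ _ =>
  ⟨1, one_pos, (lintegral_mono_set inter_subset_left).trans_lt hg⟩

lemma IsMinimalWUG.lintegral_le (hg : IsMinimalWUG μ u g A) (hh : IsWeakUpperGradientOn μ u h A) :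
    ∫⁻ x in A, g x ∂μ ≤ ∫⁻ x in A, h x ∂μ := by
  by_cases hfin : ∫⁻ x in A, h x ∂μ < ∞
  · exact lintegral_mono_ae (hg.2 h hh (lintegrableLocOn_of_lintegral_lt_top hfin))
  · exact (not_lt_top_iff.1 hfin) ▸ le_top

end WeakUpperGradient

/-- A member of `𝒢` that maximizes `∫ (1 + g)⁻¹` is almost everywhere least. -/
lemma exists_mem_forall_mem_ae_le {α : Type*} [MeasurableSpace α] {ν : Measure α} [SFinite ν]
    {𝒢 : Set (α → ℝ≥0∞)} (hne : 𝒢.Nonempty) (hmeas : ∀ g ∈ 𝒢, AEMeasurable g ν)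
    (hinf : InfClosed 𝒢) (hiInf : ∀ g : ℕ → α → ℝ≥0∞, Antitone g → (∀ n, g n ∈ 𝒢) →
      ⨅ n, g n ∈ 𝒢) : ∃ g ∈ 𝒢, ∀ h ∈ 𝒢, g ≤ᵐ[ν] h := by
  set J : (α → ℝ≥0∞) → ℝ≥0∞ := fun g => ∫⁻ x, (1 + g x)⁻¹ ∂ν.toFinite
  have hJanti : Antitone J := fun g h hgh => lintegral_mono fun x =>
    ENNReal.inv_le_inv.2 (add_le_add_right (hgh x) 1)
  have hJfin : ∀ g, J g ≠ ∞ := fun g => ne_top_of_le_ne_top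
    (measure_ne_top ν.toFinite univ) ((lintegral_mono fun x =>
      ENNReal.inv_le_one.2 le_self_add).trans_eq lintegral_one)
  obtain ⟨S, -, hStends, hS⟩ := exists_seq_tendsto_sSup (hne.image J) (OrderTop.bddAbove _)
  choose g hg hgS using hS
  let runningInf : ℕ → α → ℝ≥0∞ := fun n => (Finset.range (n + 1)).inf' ⟨0, by simp⟩ g
  have hrunning : ∀ n, runningInf n ∈ 𝒢 := fun n => hinf.finsetInf'_mem _ fun i _ => hg i
  have hanti : Antitone runningInf := fun m n hmn =>
    Finset.inf'_mono _ (Finset.range_mono (by lia)) _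
  set G : α → ℝ≥0∞ := ⨅ n, runningInf n
  have hG : G ∈ 𝒢 := hiInf _ hanti hrunning
  have hJG : sSup (J '' 𝒢) ≤ J G := le_of_tendsto' hStends fun n => by
    rw [← hgS n]
    exact hJanti ((iInf_le _ n).trans (Finset.inf'_le _ (by simp)))
  refine ⟨G, hG, fun h hh => (absolutelyContinuous_toFinite ν).ae_le ?_⟩
  have hGh : G ⊓ h ∈ 𝒢 := hinf hG hh
  have hae : ∀ᵐ x ∂ν.toFinite, (1 + G x)⁻¹ = (1 + (G ⊓ h) x)⁻¹ :=
    ae_eq_of_ae_le_of_lintegral_le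
      (.of_forall fun x => ENNReal.inv_le_inv.2 (add_le_add_right inf_le_left 1)) (hJfin G)
      ((aemeasurable_const.add (hmeas _ hGh)).inv.mono_ac (toFinite_absolutelyContinuous ν))
      ((le_sSup (mem_image_of_mem J hGh)).trans hJG)
  filter_upwards [hae] with x hx
  have hGx : G x = (G ⊓ h) x := (ENNReal.add_right_inj ENNReal.one_ne_top).1 (inv_injective hx)
  exact hGx.trans_le inf_le_right

section MinimalWeakUpperGradient

variable [SecondCountableTopology X] {μ : Measure X} {u : X → ℝ} {A : Set X}

lemma IsWeakUpperGradientOn.inf {g h : X → ℝ≥0∞} (hA : NullMeasurableSet A μ)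
    (hg : IsWeakUpperGradientOn μ u g A) (hgloc : LIntegrableLocOn μ g A)
    (hh : IsWeakUpperGradientOn μ u h A) (hhloc : LIntegrableLocOn μ h A) :
    IsWeakUpperGradientOn μ u (g ⊓ h) A := by
  refine isWeakUpperGradientOn_iff_isUGAlong.2 ⟨hg.1.inf hh.1, ?_⟩
  filter_upwards [hg.eventually_isUGAlong, hh.eventually_isUGAlong,
    eventually_aeCurve_lintegrable_of_lintegrableLocOn hg.1 hA hgloc,
    eventually_aeCurve_lintegrable_of_lintegrableLocOn hh.1 hA hhloc] with γ hγg hγh hig hih hγ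
  exact (hγg hγ).min γ.len_nonneg (hγh hγ) (hig hγ) (hih hγ)

lemma IsWeakUpperGradientOn.iInf {g : ℕ → X → ℝ≥0∞} (hA : NullMeasurableSet A μ)
    (hg : ∀ n, IsWeakUpperGradientOn μ u (g n) A) (hloc : ∀ n, LIntegrableLocOn μ (g n) A)
    (hanti : Antitone g) : IsWeakUpperGradientOn μ u (⨅ n, g n) A := by
  refine isWeakUpperGradientOn_iff_isUGAlong.2
    ⟨(AEMeasurable.iInf fun n => (hg n).1).congr (.of_forall fun _ => iInf_apply.symm), ?_⟩
  filter_upwards [eventually_countable_forall.2 fun n => (hg n).eventually_isUGAlong,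
    eventually_countable_forall.2 fun n =>
      eventually_aeCurve_lintegrable_of_lintegrableLocOn (hg n).1 hA (hloc n)]
    with γ hug hint hγ s t hs hst ht
  have hsub : Icc s t ⊆ Icc 0 γ.len := Icc_subset_Icc hs ht
  simp only [UGBetween, iInf_apply]
  rw [lintegral_iInf' (fun n => (hint n hγ).aemeasurable.mono_measure
      (Measure.restrict_mono hsub le_rfl)) (.of_forall fun τ m n hmn => hanti hmn _)
    ((lintegral_mono_set hsub).trans_lt (hint 0 hγ).lintegral_lt_top).ne]
  exact le_iInf fun n => hug n hγ s t hs hst ht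

lemma exists_isMinimalWUG [SFinite μ] (hA : NullMeasurableSet A μ) (u : X → ℝ) :
    ∃ g, IsMinimalWUG μ u g A := by
  by_cases hne : ∃ g, IsWeakUpperGradientOn μ u g A ∧ LIntegrableLocOn μ g A
  · obtain ⟨g, hg, hmin⟩ := exists_mem_forall_mem_ae_le (ν := μ.restrict A)
      (𝒢 := {g | IsWeakUpperGradientOn μ u g A ∧ LIntegrableLocOn μ g A}) hne
      (fun g hg => hg.1.1.restrict)
      (fun g hg h hh => ⟨hg.1.inf hA hg.2 hh.1 hh.2, hg.2.mono inf_le_left⟩)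
      (fun g hanti hg => ⟨.iInf hA (fun n => (hg n).1) (fun n => (hg n).2) hanti,
        (hg 0).2.mono (iInf_le _ 0)⟩)
    exact ⟨g, hg.1, fun h hh hloc => hmin h ⟨hh, hloc⟩⟩
  · exact ⟨fun _ => ∞, isWeakUpperGradientOn_top, fun h hh hloc => absurd ⟨h, hh, hloc⟩ hne⟩

end MinimalWeakUpperGradient

/-! ### Doubling measures and the Poincaré inequality -/

section Doubling

variable {Y : Type*} [MetricSpace Y] [MeasurableSpace Y] {μ : Measure Y} {Cd : ℝ}

lemma Doubling.measure_ball_pos (hd : Doubling μ Cd) (x : Y) {r : ℝ} (hr : 0 < r) :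
    0 < μ (ball x r) := by
  simpa only [mul_div_cancel₀ r two_ne_zero] using (hd.2 x (r / 2) (half_pos hr)).1

lemma Doubling.measure_ball_lt_top (hd : Doubling μ Cd) (x : Y) (r : ℝ) : μ (ball x r) < ∞ := by
  rcases lt_or_ge 0 r with hr | hr
  · exact (hd.2 x r hr).2.2
  · simp [ball_eq_empty.2 hr]

lemma Doubling.measure_ball_pow_mul_le (hd : Doubling μ Cd) (x : Y) {r : ℝ} (hr : 0 < r) (n : ℕ) :
    μ (ball x (2 ^ n * r)) ≤ ENNReal.ofReal (Cd ^ n) * μ (ball x r) := by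
  induction n with
  | zero => simp
  | succ n ih =>
    calc μ (ball x (2 ^ (n + 1) * r)) = μ (ball x (2 * (2 ^ n * r))) := by ring_nf
      _ ≤ ENNReal.ofReal Cd * μ (ball x (2 ^ n * r)) := (hd.2 x _ (by positivity)).2.1
      _ ≤ ENNReal.ofReal Cd * (ENNReal.ofReal (Cd ^ n) * μ (ball x r)) := by gcongr
      _ = ENNReal.ofReal (Cd ^ (n + 1)) * μ (ball x r) := by
        rw [← mul_assoc, ← ENNReal.ofReal_mul (zero_le_one.trans hd.1), pow_succ']

lemma Doubling.isLocallyFiniteMeasure (hd : Doubling μ Cd) : IsLocallyFiniteMeasure μ :=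
  ⟨fun x => ⟨ball x 1, ball_mem_nhds x one_pos, hd.measure_ball_lt_top x 1⟩⟩

end Doubling

section DoublingBorel

variable {μ : Measure X} {Cd : ℝ}

lemma Doubling.finite_of_pairwiseDisjoint_ball (hd : Doubling μ Cd) {s : Set X} {x : X}
    {R δ : ℝ} (hs : s ⊆ closedBall x R) (hR : 0 < R) (hδ : 0 < δ)
    (hdisj : s.PairwiseDisjoint (ball · δ)) : s.Finite := by
  obtain ⟨n, hn⟩ := pow_unbounded_of_one_lt (2 * R / δ) one_lt_two
  rw [div_lt_iff₀ hδ] at hn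
  set m := μ (ball x R) / ENNReal.ofReal (Cd ^ n)
  have hm : ∀ a ∈ s, m ≤ μ (ball a δ) := fun a ha => by
    refine ENNReal.div_le_of_le_mul' (le_trans (measure_mono (ball_subset_ball' ?_))
      (hd.measure_ball_pow_mul_le a hδ n))
    linarith [mem_closedBall'.1 (hs ha)]
  have hfin := Measure.finite_const_le_meas_of_disjoint_iUnion μ (ε := m)
    (ENNReal.div_pos (hd.measure_ball_pos x hR).ne' ENNReal.ofReal_ne_top)
    (As := fun a : s => ball (a : X) δ) (fun _ => measurableSet_ball)
    (fun a b hab => hdisj a.2 b.2 (Subtype.coe_ne_coe.2 hab))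
    (ne_top_of_le_ne_top (hd.measure_ball_lt_top x (R + δ)).ne (measure_mono
      (iUnion_subset fun a => ball_subset_ball' (by linarith [mem_closedBall.1 (hs a.2)]))))
  rw [eq_univ_of_forall (s := {a : s | m ≤ μ (ball (a : X) δ)}) fun a => hm a a.2] at hfin
  exact Set.finite_coe_iff.1 (Set.finite_univ_iff.1 hfin)

lemma Doubling.properSpace [CompleteSpace X] (hd : Doubling μ Cd) : ProperSpace X := by
  refine ProperSpace.of_isCompact_closedBall_of_le 1 fun x R hR =>
    TotallyBounded.isCompact_of_isClosed (Metric.totallyBounded_iff.2 fun ε hε => ?_)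
      isClosed_closedBall
  have hδ : 0 < ε / 4 := by positivity
  obtain ⟨s, hs, hdisj, hcover⟩ := Vitali.exists_disjoint_subfamily_covering_enlargement_ball
    (closedBall x R) (fun a => a) (fun _ => ε / 4) (ε / 4) (fun _ _ => le_rfl) 4 (by norm_num)
  refine ⟨s, hd.finite_of_pairwiseDisjoint_ball hs (zero_lt_one.trans_le hR) hδ hdisj,
    fun y hy => ?_⟩
  obtain ⟨b, hb, hyb⟩ := hcover y hy
  exact mem_biUnion hb (ball_subset_ball (by linarith) (hyb (mem_ball_self hδ)))

end DoublingBorel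

lemma abs_setAverage_sub_le {α : Type*} [MeasurableSpace α] {μ : Measure α} {B B' : Set α}
    (hsub : B' ⊆ B) (hB : μ B ≠ ∞) (hB' : μ B' ≠ 0) {K : ℝ} (hK0 : 0 ≤ K)
    (hK : μ B ≤ ENNReal.ofReal K * μ B') {ψ : α → ℝ} (hψ : IntegrableOn ψ B μ) (c : ℝ) :
    |(⨍ y in B', ψ y ∂μ) - c| ≤ K * ⨍ y in B, |ψ y - c| ∂μ := by
  have hB'top : μ B' ≠ ∞ := measure_ne_top_of_subset hsub hB
  have hB'pos : 0 < μ.real B' := ENNReal.toReal_pos hB' hB'top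
  have hBpos : 0 < μ.real B := hB'pos.trans_le (measureReal_mono hsub hB)
  have hKreal : μ.real B ≤ K * μ.real B' := by
    simpa [Measure.real, ENNReal.toReal_ofReal hK0] using
      ENNReal.toReal_mono (ENNReal.mul_ne_top ENNReal.ofReal_ne_top hB'top) hK
  have hc : IntegrableOn (fun _ => c) B μ := integrableOn_const hB
  have hsubtract : (⨍ y in B', ψ y ∂μ) - c = (μ.real B')⁻¹ * ∫ y in B', (ψ y - c) ∂μ := by
    rw [setAverage_eq, smul_eq_mul, integral_sub (hψ.mono_set hsub) (hc.mono_set hsub),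
      setIntegral_const, smul_eq_mul, mul_sub, inv_mul_cancel_left₀ hB'pos.ne']
  have hint : |∫ y in B', (ψ y - c) ∂μ| ≤ ∫ y in B, |ψ y - c| ∂μ :=
    abs_integral_le_integral_abs.trans (setIntegral_mono_set (hψ.sub hc).abs
      (.of_forall fun y => abs_nonneg _) hsub.eventuallyLE)
  have hinv : (μ.real B')⁻¹ ≤ K * (μ.real B)⁻¹ := by
    rw [← div_eq_mul_inv, le_div_iff₀ hBpos, inv_mul_le_iff₀ hB'pos, mul_comm]
    exact hKreal
  calc |(⨍ y in B', ψ y ∂μ) - c| = (μ.real B')⁻¹ * |∫ y in B', (ψ y - c) ∂μ| := by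
        rw [hsubtract, abs_mul, abs_of_pos (inv_pos.2 hB'pos)]
    _ ≤ K * (μ.real B)⁻¹ * ∫ y in B, |ψ y - c| ∂μ := by gcongr
    _ = K * ⨍ y in B, |ψ y - c| ∂μ := by rw [setAverage_eq, smul_eq_mul, mul_assoc]

/-- The maximal function of `ρ`, restricted to radii at most `1`, is bounded by `Λ` at `x`. -/
def HasMaximalBoundAt (μ : Measure X) (ρ : X → ℝ≥0∞) (Λ : ℝ) (x : X) : Prop :=
  ∀ r, 0 < r → r ≤ 1 → ∫⁻ y in ball x r, ρ y ∂μ ≤ ENNReal.ofReal Λ * μ (ball x r)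

section Poincare

variable [ProperSpace X] {μ : Measure X} {Cd CP lam Λ : ℝ} {ρ : X → ℝ≥0∞} {ψ : X → ℝ} {x y : X}

lemma Doubling.integrableOn_ball (hd : Doubling μ Cd) (hψ : Continuous ψ) (x : X) (r : ℝ) :
    IntegrableOn ψ (ball x r) μ :=
  have := hd.isLocallyFiniteMeasure
  (hψ.continuousOn.integrableOn_compact (isCompact_closedBall x r)).mono_set ball_subset_closedBall

lemma Doubling.memL1Loc_univ (hd : Doubling μ Cd) (hψ : Continuous ψ) : MemL1Loc μ univ ψ := by
  refine ⟨hψ.measurable.aemeasurable, fun z _ => ⟨1, one_pos, ?_⟩⟩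
  simpa only [univ_inter, HasFiniteIntegral, Real.enorm_eq_ofReal_abs] using
    (hd.integrableOn_ball hψ z 1).hasFiniteIntegral

lemma Doubling.tendsto_average_ball (hd : Doubling μ Cd) (hψ : Continuous ψ) (x : X) :
    Tendsto (fun r => ⨍ y in ball x r, ψ y ∂μ) (𝓝[>] 0) (𝓝 (ψ x)) := by
  refine Metric.nhds_basis_closedBall.tendsto_right_iff.2 fun ε hε => ?_
  obtain ⟨δ, hδ, hball⟩ := Metric.continuous_iff.1 hψ x ε hε
  filter_upwards [Ioo_mem_nhdsGT hδ] with r hr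
  exact (convex_closedBall (ψ x) ε).set_average_mem isClosed_closedBall
    (hd.measure_ball_pos x hr.1).ne' (hd.measure_ball_lt_top x r).ne
    (ae_restrict_of_forall_mem measurableSet_ball fun y hy =>
      (hball y ((mem_ball.1 hy).trans hr.2)).le) (hd.integrableOn_ball hψ x r)

lemma Poincare.average_abs_sub_average_le (hp : Poincare μ CP lam) (hd : Doubling μ Cd)
    (hΛ : 0 ≤ Λ) (hx : HasMaximalBoundAt μ ρ Λ x) (hψ : Continuous ψ)
    (hug : IsUpperGradient ψ ρ) {r : ℝ} (hr : 0 < r) (hr1 : lam * r ≤ 1) :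
    ⨍ y in ball x r, |ψ y - ⨍ z in ball x r, ψ z ∂μ| ∂μ ≤ CP * r * Λ := by
  obtain ⟨hCP, hlam, hpoincare⟩ := hp
  rw [← ENNReal.ofReal_le_ofReal_iff (by positivity), ENNReal.ofReal_mul (by positivity)]
  refine (hpoincare x r hr ψ ρ (hd.memL1Loc_univ hψ) hug).trans ?_
  gcongr
  exact ENNReal.div_le_of_le_mul (hx _ (by positivity) hr1)

lemma Poincare.abs_average_sub_le (hp : Poincare μ CP lam) (hd : Doubling μ Cd) (hΛ : 0 ≤ Λ)
    (hx : HasMaximalBoundAt μ ρ Λ x) (hψ : Continuous ψ) (hug : IsUpperGradient ψ ρ) {r : ℝ}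
    (hr : 0 < r) (hr1 : lam * r ≤ 1) :
    |(⨍ y in ball x r, ψ y ∂μ) - ψ x| ≤ 2 * Cd * CP * Λ * r := by
  have hCd : 0 ≤ Cd := zero_le_one.trans hd.1
  have hlam : 0 ≤ lam := zero_le_one.trans hp.2.1
  set a : ℕ → ℝ := fun n => ⨍ y in ball x (r / 2 ^ n), ψ y ∂μ
  have hrpos : ∀ n : ℕ, 0 < r / 2 ^ n := fun n => by positivity
  have htendsto : Tendsto a atTop (𝓝 (ψ x)) := by
    refine (hd.tendsto_average_ball hψ x).comp (tendsto_nhdsWithin_iff.2 ⟨?_, .of_forall hrpos⟩)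
    exact tendsto_const_nhds.div_atTop (tendsto_pow_atTop_atTop_of_one_lt one_lt_two)
  have hstep : ∀ n, dist (a n) (a (n + 1)) ≤ 2 * Cd * CP * Λ * r / 2 / 2 ^ n := fun n => by
    have hdouble : r / 2 ^ n = 2 * (r / 2 ^ (n + 1)) := by field_simp; ring
    have hrn : lam * (r / 2 ^ n) ≤ 1 :=
      (mul_le_mul_of_nonneg_left (div_le_self hr.le (one_le_pow₀ one_le_two)) hlam).trans hr1
    calc dist (a n) (a (n + 1)) = |a (n + 1) - a n| := by rw [dist_comm, Real.dist_eq]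
      _ ≤ Cd * ⨍ y in ball x (r / 2 ^ n), |ψ y - a n| ∂μ :=
        abs_setAverage_sub_le (ball_subset_ball (by linarith [hrpos (n + 1)]))
          (hd.measure_ball_lt_top x _).ne (hd.measure_ball_pos x (hrpos _)).ne' hCd
          (hdouble ▸ (hd.2 x _ (hrpos _)).2.1) (hd.integrableOn_ball hψ x _) (a n)
      _ ≤ Cd * (CP * (r / 2 ^ n) * Λ) := by
        gcongr
        exact hp.average_abs_sub_average_le hd hΛ hx hψ hug (hrpos n) hrn
      _ = 2 * Cd * CP * Λ * r / 2 / 2 ^ n := by ring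
  simpa [a, Real.dist_eq] using dist_le_of_le_geometric_two_of_tendsto₀ hstep htendsto

lemma Poincare.abs_sub_le_mul_dist (hp : Poincare μ CP lam) (hd : Doubling μ Cd) (hΛ : 0 ≤ Λ)
    (hx : HasMaximalBoundAt μ ρ Λ x) (hy : HasMaximalBoundAt μ ρ Λ y) (hψ : Continuous ψ)
    (hug : IsUpperGradient ψ ρ) (hxy : 2 * lam * dist x y ≤ 1) :
    |ψ x - ψ y| ≤ 8 * Cd ^ 2 * CP * Λ * dist x y := by
  have hCP := hp.1
  have hCd := hd.1
  rcases (dist_nonneg (x := x) (y := y)).eq_or_lt with hd0 | hdpos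
  · simp [dist_eq_zero.1 hd0.symm]
  set d := dist x y
  set avgx := ⨍ z in ball x (2 * d), ψ z ∂μ
  set avgy := ⨍ z in ball y d, ψ z ∂μ
  have hxavg : |avgx - ψ x| ≤ 2 * Cd * CP * Λ * (2 * d) :=
    hp.abs_average_sub_le hd hΛ hx hψ hug (by positivity) (by linarith)
  have hyavg : |avgy - ψ y| ≤ 2 * Cd * CP * Λ * d :=
    hp.abs_average_sub_le hd hΛ hy hψ hug hdpos (by nlinarith [hp.2.1])
  have havg : |avgy - avgx| ≤ Cd ^ 2 * (CP * (2 * d) * Λ) := by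
    have hsub : ball y d ⊆ ball x (2 * d) :=
      ball_subset_ball' (by rw [dist_comm y x, two_mul])
    have hmeasure : μ (ball x (2 * d)) ≤ ENNReal.ofReal (Cd ^ 2) * μ (ball y d) := by
      refine le_trans (measure_mono (ball_subset_ball' ?_)) (hd.measure_ball_pow_mul_le y hdpos 2)
      change 2 * d + d ≤ 2 ^ 2 * d
      linarith
    refine (abs_setAverage_sub_le hsub (hd.measure_ball_lt_top x _).ne
      (hd.measure_ball_pos y hdpos).ne' (by positivity) hmeasure
      (hd.integrableOn_ball hψ x _) avgx).trans ?_
    gcongr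
    exact hp.average_abs_sub_average_le hd hΛ hx hψ hug (by positivity) (by linarith)
  have hCdsq : Cd * (CP * Λ * d) ≤ Cd ^ 2 * (CP * Λ * d) := by
    gcongr
    nlinarith
  calc |ψ x - ψ y| = |-(avgx - ψ x) + -(avgy - avgx) + (avgy - ψ y)| := by ring_nf
    _ ≤ |avgx - ψ x| + |avgy - avgx| + |avgy - ψ y| := by
      simpa only [abs_neg] using abs_add_three (-(avgx - ψ x)) (-(avgy - avgx)) (avgy - ψ y)
    _ ≤ 8 * Cd ^ 2 * CP * Λ * d := by linarith

end Poincare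

/-! ### Coarse curves -/

section CoarseCurve

variable {Y : Type*} [MetricSpace Y] {ε l m : ℝ} {x z z' : Y} {σ τ : ℝ → Y} {r : Y → ℝ≥0∞}

/-- `σ` runs from `x` to `z` within time `l` and is `1`-Lipschitz up to the additive error `ε`;
it need not be continuous. -/
structure IsCoarseCurve (ε : ℝ) (x z : Y) (l : ℝ) (σ : ℝ → Y) : Prop where
  length_nonneg : 0 ≤ l
  start : σ 0 = x
  finish : ∀ t, l ≤ t → σ t = z
  dist_le : ∀ s t, 0 ≤ s → s ≤ t → dist (σ s) (σ t) ≤ t - s + ε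

lemma IsCoarseCurve.dist_le_abs (hσ : IsCoarseCurve ε x z l σ) {s t : ℝ} (hs : 0 ≤ s)
    (ht : 0 ≤ t) : dist (σ s) (σ t) ≤ |s - t| + ε := by
  rcases le_total s t with hst | hts
  · rw [abs_sub_comm, abs_of_nonneg (sub_nonneg.2 hst)]
    exact hσ.dist_le s t hs hst
  · rw [dist_comm, abs_of_nonneg (sub_nonneg.2 hts)]
    exact hσ.dist_le t s ht hts

/-- The distance from `x` to `z` measured along `ε`-coarse curves with the weight `r`. -/
def coarseDist (ε : ℝ) (r : Y → ℝ≥0∞) (x z : Y) : ℝ≥0∞ :=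
  ⨅ (l : ℝ) (σ : ℝ → Y) (_ : IsCoarseCurve ε x z l σ), ∫⁻ t in Icc 0 l, r (σ t)

lemma coarseDist_self (hε : 0 ≤ ε) (r : Y → ℝ≥0∞) (x : Y) : coarseDist ε r x x = 0 := by
  have hconst : IsCoarseCurve ε x x 0 fun _ => x :=
    ⟨le_rfl, rfl, fun _ _ => rfl, fun s t _ hst => by rw [dist_self]; linarith⟩
  exact le_antisymm (iInf₂_le_of_le 0 _ (iInf_le_of_le hconst (by simp))) bot_le

/-- Errors do not accumulate at the junction because `τ` leaves its starting point at unit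
speed. -/
lemma IsCoarseCurve.append (hσ : IsCoarseCurve ε x z l σ) (hτ : IsCoarseCurve ε z z' m τ)
    (hstart : ∀ t, 0 ≤ t → dist z (τ t) ≤ t) :
    IsCoarseCurve ε x z' (l + m) fun t => if t < l then σ t else τ (t - l) where
  length_nonneg := add_nonneg hσ.length_nonneg hτ.length_nonneg
  start := by
    rcases hσ.length_nonneg.eq_or_lt with rfl | hl
    · simp [hτ.start, ← hσ.start, hσ.finish 0 le_rfl]
    · simp [hl, hσ.start]
  finish t ht := by
    rw [if_neg (by linarith [hτ.length_nonneg])]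
    exact hτ.finish _ (by linarith)
  dist_le s t hs hst := by
    rcases lt_or_ge t l with htl | htl
    · simpa only [if_pos htl, if_pos (hst.trans_lt htl)] using hσ.dist_le s t hs hst
    rcases lt_or_ge s l with hsl | hsl
    · simp only [if_pos hsl, if_neg htl.not_gt]
      have hσs := hσ.dist_le s l hs hsl.le
      rw [hσ.finish l le_rfl] at hσs
      linarith [dist_triangle (σ s) z (τ (t - l)), hstart (t - l) (by linarith)]
    · simp only [if_neg hsl.not_gt, if_neg htl.not_gt]
      linarith [hτ.dist_le (s - l) (t - l) (by linarith) (by linarith)]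

lemma lintegral_append_le (f g : ℝ → ℝ≥0∞) (l m : ℝ) :
    ∫⁻ t in Icc 0 (l + m), (if t < l then f t else g (t - l)) ≤
      (∫⁻ t in Icc 0 l, f t) + ∫⁻ t in Icc 0 m, g t := by
  have hcover : Icc 0 (l + m) ⊆ Ico 0 l ∪ Icc l (l + m) := fun t ht =>
    (lt_or_ge t l).imp (fun h => ⟨ht.1, h⟩) fun h => ⟨h, ht.2⟩
  refine (lintegral_mono_set hcover).trans ((lintegral_union_le _ _ _).trans (add_le_add ?_ ?_))
  · rw [setLIntegral_congr_fun measurableSet_Ico fun t (ht : t ∈ Ico 0 l) => if_pos ht.2]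
    exact lintegral_mono_set Ico_subset_Icc_self
  · rw [setLIntegral_congr_fun measurableSet_Icc
      fun t (ht : t ∈ Icc l (l + m)) => if_neg ht.1.not_gt]
    have htranslate := setLIntegral_Icc_comp_add_left (fun t => g (t - l)) 0 m l
    simp only [add_sub_cancel_left, add_zero] at htranslate
    exact htranslate.ge

lemma IsCoarseCurve.coarseDist_le_add (hτ : IsCoarseCurve ε z z' m τ)
    (hstart : ∀ t, 0 ≤ t → dist z (τ t) ≤ t) (r : Y → ℝ≥0∞) (x : Y) :
    coarseDist ε r x z' ≤ coarseDist ε r x z + ∫⁻ t in Icc 0 m, r (τ t) := by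
  conv_rhs => unfold coarseDist
  simp only [ENNReal.iInf_add]
  refine le_iInf₂ fun l σ => le_iInf fun hσ =>
    iInf₂_le_of_le _ _ (iInf_le_of_le (hσ.append hτ hstart) ?_)
  simpa only [apply_ite r] using lintegral_append_le (fun t => r (σ t)) (fun t => r (τ t)) l m

lemma isCoarseCurve_jump (h : dist z z' ≤ ε) :
    IsCoarseCurve ε z z' (dist z z') fun t => if t < dist z z' then z else z' where
  length_nonneg := dist_nonneg
  start := by
    rcases (dist_nonneg (x := z) (y := z')).eq_or_lt with h0 | hpos
    · simp [dist_eq_zero.1 h0.symm]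
    · simp [hpos]
  finish t ht := if_neg ht.not_gt
  dist_le s t _ hst := by
    have hε : 0 ≤ ε := dist_nonneg.trans h
    split_ifs
    any_goals rw [dist_self]
    all_goals linarith

lemma coarseDist_le_add_mul_dist (h : dist z z' ≤ ε) (r : Y → ℝ≥0∞) (x : Y) :
    coarseDist ε r x z' ≤ coarseDist ε r x z + r z * ENNReal.ofReal (dist z z') := by
  refine ((isCoarseCurve_jump h).coarseDist_le_add (fun t ht => ?_) r x).trans ?_
  · split_ifs with hlt
    · rwa [dist_self]
    · exact not_lt.1 hlt
  · gcongr
    rw [setLIntegral_congr Ico_ae_eq_Icc.symm, setLIntegral_congr_fun measurableSet_Ico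
      fun t (ht : t ∈ Ico 0 (dist z z')) => congrArg r (if_pos ht.2)]
    simp

lemma Curve.dist_min_len_le (γ : Curve Y) {s t : ℝ} (hs : 0 ≤ s) (hst : s ≤ t) :
    dist (γ.toFun (min s γ.len)) (γ.toFun (min t γ.len)) ≤ t - s := by
  have hdist := γ.lip.dist_le_mul _ ⟨le_min hs γ.len_nonneg, min_le_right _ _⟩ _
    ⟨le_min (hs.trans hst) γ.len_nonneg, min_le_right t _⟩
  rw [NNReal.coe_one, one_mul, Real.dist_eq, abs_sub_comm] at hdist
  refine hdist.trans ((abs_min_sub_min_le_max _ _ _ _).trans (max_le ?_ ?_))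
  · rw [abs_of_nonneg (sub_nonneg.2 hst)]
  · simpa using hst

lemma Curve.isCoarseCurve (γ : Curve Y) (hε : 0 ≤ ε) :
    IsCoarseCurve ε (γ.toFun 0) (γ.toFun γ.len) γ.len fun t => γ.toFun (min t γ.len) where
  length_nonneg := γ.len_nonneg
  start := by rw [min_eq_left γ.len_nonneg]
  finish t ht := by rw [min_eq_right ht]
  dist_le s t hs hst := by linarith [γ.dist_min_len_le hs hst]

lemma Curve.coarseDist_le_add (γ : Curve Y) (hε : 0 ≤ ε) (r : Y → ℝ≥0∞) (x : Y) :
    coarseDist ε r x (γ.toFun γ.len) ≤ coarseDist ε r x (γ.toFun 0) + γ.integral r := by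
  refine ((γ.isCoarseCurve hε).coarseDist_le_add (fun t ht => ?_) r x).trans_eq ?_
  · simpa [γ.len_nonneg] using γ.dist_min_len_le le_rfl ht
  · rw [Curve.integral, setLIntegral_congr_fun measurableSet_Icc
      fun t (ht : t ∈ Icc 0 γ.len) => congrArg (fun s => r (γ.toFun s)) (min_eq_left ht.2)]

/-- The curve `γ` traversed backwards. -/
def Curve.reverse (γ : Curve Y) : Curve Y where
  len := γ.len
  len_nonneg := γ.len_nonneg
  toFun t := γ.toFun (γ.len - t)
  lip p hp q hq := by
    simpa using γ.lip (x := γ.len - p) ⟨by linarith [hp.2], by linarith [hp.1]⟩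
      (y := γ.len - q) ⟨by linarith [hq.2], by linarith [hq.1]⟩

lemma Curve.integral_reverse (γ : Curve Y) (r : Y → ℝ≥0∞) :
    γ.reverse.integral r = γ.integral r := by
  have himage : (γ.len - ·) '' Icc 0 γ.len = Icc 0 γ.len := by simp
  conv_rhs => rw [Curve.integral, ← himage]
  exact (volume.measurePreserving_sub_left γ.len).setLIntegral_comp_emb
    (Homeomorph.subLeft γ.len).measurableEmbedding (fun t => r (γ.toFun t)) (Icc 0 γ.len)

lemma Curve.coarseDist_le_add_reverse (γ : Curve Y) (hε : 0 ≤ ε) (r : Y → ℝ≥0∞) (x : Y) :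
    coarseDist ε r x (γ.toFun 0) ≤ coarseDist ε r x (γ.toFun γ.len) + γ.integral r := by
  have h := γ.reverse.coarseDist_le_add hε r x
  rw [γ.integral_reverse] at h
  simpa [Curve.reverse] using h

lemma ofReal_toReal_min_sub_le {N a b c : ℝ≥0∞} (hN : N ≠ ∞) (h : a ≤ b + c) :
    ENNReal.ofReal ((min N a).toReal - (min N b).toReal) ≤ c := by
  rw [ENNReal.ofReal_sub _ ENNReal.toReal_nonneg,
    ENNReal.ofReal_toReal (ne_top_of_le_ne_top hN (min_le_left _ _)),
    ENNReal.ofReal_toReal (ne_top_of_le_ne_top hN (min_le_left _ _)), tsub_le_iff_left]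
  rcases le_total N b with hNb | hbN
  · rw [min_eq_left hNb]
    exact (min_le_left _ _).trans le_self_add
  · rw [min_eq_right hbN]
    exact (min_le_right _ _).trans h

lemma ofReal_abs_toReal_min_sub_le {N a b c : ℝ≥0∞} (hN : N ≠ ∞) (hab : a ≤ b + c)
    (hba : b ≤ a + c) : ENNReal.ofReal |(min N a).toReal - (min N b).toReal| ≤ c := by
  rw [abs_eq_max_neg, neg_sub, ENNReal.ofReal_max]
  exact max_le (ofReal_toReal_min_sub_le hN hab) (ofReal_toReal_min_sub_le hN hba)

/-- The distance `coarseDist`, truncated at the level `N` to make it real-valued. -/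
def truncCoarseDist (N : ℝ≥0∞) (ε : ℝ) (r : Y → ℝ≥0∞) (x z : Y) : ℝ :=
  (min N (coarseDist ε r x z)).toReal

lemma continuous_truncCoarseDist {N : ℝ≥0∞} (hN : N ≠ ∞) (hε : 0 < ε) {K : ℝ≥0}
    (hr : ∀ z, r z ≤ K) (x : Y) : Continuous (truncCoarseDist N ε r x) := by
  refine continuous_iff_continuousAt.2 fun z => ?_
  have hdist : ∀ p q : Y, dist p q ≤ ε →
      coarseDist ε r x q ≤ coarseDist ε r x p + K * edist p q := fun p q hpq => by
    refine (coarseDist_le_add_mul_dist hpq r x).trans ?_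
    rw [edist_dist]
    gcongr
    exact hr p
  refine (LipschitzOnWith.continuousOn (K := K) (s := ball z (ε / 2)) fun p hp q hq =>
    ?_).continuousAt (ball_mem_nhds z (half_pos hε))
  have hpq : dist p q ≤ ε := by
    linarith [dist_triangle_right p q z, mem_ball.1 hp, mem_ball.1 hq]
  rw [edist_dist, Real.dist_eq]
  exact ofReal_abs_toReal_min_sub_le hN (edist_comm q p ▸ hdist q p (dist_comm p q ▸ hpq))
    (hdist p q hpq)

lemma isUpperGradient_truncCoarseDist [MeasurableSpace Y] {N : ℝ≥0∞} (hN : N ≠ ∞) (hε : 0 ≤ ε)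
    (hr : Measurable r) (x : Y) : IsUpperGradient (truncCoarseDist N ε r x) r :=
  ⟨hr, fun γ => ofReal_abs_toReal_min_sub_le hN (γ.coarseDist_le_add_reverse hε r x)
    (γ.coarseDist_le_add hε r x)⟩

lemma exists_isCoarseCurve_of_truncCoarseDist_lt {c : ℝ}
    (h : truncCoarseDist (ENNReal.ofReal c) ε r x z < c) :
    ∃ l σ, IsCoarseCurve ε x z l σ ∧ ∫⁻ t in Icc 0 l, r (σ t) ≤ ENNReal.ofReal c := by
  have hlt : min (ENNReal.ofReal c) (coarseDist ε r x z) < ENNReal.ofReal c :=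
    (ENNReal.lt_ofReal_iff_toReal_lt
      (ne_top_of_le_ne_top ENNReal.ofReal_ne_top (min_le_left _ _))).2 h
  have hdist : coarseDist ε r x z < ENNReal.ofReal c :=
    (min_lt_iff.1 hlt).resolve_left (lt_irrefl _)
  simp only [coarseDist, iInf_lt_iff] at hdist
  obtain ⟨l, σ, hσ, hcost⟩ := hdist
  exact ⟨l, σ, hσ, hcost.le⟩

end CoarseCurve

/-! ### Lipschitz envelopes and limits of coarse curves -/

section LipEnvelope

variable {Y : Type*} [MetricSpace Y] {ρ : Y → ℝ≥0∞}

/-- The Moreau–Yosida type regularization of `min ρ (n + 1)`: its largest `(n + 1)`-Lipschitz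
minorant. For lower semicontinuous `ρ` these increase to `ρ`. -/
def lipEnvelope (ρ : Y → ℝ≥0∞) (n : ℕ) (z : Y) : ℝ≥0∞ :=
  ⨅ w, (min (ρ w) (n + 1) + (n + 1) * edist z w)

lemma lipEnvelope_le_min (ρ : Y → ℝ≥0∞) (n : ℕ) (z : Y) :
    lipEnvelope ρ n z ≤ min (ρ z) (n + 1) := iInf_le_of_le z (by simp)

lemma lipEnvelope_le (ρ : Y → ℝ≥0∞) (n : ℕ) (z : Y) : lipEnvelope ρ n z ≤ ρ z :=
  (lipEnvelope_le_min ρ n z).trans (min_le_left _ _)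

lemma lipEnvelope_le_natCast (ρ : Y → ℝ≥0∞) (n : ℕ) (z : Y) : lipEnvelope ρ n z ≤ n + 1 :=
  (lipEnvelope_le_min ρ n z).trans (min_le_right _ _)

lemma lipEnvelope_le_add_edist (ρ : Y → ℝ≥0∞) (n : ℕ) (z z' : Y) :
    lipEnvelope ρ n z ≤ lipEnvelope ρ n z' + (n + 1) * edist z z' := by
  simp only [lipEnvelope, ENNReal.iInf_add]
  refine iInf_mono fun w => ?_
  rw [add_assoc, ← mul_add, add_comm (edist z' w)]
  gcongr
  exact edist_triangle _ _ _

lemma lipEnvelope_mono (ρ : Y → ℝ≥0∞) : Monotone (lipEnvelope ρ) := fun m n hmn z =>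
  iInf_mono fun w => by gcongr

lemma one_le_lipEnvelope (hρ : ∀ z, 1 ≤ ρ z) (n : ℕ) (z : Y) : 1 ≤ lipEnvelope ρ n z :=
  le_iInf fun w => (le_min (hρ w) le_add_self).trans le_self_add

lemma continuous_lipEnvelope (ρ : Y → ℝ≥0∞) (n : ℕ) : Continuous (lipEnvelope ρ n) :=
  continuous_of_le_add_edist (n + 1) (by finiteness) (lipEnvelope_le_add_edist ρ n)

lemma exists_le_lipEnvelope (hρ : LowerSemicontinuous ρ) {z : Y} {b : ℝ≥0∞} (hb : b < ρ z) :
    ∃ n, b ≤ lipEnvelope ρ n z := by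
  obtain ⟨δ, hδ, hball⟩ := Metric.nhds_basis_ball.eventually_iff.1 (hρ z b hb)
  have hδ' : ENNReal.ofReal δ ≠ 0 := (ENNReal.ofReal_pos.2 hδ).ne'
  obtain ⟨n, hn⟩ := ENNReal.exists_nat_gt (r := b + b / ENNReal.ofReal δ)
    (ENNReal.add_ne_top.2 ⟨hb.ne_top, ENNReal.div_ne_top hb.ne_top hδ'⟩)
  refine ⟨n, le_iInf fun w => ?_⟩
  by_cases hw : w ∈ ball z δ
  · exact (le_min (hball hw).le ((le_self_add.trans hn.le).trans le_self_add)).trans le_self_add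
  · have hzw : ENNReal.ofReal δ ≤ edist z w := by
      rw [edist_dist, dist_comm]
      exact ENNReal.ofReal_le_ofReal (not_lt.1 hw)
    calc b = b / ENNReal.ofReal δ * ENNReal.ofReal δ :=
          (ENNReal.div_mul_cancel hδ' ENNReal.ofReal_ne_top).symm
      _ ≤ (n + 1) * edist z w :=
          mul_le_mul' ((le_add_self.trans hn.le).trans le_self_add) hzw
      _ ≤ min (ρ w) (n + 1) + (n + 1) * edist z w := le_add_self

lemma iSup_lipEnvelope (hρ : LowerSemicontinuous ρ) (z : Y) : ⨆ n, lipEnvelope ρ n z = ρ z :=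
  le_antisymm (iSup_le fun n => lipEnvelope_le ρ n z) <| le_of_forall_lt_imp_le_of_dense
    fun _ hb => (exists_le_lipEnvelope hρ hb).elim fun n hn => le_iSup_of_le n hn

end LipEnvelope

section Limit

variable {Y : Type*} [MetricSpace Y] {ε l : ℕ → ℝ} {σ : ℕ → ℝ → Y} {x y : Y} {F : Ultrafilter ℕ}

lemma exists_tendsto_of_isCoarseCurve [ProperSpace Y]
    (hσ : ∀ n, IsCoarseCurve (ε n) x y (l n) (σ n)) (hε : ∀ n, ε n ≤ 1) {t : ℝ} (ht : 0 ≤ t) :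
    ∃ p, Tendsto (fun n => σ n t) F (𝓝 p) := by
  have hball : ∀ n, σ n t ∈ closedBall x (t + 1) := fun n => by
    have hdist := (hσ n).dist_le 0 t le_rfl ht
    rw [(hσ n).start] at hdist
    exact mem_closedBall'.2 (by linarith [hε n])
  obtain ⟨p, -, hp⟩ := (isCompact_closedBall x (t + 1)).ultrafilter_le_nhds
    (F.map fun n => σ n t) (tendsto_principal.2 (.of_forall hball))
  exact ⟨p, hp⟩

lemma dist_le_abs_of_tendsto_isCoarseCurve (hσ : ∀ n, IsCoarseCurve (ε n) x y (l n) (σ n))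
    (hε : Tendsto ε F (𝓝 0)) {s t : ℝ} (hs : 0 ≤ s) (ht : 0 ≤ t) {p q : Y}
    (hp : Tendsto (fun n => σ n s) F (𝓝 p)) (hq : Tendsto (fun n => σ n t) F (𝓝 q)) :
    dist p q ≤ |s - t| := by
  have hlim : Tendsto (fun n => |s - t| + ε n) F (𝓝 |s - t|) := by
    simpa using hε.const_add |s - t|
  exact le_of_tendsto_of_tendsto' (hp.dist hq) hlim fun n => (hσ n).dist_le_abs hs ht

lemma exists_curve_tendsto_of_isCoarseCurve [ProperSpace Y]
    (hσ : ∀ n, IsCoarseCurve (ε n) x y (l n) (σ n)) (hε : ∀ n, ε n ≤ 1)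
    (hεlim : Tendsto ε F (𝓝 0)) {L : ℝ} (hl : ∀ n, l n ≤ L) :
    ∃ γ : Curve Y, γ.toFun 0 = x ∧ γ.toFun γ.len = y ∧ Tendsto l F (𝓝 γ.len) ∧
      ∀ t ∈ Icc 0 γ.len, Tendsto (fun n => σ n t) F (𝓝 (γ.toFun t)) := by
  have hlimit : ∀ t : ℝ, ∃ p, 0 ≤ t → Tendsto (fun n => σ n t) F (𝓝 p) := fun t => by
    by_cases ht : 0 ≤ t
    · exact (exists_tendsto_of_isCoarseCurve hσ hε ht).imp fun _ hp _ => hp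
    · exact ⟨x, fun h => absurd h ht⟩
  choose p hp using hlimit
  obtain ⟨len, hlen, hllim⟩ := (isCompact_Icc (a := (0 : ℝ)) (b := L)).ultrafilter_le_nhds
    (F.map l) (tendsto_principal.2 (.of_forall fun n => ⟨(hσ n).length_nonneg, hl n⟩))
  have hdist : ∀ s t, 0 ≤ s → 0 ≤ t → dist (p s) (p t) ≤ |s - t| := fun s t hs ht =>
    dist_le_abs_of_tendsto_isCoarseCurve hσ hεlim hs ht (hp s hs) (hp t ht)
  have hafter : ∀ t, len < t → p t = y := fun t ht => by
    refine tendsto_nhds_unique (hp t (hlen.1.trans ht.le)) (tendsto_const_nhds.congr' ?_)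
    filter_upwards [hllim (Iio_mem_nhds ht)] with n hn using ((hσ n).finish t hn.le).symm
  refine ⟨⟨len, hlen.1, p, .of_dist_le_mul fun s hs t ht => ?_⟩, ?_, ?_, hllim,
    fun t ht => hp t ht.1⟩
  · simpa [Real.dist_eq] using hdist s t hs.1 ht.1
  · refine tendsto_nhds_unique (hp 0 le_rfl) (tendsto_const_nhds.congr fun n => ?_)
    exact (hσ n).start.symm
  · refine dist_le_zero.1 (le_of_forall_pos_le_add fun δ hδ => ?_)
    have h := hdist len (len + δ) hlen.1 (by linarith [hlen.1])
    rw [hafter (len + δ) (by linarith), sub_add_cancel_left, abs_neg, abs_of_pos hδ] at h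
    linarith

lemma eventually_forall_dist_le_of_isCoarseCurve {F : Filter ℕ} {γ : Curve Y}
    (hσ : ∀ n, IsCoarseCurve (ε n) x y (l n) (σ n)) (hε : Tendsto ε F (𝓝 0))
    (hγ : ∀ t ∈ Icc 0 γ.len, Tendsto (fun n => σ n t) F (𝓝 (γ.toFun t))) {δ : ℝ} (hδ : 0 < δ) :
    ∀ᶠ n in F, ∀ t ∈ Icc 0 γ.len, dist (γ.toFun t) (σ n t) ≤ δ := by
  have hδ4 : 0 < δ / 4 := by positivity
  obtain ⟨N, hN, hNfin, hcover⟩ :=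
    (isCompact_Icc (a := 0) (b := γ.len)).finite_cover_balls hδ4
  filter_upwards [(eventually_all_finite hNfin).2 fun s hs =>
    (hγ s (hN hs)).eventually (ball_mem_nhds _ hδ4), hε.eventually (Iio_mem_nhds hδ4)]
    with n hnet hεn t ht
  obtain ⟨s, hs, hts⟩ := mem_iUnion₂.1 (hcover ht)
  rw [mem_ball, Real.dist_eq] at hts
  have hγts := γ.lip.dist_le_mul t ht s (hN hs)
  rw [NNReal.coe_one, one_mul, Real.dist_eq] at hγts
  have hσst := (hσ n).dist_le_abs (hN hs).1 ht.1
  rw [abs_sub_comm] at hσst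
  linarith [dist_triangle4 (γ.toFun t) (γ.toFun s) (σ n s) (σ n t),
    mem_ball'.1 (hnet s hs), hεn]

lemma Curve.integral_le_of_dist_le {γ : Curve Y} {f : Y → ℝ≥0∞} {K : ℝ≥0∞}
    (hfK : ∀ z, f z ≤ K) (hf : ∀ z z', f z ≤ f z' + K * edist z z') {τ : ℝ → Y} {m δ : ℝ}
    (hτ : ∀ t ∈ Icc 0 γ.len, dist (γ.toFun t) (τ t) ≤ δ) :
    γ.integral f ≤ (∫⁻ t in Icc 0 m, f (τ t)) + K * ENNReal.ofReal δ * ENNReal.ofReal m +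
      K * ENNReal.ofReal (γ.len - m) := by
  have hcover : Icc 0 γ.len ⊆ (Icc 0 m ∩ Icc 0 γ.len) ∪ Icc m γ.len := fun t ht =>
    (le_total t m).imp (fun h => ⟨⟨ht.1, h⟩, ht⟩) fun h => ⟨h, ht.2⟩
  have hclose : ∀ t ∈ Icc 0 γ.len, f (γ.toFun t) ≤ f (τ t) + K * ENNReal.ofReal δ :=
    fun t ht => (hf _ (τ t)).trans (by rw [edist_dist]; gcongr; exact hτ t ht)
  calc γ.integral f
      ≤ (∫⁻ t in Icc 0 m ∩ Icc 0 γ.len, f (γ.toFun t)) + ∫⁻ t in Icc m γ.len, f (γ.toFun t) :=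
        (lintegral_mono_set hcover).trans (lintegral_union_le _ _ _)
    _ ≤ (∫⁻ t in Icc 0 m, f (τ t) + K * ENNReal.ofReal δ) + ∫⁻ _ in Icc m γ.len, K := by
        refine add_le_add ((setLIntegral_mono' (measurableSet_Icc.inter measurableSet_Icc)
          fun t ht => hclose t ht.2).trans (lintegral_mono_set inter_subset_left)) ?_
        exact lintegral_mono fun t => hfK _
    _ = _ := by
        rw [lintegral_add_right _ measurable_const, setLIntegral_const, setLIntegral_const,
          Real.volume_Icc, Real.volume_Icc, sub_zero]

lemma exists_curve_forall_integral_le [ProperSpace Y]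
    (hσ : ∀ n, IsCoarseCurve (ε n) x y (l n) (σ n)) (hε : ∀ n, ε n ≤ 1)
    (hεlim : Tendsto ε atTop (𝓝 0)) {L : ℝ} (hl : ∀ n, l n ≤ L) {f : ℕ → Y → ℝ≥0∞}
    (hfmono : Monotone f) (hf : ∀ n z z', f n z ≤ f n z' + (n + 1) * edist z z')
    (hfle : ∀ n z, f n z ≤ n + 1) {c : ℝ}
    (hcost : ∀ n, ∫⁻ t in Icc 0 (l n), f n (σ n t) ≤ ENNReal.ofReal (c + ε n)) :
    ∃ γ : Curve Y, γ.toFun 0 = x ∧ γ.toFun γ.len = y ∧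
      ∀ m, γ.integral (f m) ≤ ENNReal.ofReal c := by
  set F : Ultrafilter ℕ := hyperfilter ℕ
  have hF : (F : Filter ℕ) ≤ atTop := Nat.hyperfilter_le_atTop
  have hεF : Tendsto ε F (𝓝 0) := hεlim.mono_left hF
  obtain ⟨γ, hstart, hfinish, hlen, hγ⟩ := exists_curve_tendsto_of_isCoarseCurve hσ hε hεF hl
  refine ⟨γ, hstart, hfinish, fun m => ?_⟩
  have hbound : ∀ δ > 0, γ.integral (f m) ≤
      ENNReal.ofReal c + (m + 1) * ENNReal.ofReal δ * ENNReal.ofReal L := fun δ hδ => by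
    have hlim : Tendsto (fun n => ENNReal.ofReal (c + ε n) +
        (m + 1) * ENNReal.ofReal δ * ENNReal.ofReal L + (m + 1) * ENNReal.ofReal (γ.len - l n)) F
        (𝓝 (ENNReal.ofReal (c + 0) + (m + 1) * ENNReal.ofReal δ * ENNReal.ofReal L +
          (m + 1) * ENNReal.ofReal (γ.len - γ.len))) :=
      ((ENNReal.tendsto_ofReal (hεF.const_add c)).add_const _).add
        (ENNReal.Tendsto.const_mul (ENNReal.tendsto_ofReal (hlen.const_sub _))
          (Or.inr (by finiteness)))
    simp only [add_zero, sub_self, ENNReal.ofReal_zero, mul_zero] at hlim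
    refine ge_of_tendsto hlim ?_
    filter_upwards [eventually_forall_dist_le_of_isCoarseCurve hσ hεF hγ hδ,
      hF (eventually_ge_atTop m)] with n hclose hmn
    refine (Curve.integral_le_of_dist_le (hfle m) (hf m) hclose (m := l n)).trans ?_
    gcongr
    · exact (lintegral_mono fun t => hfmono hmn _).trans (hcost n)
    · exact hl n
  have hcont : Continuous fun δ : ℝ =>
      ENNReal.ofReal c + (m + 1) * ENNReal.ofReal δ * ENNReal.ofReal L :=
    continuous_const.add ((ENNReal.continuous_mul_const ENNReal.ofReal_ne_top).comp
      ((ENNReal.continuous_const_mul (by finiteness)).comp ENNReal.continuous_ofReal))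
  have hzero := (hcont.tendsto 0).mono_left (nhdsWithin_le_nhds (s := Ioi 0))
  simp only [ENNReal.ofReal_zero, mul_zero, zero_mul, add_zero] at hzero
  exact ge_of_tendsto hzero (eventually_mem_nhdsWithin.mono hbound)

end Limit

lemma exists_curve_integral_le_of_isCoarseCurve [ProperSpace X] {ρ : X → ℝ≥0∞}
    (hρ : LowerSemicontinuous ρ) (hρ1 : ∀ z, 1 ≤ ρ z) {x y : X} {c : ℝ} (hc : 0 ≤ c)
    {ε l : ℕ → ℝ} {σ : ℕ → ℝ → X} (hε0 : ∀ n, 0 ≤ ε n) (hε1 : ∀ n, ε n ≤ 1)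
    (hεlim : Tendsto ε atTop (𝓝 0)) (hσ : ∀ n, IsCoarseCurve (ε n) x y (l n) (σ n))
    (hcost : ∀ n, ∫⁻ t in Icc 0 (l n), lipEnvelope ρ n (σ n t) ≤ ENNReal.ofReal (c + ε n)) :
    ∃ γ : Curve X, γ.toFun 0 = x ∧ γ.toFun γ.len = y ∧ γ.integral ρ ≤ ENNReal.ofReal c := by
  have hl : ∀ n, l n ≤ c + 1 := fun n => by
    have h : ENNReal.ofReal (l n) ≤ ENNReal.ofReal (c + ε n) :=
      calc ENNReal.ofReal (l n) = ∫⁻ _ in Icc 0 (l n), 1 := by simp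
        _ ≤ _ := (lintegral_mono fun t => one_le_lipEnvelope hρ1 n _).trans (hcost n)
    linarith [(ENNReal.ofReal_le_ofReal_iff (add_nonneg hc (hε0 n))).1 h, hε1 n]
  obtain ⟨γ, hstart, hfinish, hγ⟩ := exists_curve_forall_integral_le hσ hε1 hεlim hl
    (lipEnvelope_mono ρ) (lipEnvelope_le_add_edist ρ) (lipEnvelope_le_natCast ρ) hcost
  refine ⟨γ, hstart, hfinish, ?_⟩
  have hsup : γ.integral ρ = ⨆ m, γ.integral (lipEnvelope ρ m) := by
    unfold Curve.integral
    rw [← lintegral_iSup' (fun m => γ.aemeasurable_comp (continuous_lipEnvelope ρ m).measurable)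
      (.of_forall fun t a b hab => lipEnvelope_mono ρ hab _)]
    simp only [iSup_lipEnvelope hρ]
  exact hsup.le.trans (iSup_le hγ)

section MaximalBound

variable {Y : Type*} [MetricSpace Y] [MeasurableSpace Y] {μ : Measure Y} {ρ ρ' : Y → ℝ≥0∞}
  {Λ : ℝ} {x : Y}

lemma HasMaximalBoundAt.mono (h : HasMaximalBoundAt μ ρ Λ x) (hρ : ∀ z, ρ' z ≤ ρ z) :
    HasMaximalBoundAt μ ρ' Λ x :=
  fun r hr hr1 => (lintegral_mono hρ).trans (h r hr hr1)

lemma HasMaximalBoundAt.add_one (h : HasMaximalBoundAt μ ρ Λ x) (hΛ : 0 ≤ Λ) :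
    HasMaximalBoundAt μ (fun z => ρ z + 1) (Λ + 1) x := fun r hr hr1 => by
  rw [lintegral_add_right _ measurable_const, setLIntegral_const,
    ENNReal.ofReal_add hΛ zero_le_one, add_mul, ENNReal.ofReal_one]
  exact add_le_add_left (h r hr hr1) _

end MaximalBound

section Poincare

variable {μ : Measure X} {Cd CP lam Λ : ℝ} {ρ : X → ℝ≥0∞} {x y : X}

/-- Semmes's idea: apply the Poincaré inequality to the distance functions of the coarse curves,
for which the envelope of `ρ` is an upper gradient. -/
lemma Poincare.exists_isCoarseCurve_lintegral_le [ProperSpace X] (hp : Poincare μ CP lam)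
    (hd : Doubling μ Cd) (ρ : X → ℝ≥0∞) (hΛ : 0 ≤ Λ) (hx : HasMaximalBoundAt μ ρ Λ x)
    (hy : HasMaximalBoundAt μ ρ Λ y) (hxy : 2 * lam * dist x y ≤ 1) (n : ℕ) {ε : ℝ}
    (hε : 0 < ε) :
    ∃ l σ, IsCoarseCurve ε x y l σ ∧ ∫⁻ t in Icc 0 l, lipEnvelope ρ n (σ t) ≤
      ENNReal.ofReal (8 * Cd ^ 2 * CP * Λ * dist x y + ε) := by
  set c := 8 * Cd ^ 2 * CP * Λ * dist x y
  set ψ := truncCoarseDist (ENNReal.ofReal (c + ε)) ε (lipEnvelope ρ n) x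
  have hψ : |ψ x - ψ y| ≤ c := hp.abs_sub_le_mul_dist hd hΛ (hx.mono (lipEnvelope_le ρ n))
    (hy.mono (lipEnvelope_le ρ n))
    (continuous_truncCoarseDist ENNReal.ofReal_ne_top hε (K := n + 1)
      (by simpa using lipEnvelope_le_natCast ρ n) x)
    (isUpperGradient_truncCoarseDist ENNReal.ofReal_ne_top hε.le
      (continuous_lipEnvelope ρ n).measurable x) hxy
  have hψx : ψ x = 0 := by simp [ψ, truncCoarseDist, coarseDist_self hε.le]
  rw [hψx, zero_sub, abs_neg] at hψ
  exact exists_isCoarseCurve_of_truncCoarseDist_lt (by linarith [le_abs_self (ψ y)])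

lemma Poincare.exists_curve_integral_le [ProperSpace X] (hp : Poincare μ CP lam)
    (hd : Doubling μ Cd) (hρ : LowerSemicontinuous ρ) (hρ1 : ∀ z, 1 ≤ ρ z) (hΛ : 0 ≤ Λ)
    (hx : HasMaximalBoundAt μ ρ Λ x) (hy : HasMaximalBoundAt μ ρ Λ y)
    (hxy : 2 * lam * dist x y ≤ 1) :
    ∃ γ : Curve X, γ.toFun 0 = x ∧ γ.toFun γ.len = y ∧
      γ.integral ρ ≤ ENNReal.ofReal (8 * Cd ^ 2 * CP * Λ * dist x y) := by
  have hCP : 0 ≤ CP := zero_le_one.trans hp.1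
  choose l σ hσ hcost using fun n : ℕ => hp.exists_isCoarseCurve_lintegral_le hd ρ hΛ hx hy hxy n
    (Nat.one_div_pos_of_nat (α := ℝ) (n := n))
  refine exists_curve_integral_le_of_isCoarseCurve hρ hρ1 (by positivity)
    (fun n => Nat.one_div_pos_of_nat.le) (fun n => ?_) tendsto_one_div_add_atTop_nhds_zero_nat
    hσ hcost
  exact div_le_one_of_le₀ (by linarith [n.cast_nonneg (α := ℝ)]) (by positivity)

lemma Poincare.abs_sub_le_of_forall_ugIneq [ProperSpace X] (hp : Poincare μ CP lam)
    (hd : Doubling μ Cd) (hρ : LowerSemicontinuous ρ) (hΛ : 0 ≤ Λ)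
    (hx : HasMaximalBoundAt μ ρ Λ x) (hy : HasMaximalBoundAt μ ρ Λ y)
    (hxy : 2 * lam * dist x y ≤ 1) {f : X → ℝ} (hf : ∀ γ, UGIneq f ρ γ) :
    |f x - f y| ≤ 8 * Cd ^ 2 * CP * (Λ + 1) * dist x y := by
  have hCP : 0 ≤ CP := zero_le_one.trans hp.1
  -- Adding `1` to `ρ` bounds the lengths of the competing coarse curves.
  obtain ⟨γ, hstart, hfinish, hγ⟩ := hp.exists_curve_integral_le hd
    (hρ.add lowerSemicontinuous_const) (fun _ => le_add_self) (by linarith)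
    (hx.add_one hΛ) (hy.add_one hΛ) hxy
  have hug := hf γ
  rw [UGIneq, hstart, hfinish] at hug
  refine (ENNReal.ofReal_le_ofReal_iff (by positivity)).1 (hug.trans (le_trans ?_ hγ))
  exact lintegral_mono fun t => le_self_add

end Poincare

/-! ### Lipschitz approximation off the set where the maximal function is large -/

section AlongCurve

variable {Y : Type*} [MetricSpace Y] {γ : Curve Y} {u v : Y → ℝ} {g h : Y → ℝ≥0∞} {O : Set Y}

lemma IsUGAlong.sub (hu : IsUGAlong u g γ) (hv : IsUGAlong v h γ) :
    IsUGAlong (fun x => u x - v x) (fun x => g x + h x) γ := by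
  intro s t hs hst ht
  calc ENNReal.ofReal |u (γ.toFun s) - v (γ.toFun s) - (u (γ.toFun t) - v (γ.toFun t))|
      ≤ ENNReal.ofReal |u (γ.toFun s) - u (γ.toFun t)| +
          ENNReal.ofReal |v (γ.toFun s) - v (γ.toFun t)| := by
        rw [← ENNReal.ofReal_add (abs_nonneg _) (abs_nonneg _), sub_sub_sub_comm]
        exact ENNReal.ofReal_le_ofReal (abs_sub _ _)
    _ ≤ _ := (add_le_add (hu s t hs hst ht) (hv s t hs hst ht)).trans (le_lintegral_add _ _)

lemma Curve.subcurve_in_closure {s t : ℝ} (hs : 0 ≤ s) (hst : s < t) (ht : t ≤ γ.len)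
    (hO : ∀ τ ∈ Ioo s t, γ.toFun τ ∈ O) : (γ.subcurve s t hs hst.le ht).In (closure O) := by
  intro τ hτ
  have hmem : s + τ ∈ closure (Ioo s t) := by
    rw [closure_Ioo hst.ne]
    exact ⟨by linarith [hτ.1], le_sub_iff_add_le'.1 hτ.2⟩
  have hcont : ContinuousOn γ.toFun (closure (Ioo s t)) := by
    rw [closure_Ioo hst.ne]
    exact γ.continuousOn.mono (Icc_subset_Icc hs ht)
  exact closure_mono (image_subset_iff.2 hO) (hcont.image_closure (mem_image_of_mem _ hmem))

lemma ugIneq_indicator_of_eq_zero (hO : IsOpen O) (hu : ∀ x ∉ O, u x = 0)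
    (H : ∀ s t (hs : 0 ≤ s) (hst : s ≤ t) (ht : t ≤ γ.len),
      (γ.subcurve s t hs hst ht).In (closure O) → UGIneq u g (γ.subcurve s t hs hst ht)) :
    UGIneq u (O.indicator g) γ := by
  have hclosed : IsClosed (γ.toFun ⁻¹' Oᶜ ∩ Icc 0 γ.len) := by
    rw [inter_comm]
    exact γ.continuousOn.preimage_isClosed_of_isClosed isClosed_Icc hO.isClosed_compl
  have hug := UGBetween.indicator_compl_of_eq_zero (h := fun t => u (γ.toFun t))
    (a := fun t => g (γ.toFun t)) γ.len_nonneg hclosed (fun t ht => hu _ ht.1)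
    fun s t hs hst ht hZ => by
      rcases hst.eq_or_lt with rfl | hlt
      · simp [UGBetween]
      · exact (ugIneq_subcurve_iff hs hst ht).1 (H s t hs hst ht
          (γ.subcurve_in_closure hs hlt ht fun τ hτ => not_not.1 (hZ τ hτ)))
  refine le_trans hug (le_of_eq (lintegral_congr fun t => ?_))
  rw [preimage_compl, compl_compl]
  exact indicator_comp_right (s := O) γ.toFun (g := g)

end AlongCurve

section MaximalSuperlevelSet

variable {Y : Type*} [MetricSpace Y] [MeasurableSpace Y] {μ : Measure Y} {ρ : Y → ℝ≥0∞} {Λ : ℝ}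

/-- The superlevel set `{M ρ > Λ}` of the uncentred maximal function over balls of radius at most
`1`: the union of the balls on which the mean of `ρ` exceeds `Λ`. -/
def maximalSuperlevelSet (μ : Measure Y) (ρ : Y → ℝ≥0∞) (Λ : ℝ) : Set Y :=
  ⋃ p ∈ {p : Y × ℝ | 0 < p.2 ∧ p.2 ≤ 1 ∧
    ENNReal.ofReal Λ * μ (ball p.1 p.2) < ∫⁻ y in ball p.1 p.2, ρ y ∂μ}, ball p.1 p.2

lemma isOpen_maximalSuperlevelSet (μ : Measure Y) (ρ : Y → ℝ≥0∞) (Λ : ℝ) :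
    IsOpen (maximalSuperlevelSet μ ρ Λ) :=
  isOpen_biUnion fun _ _ => isOpen_ball

lemma hasMaximalBoundAt_of_notMem_maximalSuperlevelSet {x : Y}
    (hx : x ∉ maximalSuperlevelSet μ ρ Λ) : HasMaximalBoundAt μ ρ Λ x := fun r hr hr1 =>
  not_lt.1 fun hlt => hx (mem_biUnion (x := (x, r)) ⟨hr, hr1, hlt⟩ (mem_ball_self hr))

end MaximalSuperlevelSet

section WeakType

variable [SecondCountableTopology X] {μ : Measure X} {Cd : ℝ} {ρ : X → ℝ≥0∞}

/-- The weak type `(1,1)` estimate, with the right-hand side localized by the Vitali covering. -/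
lemma Doubling.ofReal_mul_measure_maximalSuperlevelSet_le (hd : Doubling μ Cd) (ρ : X → ℝ≥0∞)
    (Λ : ℝ) : ENNReal.ofReal Λ * μ (maximalSuperlevelSet μ ρ Λ) ≤
      ENNReal.ofReal (Cd ^ 2) * ∫⁻ x in maximalSuperlevelSet μ ρ Λ, ρ x ∂μ := by
  obtain ⟨S, hS, hdisj, hcover⟩ := Vitali.exists_disjoint_subfamily_covering_enlargement_ball
    {p : X × ℝ | 0 < p.2 ∧ p.2 ≤ 1 ∧
      ENNReal.ofReal Λ * μ (ball p.1 p.2) < ∫⁻ y in ball p.1 p.2, ρ y ∂μ}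
    Prod.fst Prod.snd 1 (fun p hp => hp.2.1) 4 (by norm_num)
  have hcount : S.Countable := hdisj.countable_of_isOpen (fun _ _ => isOpen_ball)
    fun p hp => ⟨p.1, mem_ball_self (hS hp).1⟩
  have hsub : maximalSuperlevelSet μ ρ Λ ⊆ ⋃ p ∈ S, ball p.1 (4 * p.2) :=
    iUnion₂_subset fun p hp =>
      let ⟨b, hb, hpb⟩ := hcover p hp
      hpb.trans (subset_biUnion_of_mem (u := fun p : X × ℝ => ball p.1 (4 * p.2)) hb)
  have hball : ∀ p ∈ S, ENNReal.ofReal Λ * μ (ball p.1 (4 * p.2)) ≤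
      ENNReal.ofReal (Cd ^ 2) * ∫⁻ x in ball p.1 p.2, ρ x ∂μ := fun p hp => by
    have hdouble := hd.measure_ball_pow_mul_le p.1 (hS hp).1 2
    norm_num at hdouble
    calc ENNReal.ofReal Λ * μ (ball p.1 (4 * p.2))
        ≤ ENNReal.ofReal Λ * (ENNReal.ofReal (Cd ^ 2) * μ (ball p.1 p.2)) := by gcongr
      _ = ENNReal.ofReal (Cd ^ 2) * (ENNReal.ofReal Λ * μ (ball p.1 p.2)) := mul_left_comm ..
      _ ≤ _ := mul_le_mul_right (hS hp).2.2.le _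
  calc ENNReal.ofReal Λ * μ (maximalSuperlevelSet μ ρ Λ)
      ≤ ENNReal.ofReal Λ * ∑' p : S, μ (ball p.1.1 (4 * p.1.2)) := by
        gcongr
        exact (measure_mono hsub).trans (measure_biUnion_le μ hcount _)
    _ ≤ ENNReal.ofReal (Cd ^ 2) * ∑' p : S, ∫⁻ x in ball p.1.1 p.1.2, ρ x ∂μ := by
        rw [← ENNReal.tsum_mul_left, ← ENNReal.tsum_mul_left]
        exact ENNReal.tsum_le_tsum fun p => hball p.1 p.2
    _ ≤ _ := by
        rw [← lintegral_biUnion hcount (fun _ _ => measurableSet_ball) hdisj]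
        gcongr
        exact biUnion_subset_biUnion_left hS

lemma Doubling.tendsto_measure_maximalSuperlevelSet (hd : Doubling μ Cd)
    (hρ : ∫⁻ x, ρ x ∂μ < ∞) :
    Tendsto (fun Λ => μ (maximalSuperlevelSet μ ρ Λ)) atTop (𝓝 0) := by
  have hmass : ENNReal.ofReal (Cd ^ 2) * ∫⁻ x, ρ x ∂μ ≠ ∞ :=
    ENNReal.mul_ne_top ENNReal.ofReal_ne_top hρ.ne
  have hlim : Tendsto (fun Λ : ℝ => ENNReal.ofReal (Cd ^ 2) * (∫⁻ x, ρ x ∂μ) / ENNReal.ofReal Λ)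
      atTop (𝓝 0) := by
    simpa using ENNReal.Tendsto.const_div (ENNReal.tendsto_ofReal_nhds_top.2 tendsto_id)
      (Or.inr hmass)
  refine tendsto_of_tendsto_of_tendsto_of_le_of_le' tendsto_const_nhds hlim
    (.of_forall fun _ => zero_le) ?_
  filter_upwards [eventually_gt_atTop (0 : ℝ)] with Λ hΛ
  rw [ENNReal.le_div_iff_mul_le (Or.inl (by simpa using hΛ)) (Or.inl ENNReal.ofReal_ne_top),
    mul_comm]
  refine (hd.ofReal_mul_measure_maximalSuperlevelSet_le ρ Λ).trans ?_
  gcongr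
  exact Measure.restrict_le_self

lemma Doubling.tendsto_lintegral_maximalSuperlevelSet (hd : Doubling μ Cd)
    (hρ : ∫⁻ x, ρ x ∂μ < ∞) {C : ℝ} (hC : 0 ≤ C) :
    Tendsto (fun Λ => ∫⁻ x in maximalSuperlevelSet μ ρ Λ, (ENNReal.ofReal (C * (Λ + 1)) + ρ x) ∂μ)
      atTop (𝓝 0) := by
  have hmeas := hd.tendsto_measure_maximalSuperlevelSet hρ
  have hint : Tendsto (fun Λ => ∫⁻ x in maximalSuperlevelSet μ ρ Λ, ρ x ∂μ) atTop (𝓝 0) :=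
    tendsto_setLIntegral_zero hρ.ne hmeas
  have hmul : Tendsto (fun Λ => ENNReal.ofReal Λ * μ (maximalSuperlevelSet μ ρ Λ)) atTop
      (𝓝 0) := by
    refine tendsto_of_tendsto_of_tendsto_of_le_of_le tendsto_const_nhds ?_ (fun _ => zero_le)
      fun Λ => hd.ofReal_mul_measure_maximalSuperlevelSet_le ρ Λ
    simpa using ENNReal.Tendsto.const_mul hint (Or.inr ENNReal.ofReal_ne_top)
  have hsum := (ENNReal.Tendsto.const_mul (hmul.add hmeas)
    (Or.inr (ENNReal.ofReal_ne_top (r := C)))).add hint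
  simp only [add_zero, mul_zero] at hsum
  refine hsum.congr' ?_
  filter_upwards [eventually_ge_atTop (0 : ℝ)] with Λ hΛ
  rw [lintegral_add_left measurable_const, setLIntegral_const, ENNReal.ofReal_mul hC,
    ENNReal.ofReal_add hΛ zero_le_one, ENNReal.ofReal_one]
  ring

end WeakType

section Clamp

/-- The truncation of a real number to `[-1, 1]`. -/
def clamp (t : ℝ) : ℝ := max (-1) (min 1 t)

lemma lipschitzWith_clamp : LipschitzWith 1 clamp :=
  (LipschitzWith.id.const_min 1).const_max (-1)

lemma abs_clamp_le (t : ℝ) : |clamp t| ≤ 1 :=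
  abs_le.2 ⟨le_max_left _ _, max_le (by norm_num) (min_le_left _ _)⟩

lemma clamp_eq_self {t : ℝ} (ht : |t| ≤ 1) : clamp t = t := by
  rw [clamp, min_eq_right (abs_le.1 ht).2, max_eq_right (abs_le.1 ht).1]

end Clamp

section LipschitzApproximation

variable [ProperSpace X] {μ : Measure X} {Cd CP lam Λ ε : ℝ} {f : X → ℝ} {ρ q : X → ℝ≥0∞}

lemma Poincare.lipschitzOnWith_compl_maximalSuperlevelSet (hp : Poincare μ CP lam)
    (hd : Doubling μ Cd) (hρ : LowerSemicontinuous ρ) (hug : ∀ γ, UGIneq f ρ γ)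
    (hf : ∀ x, |f x| ≤ 1) (hΛ : 4 * lam ≤ Λ) :
    LipschitzOnWith (8 * Cd ^ 2 * CP * (Λ + 1)).toNNReal f (maximalSuperlevelSet μ ρ Λ)ᶜ := by
  obtain ⟨hCP, hlam, -⟩ := id hp
  have hC : 1 ≤ Cd ^ 2 * CP := one_le_mul_of_one_le_of_one_le (one_le_pow₀ hd.1) hCP
  refine LipschitzOnWith.of_dist_le_mul fun x hx y hy => ?_
  rw [Real.coe_toNNReal _ (by nlinarith), Real.dist_eq]
  rcases le_or_gt (2 * lam * dist x y) 1 with hnear | hfar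
  · exact hp.abs_sub_le_of_forall_ugIneq hd hρ (by linarith)
      (hasMaximalBoundAt_of_notMem_maximalSuperlevelSet hx)
      (hasMaximalBoundAt_of_notMem_maximalSuperlevelSet hy) hnear hug
  · calc |f x - f y| ≤ |f x| + |f y| := abs_sub _ _
      _ ≤ 4 * lam * dist x y := by linarith [hf x, hf y]
      _ ≤ 8 * Cd ^ 2 * CP * (Λ + 1) * dist x y := by
          refine mul_le_mul_of_nonneg_right ?_ dist_nonneg
          nlinarith

lemma Poincare.exists_lipschitzWith_of_forall_ugIneq (hp : Poincare μ CP lam)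
    (hd : Doubling μ Cd) (hρ : LowerSemicontinuous ρ) (hug : ∀ γ, UGIneq f ρ γ)
    (hfin : ∫⁻ x, ρ x ∂μ < ∞) (hf : ∀ x, |f x| ≤ 1) (hε : 0 < ε) :
    ∃ (F : X → ℝ) (K : ℝ≥0) (p : X → ℝ≥0∞), LipschitzWith K F ∧ (∀ x, |F x| ≤ 1) ∧
      IsUpperGradient (fun x => F x - f x) p ∧ ∫⁻ x, p x ∂μ ≤ ENNReal.ofReal ε ∧
      μ {x | F x ≠ f x} ≤ ENNReal.ofReal ε := by
  have hCP : 0 ≤ CP := zero_le_one.trans hp.1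
  have hε' : (0 : ℝ≥0∞) < ENNReal.ofReal ε := ENNReal.ofReal_pos.2 hε
  obtain ⟨Λ, hΛ, hμE, hint⟩ := ((eventually_ge_atTop (4 * lam)).and
    (((hd.tendsto_measure_maximalSuperlevelSet hfin).eventually_le_const hε').and
      ((hd.tendsto_lintegral_maximalSuperlevelSet hfin
        (by positivity : 0 ≤ 8 * Cd ^ 2 * CP)).eventually_le_const hε'))).exists
  have hopen := isOpen_maximalSuperlevelSet μ ρ Λ
  obtain ⟨F, hF, hFf⟩ :=
    (hp.lipschitzOnWith_compl_maximalSuperlevelSet hd hρ hug hf hΛ).extend_real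
  have hclamp : ∀ x ∉ maximalSuperlevelSet μ ρ Λ, clamp (F x) = f x := fun x hx => by
    rw [← hFf hx, clamp_eq_self (hf x)]
  have hlip := lipschitzWith_clamp.comp hF
  rw [one_mul] at hlip
  refine ⟨fun x => clamp (F x), _, _, hlip, fun x => abs_clamp_le _,
    ⟨(hρ.measurable.const_add _).indicator hopen.measurableSet, fun γ => ?_⟩,
    (lintegral_indicator hopen.measurableSet _).trans_le hint,
    (measure_mono fun x hx => not_not.1 (mt (hclamp x) hx)).trans hμE⟩
  refine ugIneq_indicator_of_eq_zero hopen (fun x hx => sub_eq_zero.2 (hclamp x hx))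
    fun s t hs hst ht _ => IsUGAlong.ugIneq ?_
  exact (isUGAlong_of_lipschitzOnWith (lipschitzOnWith_univ.2 hlip) fun _ _ => mem_univ _).sub
    (isUGAlong_of_ugIneq_subcurve fun _ _ _ _ _ => hug _)

lemma Doubling.exists_lowerSemicontinuous_of_isWeakUpperGradientOn (hd : Doubling μ Cd)
    (hq : IsWeakUpperGradientOn μ f q univ) (hfin : ∫⁻ x, q x ∂μ < ∞) :
    ∃ ρ : X → ℝ≥0∞, LowerSemicontinuous ρ ∧ (∀ γ, UGIneq f ρ γ) ∧ ∫⁻ x, ρ x ∂μ < ∞ := by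
  have := hd.isLocallyFiniteMeasure
  obtain ⟨q', hq', hle, heq⟩ := exists_measurable_ge_ae_eq hq.1
  obtain ⟨ρ₀, hρ₀, hρ₀fin, hρ₀top⟩ := hq.2
  obtain ⟨ρ, hρle, hρ, hρfin⟩ := exists_le_lowerSemicontinuous_lintegral_ge μ
    (fun x => q' x + ρ₀ x) (hq'.add hρ₀) one_ne_zero
  refine ⟨ρ, hρ, fun γ => ?_, hρfin.trans_lt ?_⟩
  · by_cases hγ : UGIneq f q γ
    · exact hγ.trans (lintegral_mono fun t => (hle _).trans (le_self_add.trans (hρle _)))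
    · have htop : γ.integral ρ = ∞ := top_le_iff.1 <|
        (hρ₀top γ ⟨fun _ _ => mem_univ _, hγ⟩).ge.trans
          (lintegral_mono fun t => le_add_self.trans (hρle _))
      rw [UGIneq, htop]
      exact le_top
  · rw [lintegral_add_left hq', ← lintegral_congr_ae heq]
    exact ENNReal.add_lt_top.2 ⟨ENNReal.add_lt_top.2 ⟨hfin, hρ₀fin⟩, ENNReal.one_lt_top⟩

lemma Poincare.aemeasurable_of_isWeakUpperGradientOn (hp : Poincare μ CP lam)
    (hd : Doubling μ Cd) (hq : IsWeakUpperGradientOn μ f q univ) (hfin : ∫⁻ x, q x ∂μ < ∞)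
    (hf : ∀ x, |f x| ≤ 1) : AEMeasurable f μ := by
  obtain ⟨ρ, hρ, hug, hρfin⟩ := hd.exists_lowerSemicontinuous_of_isWeakUpperGradientOn hq hfin
  choose F K p hF _ _ _ hne using fun n : ℕ =>
    hp.exists_lipschitzWith_of_forall_ugIneq hd hρ hug hρfin hf (ε := (1 / 2) ^ n) (by positivity)
  have hsum : ∑' n, μ {x | F n x ≠ f x} ≠ ∞ := by
    refine ne_top_of_le_ne_top ?_ (ENNReal.tsum_le_tsum hne)
    rw [← ENNReal.ofReal_tsum_of_nonneg (fun n => by positivity) summable_geometric_two]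
    exact ENNReal.ofReal_ne_top
  refine aemeasurable_of_tendsto_metrizable_ae atTop
    (fun n => (hF n).continuous.measurable.aemeasurable) ?_
  filter_upwards [ae_eventually_notMem hsum] with x hx
  exact tendsto_const_nhds.congr' (hx.mono fun n hn => (not_not.1 hn).symm)

lemma Poincare.exists_lipschitzWith_of_isWeakUpperGradientOn (hp : Poincare μ CP lam)
    (hd : Doubling μ Cd) (hq : IsWeakUpperGradientOn μ f q univ) (hfin : ∫⁻ x, q x ∂μ < ∞)
    (hf : ∀ x, |f x| ≤ 1) (hε : 0 < ε) :
    ∃ (F : X → ℝ) (K : ℝ≥0) (p : X → ℝ≥0∞), LipschitzWith K F ∧ (∀ x, |F x| ≤ 1) ∧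
      IsUpperGradient (fun x => F x - f x) p ∧ ∫⁻ x, p x ∂μ ≤ ENNReal.ofReal ε ∧
      ∫⁻ x, ENNReal.ofReal |F x - f x| ∂μ ≤ ENNReal.ofReal ε := by
  obtain ⟨ρ, hρ, hug, hρfin⟩ := hd.exists_lowerSemicontinuous_of_isWeakUpperGradientOn hq hfin
  obtain ⟨F, K, p, hF, hF1, hp', hpε, hne⟩ :=
    hp.exists_lipschitzWith_of_forall_ugIneq hd hρ hug hρfin hf (half_pos hε)
  refine ⟨F, K, p, hF, hF1, hp', hpε.trans (ENNReal.ofReal_le_ofReal (half_le_self hε.le)), ?_⟩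
  calc ∫⁻ x, ENNReal.ofReal |F x - f x| ∂μ
      ≤ ∫⁻ x, {x | F x ≠ f x}.indicator (fun _ => 2) x ∂μ := by
        refine lintegral_mono fun x => ?_
        by_cases hx : F x = f x
        · simp [hx]
        · rw [indicator_of_mem (by exact hx), ← ENNReal.ofReal_ofNat]
          exact ENNReal.ofReal_le_ofReal ((abs_sub _ _).trans (by linarith [hF1 x, hf x]))
    _ ≤ 2 * ENNReal.ofReal (ε / 2) := (lintegral_indicator_const_le _ _).trans (by gcongr)
    _ = ENNReal.ofReal ε := by
        rw [← ENNReal.ofReal_ofNat, ← ENNReal.ofReal_mul zero_le_two, mul_div_cancel₀ _ two_ne_zero]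

end LipschitzApproximation

/-! ### Cutoffs and dyadic partitions of unity -/

section Cutoff

variable {Y : Type*} [MetricSpace Y] {γ : Curve Y} {α u : Y → ℝ} {g : Y → ℝ≥0∞} {K : ℝ≥0}

lemma IsUGAlong.mul_of_lipschitzWith (hu : IsUGAlong u g γ) (hg : γ.LIntegrable g)
    (hα : LipschitzWith K α) (hα01 : ∀ x, α x ∈ Icc (0 : ℝ) 1) :
    IsUGAlong (fun x => α x * u x) (fun x => g x + K * ENNReal.ofReal |u x|) γ := by
  have hzero : IsUGOnIcc (fun _ => 0) (fun _ => 0) γ.len := fun s t _ _ _ => by simp [UGBetween]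
  have hcomb := hzero.convexComb γ.len_nonneg hu
    (isUGAlong_of_lipschitzOnWith (lipschitzOnWith_univ.2 hα) fun _ _ => mem_univ _)
    (lintegrableOnIcc_const ENNReal.zero_ne_top _) hg
    (lintegrableOnIcc_const ENNReal.coe_ne_top _) fun _ _ => hα01 _
  refine (hcomb.mono (.of_forall fun t => ?_)).congr fun t _ => by simp
  rw [mul_zero, zero_add, zero_sub, abs_neg, add_comm, mul_comm (ENNReal.ofReal |_|)]
  exact add_le_add (mul_le_of_le_one_left bot_le (ENNReal.ofReal_le_one.2 (hα01 _).2)) le_rfl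

end Cutoff

lemma IsWeakUpperGradientOn.mul_of_lipschitzWith {μ : Measure X} {f α : X → ℝ} {q : X → ℝ≥0∞}
    {W O : Set X} {K : ℝ≥0} (hq : IsWeakUpperGradientOn μ f q W)
    (hfin : ∫⁻ x in W, q x ∂μ < ∞) (hf : ∀ x, |f x| ≤ 1) (hW : MeasurableSet W) (hO : IsOpen O)
    (hOW : closure O ⊆ W) (hα : LipschitzWith K α) (hα01 : ∀ x, α x ∈ Icc (0 : ℝ) 1)
    (hαO : ∀ x ∉ O, α x = 0) :
    IsWeakUpperGradientOn μ (fun x => α x * f x) (O.indicator fun x => q x + K) univ := by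
  refine isWeakUpperGradientOn_iff_ugIneq.2 ⟨(hq.1.add_const _).indicator hO.measurableSet, ?_⟩
  filter_upwards [eventually_aeCurve_subcurve hq.eventually_isUGAlong, eventually_aeCurve_subcurve
    (eventually_aeCurve_lintegrable_of_in hq.1 hW.nullMeasurableSet hfin)] with γ hug hint _
  refine ugIneq_indicator_of_eq_zero hO (fun x hx => by rw [hαO x hx, zero_mul])
    fun s t hs hst ht hγ => ?_
  have hγW := hγ.mono hOW
  have hprod := (hug s t hs hst ht hγW).mul_of_lipschitzWith (hint s t hs hst ht hγW) hα hα01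
  refine hprod.ugIneq.trans (lintegral_mono fun τ => ?_)
  exact add_le_add le_rfl (mul_le_of_le_one_right bot_le (ENNReal.ofReal_le_one.2 (hf _)))

section Exhaustion

variable {Y : Type*} [MetricSpace Y] {W : Set Y}

/-- A `1`-Lipschitz function `φ : Y → [0, 1]` that is positive exactly on `W` and has bounded
superlevel sets. Its superlevel sets `{c ≤ φ}`, `c > 0`, exhaust `W` by bounded closed sets. -/
structure IsExhaustionFunction (φ : Y → ℝ) (W : Set Y) : Prop where
  lipschitz : LipschitzWith 1 φ
  nonneg : ∀ x, 0 ≤ φ x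
  le_one : ∀ x, φ x ≤ 1
  pos_iff : ∀ x, 0 < φ x ↔ x ∈ W
  isBounded_superlevel : ∀ c > 0, Bornology.IsBounded {x | c ≤ φ x}

lemma exists_lipschitzWith_one_pos_iff (hW : IsOpen W) :
    ∃ δ : Y → ℝ, LipschitzWith 1 δ ∧ (∀ x, 0 ≤ δ x) ∧ ∀ x, 0 < δ x ↔ x ∈ W := by
  rcases eq_empty_or_nonempty Wᶜ with hWc | hWc
  · refine ⟨fun _ => 1, LipschitzWith.const' _, fun _ => zero_le_one, fun x => ?_⟩
    simp [compl_empty_iff.1 hWc]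
  · exact ⟨fun x => infDist x Wᶜ, lipschitz_infDist_pt _, fun _ => infDist_nonneg, fun x => by
      rw [← hW.isClosed_compl.notMem_iff_infDist_pos hWc, notMem_compl_iff]⟩

lemma lipschitzWith_inv_one_add_dist (x₀ : Y) :
    LipschitzWith 1 fun x => (1 + dist x x₀)⁻¹ := by
  refine LipschitzWith.of_dist_le_mul fun x y => ?_
  have hx : 1 ≤ 1 + dist x x₀ := le_add_of_nonneg_right dist_nonneg
  have hy : 1 ≤ 1 + dist y x₀ := le_add_of_nonneg_right dist_nonneg
  have hxy : 1 ≤ (1 + dist x x₀) * (1 + dist y x₀) := one_le_mul_of_one_le_of_one_le hx hy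
  rw [Real.dist_eq, inv_sub_inv (by positivity) (by positivity), abs_div,
    abs_of_pos (zero_lt_one.trans_le hxy), add_sub_add_left_eq_sub, NNReal.coe_one, one_mul,
    dist_comm x y]
  exact (div_le_self (abs_nonneg _) hxy).trans (abs_dist_sub_le _ _ _)

lemma exists_isExhaustionFunction (hW : IsOpen W) : ∃ φ : Y → ℝ, IsExhaustionFunction φ W := by
  rcases isEmpty_or_nonempty Y with hY | ⟨⟨x₀⟩⟩
  · exact ⟨fun _ => 0, LipschitzWith.const' _, hY.elim, hY.elim, hY.elim,
      fun _ _ => (Set.toFinite _).isBounded⟩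
  obtain ⟨δ, hδ, hδ0, hδW⟩ := exists_lipschitzWith_one_pos_iff hW
  have hpos : ∀ x, 0 < (1 + dist x x₀)⁻¹ := fun _ => by positivity
  refine ⟨fun x => min (δ x) (1 + dist x x₀)⁻¹, ?_, fun x => le_min (hδ0 x) (hpos x).le,
    fun x => (min_le_right _ _).trans (inv_le_one_of_one_le₀ (le_add_of_nonneg_right dist_nonneg)),
    fun x => by rw [lt_min_iff, hδW, and_iff_left (hpos x)], fun c hc => ?_⟩
  · simpa only [max_self] using hδ.min (lipschitzWith_inv_one_add_dist x₀)
  · refine (isBounded_closedBall (x := x₀) (r := c⁻¹)).subset fun x hx => ?_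
    have hcx : c ≤ (1 + dist x x₀)⁻¹ := le_trans hx (min_le_right _ _)
    rw [le_inv_comm₀ hc (by positivity)] at hcx
    exact mem_closedBall.2 (by linarith)

end Exhaustion

section DyadicCutoff

variable {Z : Type*} {φ : Z → ℝ} {x : Z} {j : ℕ}

/-- The cutoff function equal to `1` on `{φ ≥ 2 / 2 ^ j}` and to `0` on `{φ ≤ 1 / 2 ^ j}`. -/
def cutoff (φ : Z → ℝ) (j : ℕ) (x : Z) : ℝ := max 0 (min 1 (2 ^ j * φ x - 1))

lemma cutoff_mem_Icc (φ : Z → ℝ) (j : ℕ) (x : Z) : cutoff φ j x ∈ Icc (0 : ℝ) 1 :=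
  ⟨le_max_left _ _, max_le zero_le_one (min_le_left _ _)⟩

lemma cutoff_eq_zero (h : 2 ^ j * φ x ≤ 1) : cutoff φ j x = 0 :=
  max_eq_left ((min_le_right _ _).trans (sub_nonpos.2 h))

lemma cutoff_eq_one (h : 2 ≤ 2 ^ j * φ x) : cutoff φ j x = 1 := by
  rw [cutoff, min_eq_left (by linarith), max_eq_right zero_le_one]

lemma exists_two_le_two_pow_mul {c : ℝ} (hc : 0 < c) : ∃ J : ℕ, 2 ≤ 2 ^ J * c := by
  obtain ⟨J, hJ⟩ := pow_unbounded_of_one_lt (2 / c) one_lt_two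
  exact ⟨J, ((div_lt_iff₀ hc).1 hJ).le⟩

lemma two_pow_mul_le_two_pow_mul {c : ℝ} (hc : 0 ≤ c) {i j : ℕ} (hij : i ≤ j) :
    2 ^ i * c ≤ 2 ^ j * c := by
  gcongr
  exact one_le_two

/-- The `j`-th function of a dyadic partition of unity on `{φ > 0}`: the differences telescope,
and the `j`-th one vanishes off the annulus `1 / 2 ^ (j + 1) < φ < 2 / 2 ^ j`. -/
def shell (φ : Z → ℝ) (j : ℕ) (x : Z) : ℝ := cutoff φ (j + 1) x - cutoff φ j x

lemma shell_mem_Icc (h0 : 0 ≤ φ x) : shell φ j x ∈ Icc (0 : ℝ) 1 := by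
  have hmono : cutoff φ j x ≤ cutoff φ (j + 1) x := by
    unfold cutoff
    gcongr max 0 (min 1 (?_ - 1))
    exact two_pow_mul_le_two_pow_mul h0 j.le_succ
  exact ⟨sub_nonneg.2 hmono, (sub_le_self _ (cutoff_mem_Icc φ j x).1).trans
    (cutoff_mem_Icc φ (j + 1) x).2⟩

lemma shell_eq_zero (h0 : 0 ≤ φ x) {J : ℕ} (hJ : 2 ≤ 2 ^ J * φ x) (hj : J ≤ j) :
    shell φ j x = 0 := by
  rw [shell, cutoff_eq_one (hJ.trans (two_pow_mul_le_two_pow_mul h0 hj)),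
    cutoff_eq_one (hJ.trans (two_pow_mul_le_two_pow_mul h0 (hj.trans j.le_succ))), sub_self]

lemma shell_mul_cutoff (h0 : 0 ≤ φ x) : shell φ j x * cutoff φ (j + 2) x = shell φ j x := by
  rcases le_or_gt (2 ^ (j + 1) * φ x) 1 with h | h
  · rw [shell, cutoff_eq_zero h,
      cutoff_eq_zero ((two_pow_mul_le_two_pow_mul h0 j.le_succ).trans h), sub_zero, zero_mul]
  · rw [cutoff_eq_one (by rw [pow_succ]; linarith), mul_one]

lemma sum_range_shell (h1 : φ x ≤ 1) {J : ℕ} (hJ : 2 ≤ 2 ^ J * φ x) :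
    ∑ j ∈ Finset.range J, shell φ j x = 1 := by
  unfold shell
  rw [Finset.sum_range_sub (fun j => cutoff φ j x), cutoff_eq_one hJ,
    cutoff_eq_zero (by simpa using h1), sub_zero]

/-- The function glued from `F j` along the dyadic partition of unity of `φ`. The sum is locally
finite on `{φ > 0}`. -/
def dyadicGlue (φ : Z → ℝ) (F : ℕ → Z → ℝ) (x : Z) : ℝ := ∑' j, shell φ j x * F j x

variable {F : ℕ → Z → ℝ} {J : ℕ}

lemma dyadicGlue_eq_sum (h0 : 0 ≤ φ x) (hJ : 2 ≤ 2 ^ J * φ x) :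
    dyadicGlue φ F x = ∑ j ∈ Finset.range J, shell φ j x * F j x :=
  tsum_eq_sum fun j hj => by
    rw [shell_eq_zero h0 hJ (not_lt.1 fun h => hj (Finset.mem_range.2 h)), zero_mul]

/-- The cutoff is harmless: it equals `1` wherever `shell φ j` does not vanish. -/
lemma dyadicGlue_sub_eq_sum (h0 : 0 ≤ φ x) (h1 : φ x ≤ 1) (hJ : 2 ≤ 2 ^ J * φ x) (f : Z → ℝ) :
    dyadicGlue φ F x - f x =
      ∑ j ∈ Finset.range J, shell φ j x * (F j x - cutoff φ (j + 2) x * f x) := by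
  simp only [mul_sub, ← mul_assoc, shell_mul_cutoff h0]
  rw [Finset.sum_sub_distrib, ← Finset.sum_mul, sum_range_shell h1 hJ, one_mul,
    dyadicGlue_eq_sum h0 hJ]

lemma ofReal_abs_dyadicGlue_sub_le (h0 : 0 < φ x) (h1 : φ x ≤ 1) (f : Z → ℝ) :
    ENNReal.ofReal |dyadicGlue φ F x - f x| ≤
      ∑' j, ENNReal.ofReal |F j x - cutoff φ (j + 2) x * f x| := by
  obtain ⟨J, hJ⟩ := exists_two_le_two_pow_mul h0
  rw [dyadicGlue_sub_eq_sum h0.le h1 hJ]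
  calc _ ≤ ENNReal.ofReal (∑ j ∈ Finset.range J, |F j x - cutoff φ (j + 2) x * f x|) := by
        refine ENNReal.ofReal_le_ofReal ((Finset.abs_sum_le_sum_abs _ _).trans
          (Finset.sum_le_sum fun j _ => ?_))
        have hshell := shell_mem_Icc (j := j) h0.le
        rw [abs_mul, abs_of_nonneg hshell.1]
        exact mul_le_of_le_one_left (abs_nonneg _) hshell.2
    _ = ∑ j ∈ Finset.range J, ENNReal.ofReal |F j x - cutoff φ (j + 2) x * f x| :=
        ENNReal.ofReal_sum_of_nonneg fun _ _ => abs_nonneg _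
    _ ≤ _ := ENNReal.sum_le_tsum _

end DyadicCutoff

section LipschitzCutoff

variable {Y : Type*} [MetricSpace Y] {φ : Y → ℝ} {F : ℕ → Y → ℝ} {W : Set Y}

lemma lipschitzWith_cutoff (hφ : LipschitzWith 1 φ) (j : ℕ) :
    LipschitzWith (2 ^ j) (cutoff φ j) := by
  have hscale : LipschitzWith (2 ^ j) fun x => 2 ^ j * φ x - 1 := by
    refine LipschitzWith.of_dist_le_mul fun x y => ?_
    have hφxy := hφ.dist_le_mul x y
    rw [Real.dist_eq] at hφxy ⊢
    rw [sub_sub_sub_cancel_right, ← mul_sub, abs_mul, abs_of_pos (by positivity)]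
    push_cast at hφxy ⊢
    gcongr
    simpa using hφxy
  exact (hscale.const_min 1).const_max 0

lemma lipschitzWith_shell (hφ : LipschitzWith 1 φ) (j : ℕ) :
    LipschitzWith (2 ^ (j + 2)) (shell φ j) := by
  refine ((lipschitzWith_cutoff hφ (j + 1)).sub (lipschitzWith_cutoff hφ j)).weaken ?_
  calc (2 : ℝ≥0) ^ (j + 1) + 2 ^ j ≤ 2 ^ (j + 1) + 2 ^ (j + 1) := by gcongr <;> simp
    _ = 2 ^ (j + 2) := by ring

lemma abs_mul_sub_mul_le_of_lipschitzWith {α v : Y → ℝ} {K L : ℝ≥0} (hα : LipschitzWith K α)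
    (hα01 : ∀ x, α x ∈ Icc (0 : ℝ) 1) (hv : LipschitzWith L v) (hv1 : ∀ x, |v x| ≤ 1) (x y : Y) :
    |α x * v x - α y * v y| ≤ (K + L) * dist x y := by
  have hαxy : |α x - α y| ≤ K * dist x y := hα.dist_le_mul x y
  have hvxy : |v x - v y| ≤ L * dist x y := hv.dist_le_mul x y
  calc |α x * v x - α y * v y| = |(α x - α y) * v x + α y * (v x - v y)| := by ring_nf
    _ ≤ |α x - α y| * |v x| + |α y| * |v x - v y| := by
        simpa only [abs_mul] using abs_add_le ((α x - α y) * v x) (α y * (v x - v y))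
    _ ≤ |α x - α y| + |v x - v y| := by
        rw [abs_of_nonneg (hα01 y).1]
        exact add_le_add (mul_le_of_le_one_right (abs_nonneg _) (hv1 x))
          (mul_le_of_le_one_left (abs_nonneg _) (hα01 y).2)
    _ ≤ (K + L) * dist x y := by linarith

lemma locLipOn_dyadicGlue (hφ : IsExhaustionFunction φ W) {K : ℕ → ℝ≥0}
    (hF : ∀ j, LipschitzWith (K j) (F j)) (hF1 : ∀ j x, |F j x| ≤ 1) :
    LocLipOn (dyadicGlue φ F) W := by
  intro x hx
  have hφx := half_pos ((hφ.pos_iff x).2 hx)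
  obtain ⟨J, hJ⟩ := exists_two_le_two_pow_mul hφx
  have hball : ∀ y ∈ ball x (φ x / 2), 2 ≤ 2 ^ J * φ y := fun y hy => by
    have hle : φ x / 2 ≤ φ y := by
      have hyx : |φ y - φ x| ≤ dist y x := by
        simpa [Real.dist_eq] using hφ.lipschitz.dist_le_mul y x
      linarith [mem_ball.1 hy, neg_le_of_abs_le hyx]
    exact hJ.trans (by gcongr)
  refine ⟨φ x / 2, hφx, ∑ j ∈ Finset.range J, (2 ^ (j + 2) + K j),
    LipschitzOnWith.of_dist_le_mul fun y hy z hz => ?_⟩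
  rw [Real.dist_eq, dyadicGlue_eq_sum (hφ.nonneg y) (hball y hy.2),
    dyadicGlue_eq_sum (hφ.nonneg z) (hball z hz.2), ← Finset.sum_sub_distrib, NNReal.coe_sum,
    Finset.sum_mul]
  exact (Finset.abs_sum_le_sum_abs _ _).trans (Finset.sum_le_sum fun j _ =>
    abs_mul_sub_mul_le_of_lipschitzWith (lipschitzWith_shell hφ.lipschitz j)
      (fun x => shell_mem_Icc (hφ.nonneg x)) (hF j) (hF1 j) y z)

/-- Only finitely many terms of the glued sum are nonzero along a given curve in `W`. -/
lemma IsExhaustionFunction.exists_two_le_along (hφ : IsExhaustionFunction φ W) {γ : Curve Y}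
    (hγ : γ.In W) : ∃ J : ℕ, ∀ t ∈ Icc 0 γ.len, 2 ≤ 2 ^ J * φ (γ.toFun t) := by
  obtain ⟨t₀, ht₀, hmin⟩ := isCompact_Icc.exists_isMinOn ⟨0, γ.zero_mem⟩
    (hφ.lipschitz.continuous.comp_continuousOn γ.continuousOn)
  obtain ⟨J, hJ⟩ := exists_two_le_two_pow_mul ((hφ.pos_iff _).2 (hγ t₀ ht₀))
  refine ⟨J, fun t ht => hJ.trans ?_⟩
  gcongr
  exact hmin ht

end LipschitzCutoff

/-! ### Locally Lipschitz approximation in open sets -/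

section LocallyLipschitzApproximation

variable {μ : Measure X} {Cd CP lam ε : ℝ} {f φ : X → ℝ} {q : X → ℝ≥0∞} {W : Set X}

lemma IsExhaustionFunction.superlevel_subset {Y : Type*} [MetricSpace Y] {φ : Y → ℝ} {W : Set Y}
    (hφ : IsExhaustionFunction φ W) (j : ℕ) : {x | 1 ≤ 2 ^ j * φ x} ⊆ W := fun x hx =>
  (hφ.pos_iff x).1 (pos_of_mul_pos_right (zero_lt_one.trans_le hx) (by positivity))

lemma IsExhaustionFunction.exists_isWeakUpperGradientOn_cutoff_mul [ProperSpace X]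
    [IsLocallyFiniteMeasure μ] (hφ : IsExhaustionFunction φ W) (hW : IsOpen W)
    (hq : IsWeakUpperGradientOn μ f q W) (hfin : ∫⁻ x in W, q x ∂μ < ∞) (hf : ∀ x, |f x| ≤ 1)
    (j : ℕ) : ∃ q' : X → ℝ≥0∞,
      IsWeakUpperGradientOn μ (fun x => cutoff φ j x * f x) q' univ ∧ ∫⁻ x, q' x ∂μ < ∞ := by
  have hcont : Continuous φ := hφ.lipschitz.continuous
  set O := {x | 1 < 2 ^ j * φ x}
  have hO : IsOpen O := isOpen_lt continuous_const (by fun_prop)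
  have hOle : O ⊆ {x | 1 ≤ 2 ^ j * φ x} := fun x hx => (le_of_lt hx : 1 ≤ 2 ^ j * φ x)
  have hOW : closure O ⊆ W :=
    (closure_minimal hOle (isClosed_le continuous_const (by fun_prop))).trans
      (hφ.superlevel_subset j)
  have hOfin : μ O < ∞ := by
    refine ((hφ.isBounded_superlevel (1 / 2 ^ j) (by positivity)).subset fun x hx => ?_)
      |>.measure_lt_top
    exact (div_le_iff₀' (by positivity : (0 : ℝ) < 2 ^ j)).2 (hOle hx : 1 ≤ 2 ^ j * φ x)
  refine ⟨_, hq.mul_of_lipschitzWith hfin hf hW.measurableSet hO hOW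
    (lipschitzWith_cutoff hφ.lipschitz j) (cutoff_mem_Icc φ j)
    (fun x hx => cutoff_eq_zero (not_lt.1 hx)), ?_⟩
  rw [lintegral_indicator hO.measurableSet, lintegral_add_right _ measurable_const,
    setLIntegral_const]
  exact ENNReal.add_lt_top.2 ⟨(lintegral_mono_set (subset_closure.trans hOW)).trans_lt hfin,
    ENNReal.mul_lt_top ENNReal.coe_lt_top hOfin⟩

lemma IsExhaustionFunction.tendsto_cutoff_mul {Y : Type*} [MetricSpace Y] {φ : Y → ℝ} {W : Set Y}
    (hφ : IsExhaustionFunction φ W) {x : Y} (hx : x ∈ W) (c : ℝ) :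
    Tendsto (fun j => cutoff φ j x * c) atTop (𝓝 c) := by
  obtain ⟨J, hJ⟩ := exists_two_le_two_pow_mul ((hφ.pos_iff x).2 hx)
  refine tendsto_const_nhds.congr' ?_
  filter_upwards [eventually_ge_atTop J] with j hj
  rw [cutoff_eq_one (hJ.trans (two_pow_mul_le_two_pow_mul (hφ.nonneg x) hj)), one_mul]

lemma abs_cutoff_mul_le_one {Z : Type*} {φ f : Z → ℝ} {x : Z} (hf : |f x| ≤ 1) (j : ℕ) :
    |cutoff φ j x * f x| ≤ 1 := by
  rw [abs_mul, abs_of_nonneg (cutoff_mem_Icc φ j x).1]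
  exact mul_le_one₀ (cutoff_mem_Icc φ j x).2 (abs_nonneg _) hf

lemma Poincare.aemeasurable_restrict_of_isWeakUpperGradientOn [ProperSpace X]
    (hp : Poincare μ CP lam) (hd : Doubling μ Cd) (hW : IsOpen W)
    (hq : IsWeakUpperGradientOn μ f q W) (hfin : ∫⁻ x in W, q x ∂μ < ∞) (hf : ∀ x, |f x| ≤ 1) :
    AEMeasurable f (μ.restrict W) := by
  have := hd.isLocallyFiniteMeasure
  obtain ⟨φ, hφ⟩ := exists_isExhaustionFunction hW
  have hcut : ∀ j, AEMeasurable (fun x => cutoff φ j x * f x) μ := fun j =>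
    let ⟨_, hq', hfin'⟩ := hφ.exists_isWeakUpperGradientOn_cutoff_mul hW hq hfin hf j
    hp.aemeasurable_of_isWeakUpperGradientOn hd hq' hfin' fun x => abs_cutoff_mul_le_one (hf x) j
  exact aemeasurable_of_tendsto_metrizable_ae atTop (fun j => (hcut j).restrict)
    (ae_restrict_of_forall_mem hW.measurableSet fun x hx => hφ.tendsto_cutoff_mul hx _)

lemma sum_lintegral_le_lintegral_sum {α ι : Type*} [MeasurableSpace α] {ν : Measure α}
    (s : Finset ι) (a : ι → α → ℝ≥0∞) :
    ∑ i ∈ s, ∫⁻ x, a i x ∂ν ≤ ∫⁻ x, ∑ i ∈ s, a i x ∂ν := by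
  classical
  induction s using Finset.induction_on with
  | empty => simp
  | insert i s hi ih =>
    simp only [Finset.sum_insert hi]
    exact (add_le_add le_rfl ih).trans (le_lintegral_add _ _)

lemma isWeakUpperGradientOn_dyadicGlue {Y : Type*} [MetricSpace Y] [MeasurableSpace Y]
    {μ : Measure Y} {f φ : Y → ℝ} {q : Y → ℝ≥0∞} {W : Set Y} {F : ℕ → Y → ℝ} {P : ℕ → Y → ℝ≥0∞}
    (hφ : IsExhaustionFunction φ W) (hq : IsWeakUpperGradientOn μ f q W)
    (hP : ∀ j, IsWeakUpperGradientOn μ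
      (fun x => shell φ j x * (F j x - cutoff φ (j + 2) x * f x)) (P j) W) :
    IsWeakUpperGradientOn μ (dyadicGlue φ F) (fun x => q x + ∑' j, P j x) W := by
  refine isWeakUpperGradientOn_iff_ugIneq.2 ⟨hq.1.add (AEMeasurable.tsum fun j => (hP j).1), ?_⟩
  filter_upwards [(isWeakUpperGradientOn_iff_ugIneq.1 hq).2, eventually_countable_forall.2
    fun j => (isWeakUpperGradientOn_iff_ugIneq.1 (hP j)).2] with γ hqγ hPγ hγ
  obtain ⟨J, hJ⟩ := hφ.exists_two_le_along hγ
  set D : ℕ → Y → ℝ := fun j x => shell φ j x * (F j x - cutoff φ (j + 2) x * f x)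
  have hsub : ∀ t ∈ Icc 0 γ.len, dyadicGlue φ F (γ.toFun t) =
      f (γ.toFun t) + ∑ j ∈ Finset.range J, D j (γ.toFun t) := fun t ht => by
    rw [← dyadicGlue_sub_eq_sum (hφ.nonneg _) (hφ.le_one _) (hJ t ht), add_sub_cancel]
  calc ENNReal.ofReal |dyadicGlue φ F (γ.toFun 0) - dyadicGlue φ F (γ.toFun γ.len)|
      ≤ ENNReal.ofReal (|f (γ.toFun 0) - f (γ.toFun γ.len)| +
          ∑ j ∈ Finset.range J, |D j (γ.toFun 0) - D j (γ.toFun γ.len)|) := by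
        rw [hsub 0 γ.zero_mem, hsub _ γ.len_mem, add_sub_add_comm, ← Finset.sum_sub_distrib]
        exact ENNReal.ofReal_le_ofReal ((abs_add_le _ _).trans
          (add_le_add le_rfl (Finset.abs_sum_le_sum_abs _ _)))
    _ = ENNReal.ofReal |f (γ.toFun 0) - f (γ.toFun γ.len)| +
          ∑ j ∈ Finset.range J, ENNReal.ofReal |D j (γ.toFun 0) - D j (γ.toFun γ.len)| := by
        rw [ENNReal.ofReal_add (abs_nonneg _) (Finset.sum_nonneg fun _ _ => abs_nonneg _),
          ENNReal.ofReal_sum_of_nonneg fun _ _ => abs_nonneg _]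
    _ ≤ γ.integral q + ∑ j ∈ Finset.range J, γ.integral (P j) :=
        add_le_add (hqγ hγ) (Finset.sum_le_sum fun j _ => hPγ j hγ)
    _ ≤ γ.integral q + γ.integral fun x => ∑' j, P j x :=
        add_le_add le_rfl ((sum_lintegral_le_lintegral_sum _ _).trans
          (lintegral_mono fun t => ENNReal.sum_le_tsum _))
    _ ≤ γ.integral fun x => q x + ∑' j, P j x := le_lintegral_add _ _

lemma tsum_ofReal_div_two_pow_succ (hε : 0 ≤ ε) :
    ∑' j : ℕ, ENNReal.ofReal (ε / 2 ^ (j + 1)) = ENNReal.ofReal ε := by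
  have hsum : HasSum (fun j : ℕ => ε / 2 ^ (j + 1)) ε := by
    simpa only [pow_succ', div_div] using hasSum_geometric_two' ε
  rw [← ENNReal.ofReal_tsum_of_nonneg (fun _ => by positivity) hsum.summable, hsum.tsum_eq]

lemma isWeakUpperGradientOn_mul_of_isUpperGradient {α v : X → ℝ} {p : X → ℝ≥0∞} {K : ℝ≥0}
    (hp : IsUpperGradient v p) (hfin : ∫⁻ x, p x ∂μ < ∞) (hv : AEMeasurable v μ)
    (hα : LipschitzWith K α) (hα01 : ∀ x, α x ∈ Icc (0 : ℝ) 1) (A : Set X) :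
    IsWeakUpperGradientOn μ (fun x => α x * v x) (fun x => p x + K * ENNReal.ofReal |v x|) A := by
  refine isWeakUpperGradientOn_iff_ugIneq.2 ⟨hp.1.aemeasurable.add
    (hv.norm.ennreal_ofReal.const_mul _), ?_⟩
  filter_upwards [eventually_aeCurve_lintegrable hp.1.aemeasurable hfin] with γ hγ _
  exact ((isUGAlong_of_ugIneq_subcurve fun _ _ _ _ _ => hp.2 _).mul_of_lipschitzWith hγ hα
    hα01).ugIneq

/-- The tolerance `ε / (1 + 2 ^ (j + 2))` absorbs the Lipschitz constant of the shell. -/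
lemma Poincare.exists_lipschitzWith_sub_cutoff_mul [ProperSpace X] (hp : Poincare μ CP lam)
    (hd : Doubling μ Cd) (hφ : IsExhaustionFunction φ W) (hW : IsOpen W)
    (hq : IsWeakUpperGradientOn μ f q W) (hfin : ∫⁻ x in W, q x ∂μ < ∞) (hf : ∀ x, |f x| ≤ 1)
    (hε : 0 < ε) (j : ℕ) : ∃ (F : X → ℝ) (K : ℝ≥0) (P : X → ℝ≥0∞), LipschitzWith K F ∧
      (∀ x, |F x| ≤ 1) ∧ AEMeasurable (fun x => F x - cutoff φ (j + 2) x * f x) μ ∧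
      IsWeakUpperGradientOn μ (fun x => shell φ j x * (F x - cutoff φ (j + 2) x * f x)) P W ∧
      ∫⁻ x, P x ∂μ ≤ ENNReal.ofReal ε ∧
      ∫⁻ x, ENNReal.ofReal |F x - cutoff φ (j + 2) x * f x| ∂μ ≤ ENNReal.ofReal ε := by
  have := hd.isLocallyFiniteMeasure
  obtain ⟨q', hq', hfin'⟩ :=
    hφ.exists_isWeakUpperGradientOn_cutoff_mul hW hq hfin hf (j + 2)
  have hbound : ∀ x, |cutoff φ (j + 2) x * f x| ≤ 1 := fun x => abs_cutoff_mul_le_one (hf x) _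
  set δ : ℝ := ε / (1 + 2 ^ (j + 2))
  have hδ : 0 < δ := by positivity
  obtain ⟨F, K, p, hF, hF1, hpF, hpδ, hFδ⟩ :=
    hp.exists_lipschitzWith_of_isWeakUpperGradientOn hd hq' hfin' hbound hδ
  have hmeas : AEMeasurable (fun x => F x - cutoff φ (j + 2) x * f x) μ :=
    hF.continuous.measurable.aemeasurable.sub
      (hp.aemeasurable_of_isWeakUpperGradientOn hd hq' hfin' hbound)
  refine ⟨F, K, _, hF, hF1, hmeas, isWeakUpperGradientOn_mul_of_isUpperGradient hpF
    (hpδ.trans_lt ENNReal.ofReal_lt_top) hmeas (lipschitzWith_shell hφ.lipschitz j)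
    (fun x => shell_mem_Icc (hφ.nonneg x)) W, ?_, hFδ.trans (ENNReal.ofReal_le_ofReal ?_)⟩
  · rw [lintegral_add_left hpF.1, lintegral_const_mul' _ _ ENNReal.coe_ne_top]
    calc _ ≤ ENNReal.ofReal δ + (2 ^ (j + 2) : ℝ≥0) * ENNReal.ofReal δ := by gcongr
      _ = ENNReal.ofReal ((1 + 2 ^ (j + 2)) * δ) := by
          rw [add_mul, one_mul, ENNReal.ofReal_add hδ.le (by positivity),
            ENNReal.ofReal_mul (by positivity)]
          simp
      _ = ENNReal.ofReal ε := by rw [mul_div_cancel₀ _ (by positivity)]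
  · exact div_le_self hε.le (le_add_of_nonneg_right (by positivity))

lemma Poincare.exists_locLipOn_of_isWeakUpperGradientOn [ProperSpace X] (hp : Poincare μ CP lam)
    (hd : Doubling μ Cd) (hW : IsOpen W) (hq : IsWeakUpperGradientOn μ f q W)
    (hfin : ∫⁻ x in W, q x ∂μ < ∞) (hf : ∀ x, |f x| ≤ 1) (hε : 0 < ε) :
    ∃ (F : X → ℝ) (q' : X → ℝ≥0∞), LocLipOn F W ∧ IsWeakUpperGradientOn μ F q' W ∧
      ∫⁻ x in W, q' x ∂μ ≤ ∫⁻ x in W, q x ∂μ + ENNReal.ofReal ε ∧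
      ∫⁻ x in W, ENNReal.ofReal |F x - f x| ∂μ ≤ ENNReal.ofReal ε := by
  obtain ⟨φ, hφ⟩ := exists_isExhaustionFunction hW
  choose F K P hF hF1 hmeas hP hPε hFε using fun j : ℕ =>
    hp.exists_lipschitzWith_sub_cutoff_mul hd hφ hW hq hfin hf
      (show 0 < ε / 2 ^ (j + 1) by positivity) j
  refine ⟨dyadicGlue φ F, fun x => q x + ∑' j, P j x, locLipOn_dyadicGlue hφ hF hF1,
    isWeakUpperGradientOn_dyadicGlue hφ hq hP, ?_, ?_⟩
  · rw [lintegral_add_left' hq.1.restrict, lintegral_tsum fun j => (hP j).1.restrict,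
      ← tsum_ofReal_div_two_pow_succ hε.le]
    gcongr with j
    exact (setLIntegral_le_lintegral _ _).trans (hPε j)
  · calc ∫⁻ x in W, ENNReal.ofReal |dyadicGlue φ F x - f x| ∂μ
        ≤ ∫⁻ x in W, ∑' j, ENNReal.ofReal |F j x - cutoff φ (j + 2) x * f x| ∂μ :=
          setLIntegral_mono' hW.measurableSet fun x hx =>
            ofReal_abs_dyadicGlue_sub_le ((hφ.pos_iff x).2 hx) (hφ.le_one x) f
      _ = ∑' j, ∫⁻ x in W, ENNReal.ofReal |F j x - cutoff φ (j + 2) x * f x| ∂μ :=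
          lintegral_tsum fun j => (hmeas j).norm.ennreal_ofReal.restrict
      _ ≤ ∑' j : ℕ, ENNReal.ofReal (ε / 2 ^ (j + 1)) :=
          ENNReal.tsum_le_tsum fun j => (setLIntegral_le_lintegral _ _).trans (hFε j)
      _ = ENNReal.ofReal ε := tsum_ofReal_div_two_pow_succ hε.le

end LocallyLipschitzApproximation

/-! ### Capacitary sequences of quasiopen sets -/

section OpenCover

variable {Y : Type*} [MetricSpace Y] {γ : Curve Y} {u η : Y → ℝ} {g q : Y → ℝ≥0∞}

lemma ugIneq_of_isOpen_cover {ι : Type*} {O : ι → Set Y} (hO : ∀ i, IsOpen (O i))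
    (hγ : γ.In (⋃ i, O i))
    (h : ∀ i s t (hs : 0 ≤ s) (hst : s ≤ t) (ht : t ≤ γ.len),
      (γ.subcurve s t hs hst ht).In (O i) → UGIneq u g (γ.subcurve s t hs hst ht)) :
    UGIneq u g γ := by
  have hcont : Continuous fun t : Icc (0 : ℝ) γ.len => γ.toFun t := γ.continuousOn.domRestrict
  obtain ⟨τ, hτ0, hτmono, ⟨N, hN⟩, hτO⟩ := exists_monotone_Icc_subset_open_cover_Icc
    γ.len_nonneg (fun i => (hO i).preimage hcont)
    (fun t _ => by simpa only [mem_iUnion, mem_preimage] using hγ t t.2)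
  have hstep : ∀ n, UGBetween (fun t => u (γ.toFun t)) (fun t => g (γ.toFun t))
      (τ n) (τ (n + 1)) := fun n => by
    obtain ⟨i, hi⟩ := hτO n
    have hle : (τ n : ℝ) ≤ τ (n + 1) := hτmono n.le_succ
    refine (ugIneq_subcurve_iff (τ n).2.1 hle (τ (n + 1)).2.2).1 (h i _ _ _ _ _ fun s hs => ?_)
    have hs1 : τ n + s ≤ τ (n + 1) := le_sub_iff_add_le'.1 hs.2
    have hs0 : τ n ≤ τ n + s := le_add_of_nonneg_right hs.1
    exact hi (a := ⟨τ n + s, (τ n).2.1.trans hs0, hs1.trans (τ (n + 1)).2.2⟩) ⟨hs0, hs1⟩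
  have hchain : ∀ n, UGBetween (fun t => u (γ.toFun t)) (fun t => g (γ.toFun t))
      (τ 0) (τ n) := fun n => by
    induction n with
    | zero => simp [UGBetween]
    | succ n ih => exact ih.trans (hτmono n.zero_le) (hτmono n.le_succ) (hstep n)
  have hall := hchain N
  rwa [hτ0, hN N le_rfl] at hall

lemma IsUGAlong.ofReal_len_le (hη : IsUGAlong η q γ) (hη0 : ∀ x, 0 ≤ η x) {t₀ : ℝ}
    (ht₀ : t₀ ∈ Icc 0 γ.len) (hη1 : η (γ.toFun t₀) = 1) :
    ENNReal.ofReal γ.len ≤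
      γ.integral (fun x => ENNReal.ofReal (η x)) + γ.integral q * ENNReal.ofReal γ.len := by
  have hosc : ∀ t ∈ Icc 0 γ.len,
      ENNReal.ofReal |η (γ.toFun t₀) - η (γ.toFun t)| ≤ γ.integral q := fun t ht => by
    rcases le_total t₀ t with hle | hle
    · exact le_trans (hη t₀ t ht₀.1 hle ht.2) (lintegral_mono_set (Icc_subset_Icc ht₀.1 ht.2))
    · rw [abs_sub_comm]
      exact le_trans (hη t t₀ ht.1 hle ht₀.2) (lintegral_mono_set (Icc_subset_Icc ht.1 ht₀.2))
  have hone : ∀ t ∈ Icc 0 γ.len, 1 ≤ ENNReal.ofReal (η (γ.toFun t)) + γ.integral q := fun t ht => by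
    refine le_trans ?_ (add_le_add le_rfl (hosc t ht))
    rw [← ENNReal.ofReal_add (hη0 _) (abs_nonneg _), ENNReal.one_le_ofReal, hη1]
    linarith [le_abs_self (1 - η (γ.toFun t))]
  calc ENNReal.ofReal γ.len = ∫⁻ _ in Icc 0 γ.len, 1 := by simp
    _ ≤ ∫⁻ t in Icc 0 γ.len, (ENNReal.ofReal (η (γ.toFun t)) + γ.integral q) :=
        setLIntegral_mono' measurableSet_Icc hone
    _ = _ := by
        rw [lintegral_add_right _ measurable_const, setLIntegral_const, Real.volume_Icc, sub_zero]
        rfl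

end OpenCover

section Capacity

variable {μ : Measure X} {Cd CP lam : ℝ} {U : Set X} {G : ℕ → Set X} {η : ℕ → X → ℝ}
  {q : ℕ → X → ℝ≥0∞}

lemma eventually_aeCurve_tendsto_integral_zero {g : ℕ → X → ℝ≥0∞}
    (hg : ∀ n, AEMeasurable (g n) μ) (hfin : ∑' n, ∫⁻ x, g n x ∂μ ≠ ∞) :
    ∀ᶠ γ in aeCurve μ, Tendsto (fun n => γ.integral (g n)) atTop (𝓝 0) := by
  filter_upwards [eventually_aeCurve_lintegrable (AEMeasurable.tsum hg)
    ((lintegral_tsum hg).trans_lt hfin.lt_top)] with γ hγ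
  refine ENNReal.tendsto_atTop_zero_of_tsum_ne_top (ne_top_of_le_ne_top hγ.lintegral_lt_top.ne ?_)
  exact ENNReal.tsum_le_of_sum_range_le fun n => (sum_lintegral_le_lintegral_sum _ _).trans
    (lintegral_mono fun t => ENNReal.sum_le_tsum _)

/-- Data witnessing that `U` is `1`-quasiopen at the scales `2⁻¹ ^ m`: open sets `G m` with
`U ∪ G m` open, and functions `η m : X → [0, 1]` equal to `1` on `G m` whose `L¹` norm and whose
weak upper gradients `q m` are at most `2⁻¹ ^ m`. -/
structure IsCapacitarySequence (μ : Measure X) (U : Set X) (G : ℕ → Set X) (η : ℕ → X → ℝ)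
    (q : ℕ → X → ℝ≥0∞) : Prop where
  isOpen : ∀ m, IsOpen (G m)
  isOpen_union : ∀ m, IsOpen (U ∪ G m)
  mem_Icc : ∀ m x, η m x ∈ Icc (0 : ℝ) 1
  eq_one : ∀ m, ∀ x ∈ G m, η m x = 1
  aemeasurable : ∀ m, AEMeasurable (η m) μ
  isWeakUpperGradientOn : ∀ m, IsWeakUpperGradientOn μ (η m) (q m) univ
  lintegral_le : ∀ m, ∫⁻ x, ENNReal.ofReal (η m x) ∂μ ≤ 2⁻¹ ^ m
  lintegral_gradient_le : ∀ m, ∫⁻ x, q m x ∂μ ≤ 2⁻¹ ^ m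

lemma exists_lt_isWeakUpperGradientOn_of_capa1_lt {Y : Type*} [MetricSpace Y] [MeasurableSpace Y]
    {μ : Measure Y} {A : Set Y} {c : ℝ≥0∞} (hA : capa1 μ A < c) :
    ∃ (u : Y → ℝ) (q : Y → ℝ≥0∞), (∀ x ∈ A, 1 ≤ u x) ∧ IsWeakUpperGradientOn μ u q univ ∧
      ∫⁻ x, ENNReal.ofReal |u x| ∂μ ≤ c ∧ ∫⁻ x, q x ∂μ ≤ c := by
  simp only [capa1, iInf_lt_iff] at hA
  obtain ⟨u, -, hu1, huc⟩ := hA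
  simp only [NNorm, Measure.restrict_univ] at huc
  have hgrad := lt_tsub_iff_left.2 huc
  simp only [iInf_lt_iff] at hgrad
  obtain ⟨q, hq, hqc⟩ := hgrad
  exact ⟨u, q, hu1, hq, (le_self_add.trans_lt huc).le, hqc.le.trans tsub_le_self⟩

lemma Poincare.exists_capacitaryFunction [ProperSpace X] (hp : Poincare μ CP lam)
    (hd : Doubling μ Cd) {A : Set X} {c : ℝ≥0∞} (hc : c ≠ ∞) (hA : capa1 μ A < c) :
    ∃ (η : X → ℝ) (q : X → ℝ≥0∞), (∀ x, η x ∈ Icc (0 : ℝ) 1) ∧ (∀ x ∈ A, η x = 1) ∧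
      AEMeasurable η μ ∧ IsWeakUpperGradientOn μ η q univ ∧
      ∫⁻ x, ENNReal.ofReal (η x) ∂μ ≤ c ∧ ∫⁻ x, q x ∂μ ≤ c := by
  obtain ⟨u, q, hu1, hq, huc, hqc⟩ := exists_lt_isWeakUpperGradientOn_of_capa1_lt hA
  set ψ : ℝ → ℝ := fun a => max 0 (min 1 a)
  have hψ : LipschitzWith 1 ψ := (LipschitzWith.id.const_min 1).const_max 0
  have hψ01 : ∀ a, ψ a ∈ Icc (0 : ℝ) 1 := fun a =>
    ⟨le_max_left _ _, max_le zero_le_one (min_le_left _ _)⟩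
  have hψq := hq.comp_lipschitzWith_one hψ
  refine ⟨fun x => ψ (u x), q, fun x => hψ01 _, fun x hx => by simp [ψ, hu1 x hx], ?_, hψq, ?_, hqc⟩
  · exact hp.aemeasurable_of_isWeakUpperGradientOn hd hψq (hqc.trans_lt hc.lt_top) fun x => by
      rw [abs_of_nonneg (hψ01 _).1]; exact (hψ01 _).2
  · exact (lintegral_mono fun x => ENNReal.ofReal_le_ofReal
      (max_le (abs_nonneg _) ((min_le_right _ _).trans (le_abs_self _)))).trans huc

lemma QuasiOpen.exists_isCapacitarySequence [ProperSpace X] (hU : QuasiOpen μ U)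
    (hp : Poincare μ CP lam) (hd : Doubling μ Cd) : ∃ G η q, IsCapacitarySequence μ U G η q := by
  have hscale : ∀ m : ℕ, ENNReal.ofReal (2⁻¹ ^ m) = 2⁻¹ ^ m := fun m => by
    rw [ENNReal.ofReal_pow (by positivity), ENNReal.ofReal_inv_of_pos two_pos,
      ENNReal.ofReal_ofNat]
  choose G hG hcap hUG using fun m : ℕ => hU (2⁻¹ ^ m) (by positivity)
  choose η q hη01 hη1 hηm hq hηle hqle using fun m =>
    hp.exists_capacitaryFunction hd ENNReal.ofReal_ne_top (hcap m)
  exact ⟨G, η, q, hG, hUG, hη01, hη1, hηm, hq, fun m => hscale m ▸ hηle m,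
    fun m => hscale m ▸ hqle m⟩

lemma tendsto_two_inv_pow : Tendsto (fun m : ℕ => (2⁻¹ : ℝ≥0∞) ^ m) atTop (𝓝 0) :=
  ENNReal.tendsto_pow_atTop_nhds_zero_of_lt_one ENNReal.one_half_lt_one

lemma tsum_ne_top_of_le_two_inv_pow {a : ℕ → ℝ≥0∞} (ha : ∀ m, a m ≤ 2⁻¹ ^ m) :
    ∑' m, a m ≠ ∞ :=
  ne_top_of_le_ne_top (by simp [ENNReal.tsum_geometric]) (ENNReal.tsum_le_tsum ha)

namespace IsCapacitarySequence

lemma measure_le (h : IsCapacitarySequence μ U G η q) (m : ℕ) : μ (G m) ≤ 2⁻¹ ^ m := by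
  refine le_trans ?_ (h.lintegral_le m)
  rw [← lintegral_indicator_one (h.isOpen m).measurableSet]
  refine lintegral_mono (indicator_le fun x hx => ?_)
  simp [h.eq_one m x hx]

lemma nullMeasurableSet (h : IsCapacitarySequence μ U G η q) : NullMeasurableSet U μ := by
  have hnull : μ (⋂ m, G m) = 0 := le_antisymm (ge_of_tendsto' tendsto_two_inv_pow fun m =>
    (measure_mono (iInter_subset _ m)).trans (h.measure_le m)) bot_le
  have hmeas : MeasurableSet (⋂ m, U ∪ G m) := .iInter fun m => (h.isOpen_union m).measurableSet
  refine hmeas.nullMeasurableSet.congr ?_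
  rw [← union_iInter]
  exact union_ae_eq_left_of_ae_eq_empty (ae_eq_empty.2 hnull)

lemma eventually_exists_in_compl (h : IsCapacitarySequence μ U G η q) :
    ∀ᶠ γ in aeCurve μ, 0 < γ.len → ∃ m, γ.In (G m)ᶜ := by
  filter_upwards [
    eventually_aeCurve_tendsto_integral_zero (fun m => (h.aemeasurable m).ennreal_ofReal)
      (tsum_ne_top_of_le_two_inv_pow h.lintegral_le),
    eventually_aeCurve_tendsto_integral_zero (fun m => (h.isWeakUpperGradientOn m).1)
      (tsum_ne_top_of_le_two_inv_pow h.lintegral_gradient_le),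
    eventually_countable_forall.2 fun m => (h.isWeakUpperGradientOn m).eventually_isUGAlong]
    with γ hηγ hqγ hug hlen
  by_contra! hmeets
  have hle : ∀ m, ENNReal.ofReal γ.len ≤ γ.integral (fun x => ENNReal.ofReal (η m x)) +
      γ.integral (q m) * ENNReal.ofReal γ.len := fun m => by
    obtain ⟨t, ht, htG⟩ : ∃ t ∈ Icc 0 γ.len, γ.toFun t ∈ G m := by
      simpa only [Curve.In, not_forall, exists_prop, notMem_compl_iff] using hmeets m
    exact (hug m fun _ _ => mem_univ _).ofReal_len_le (fun x => (h.mem_Icc m x).1) ht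
      (h.eq_one m _ htG)
  have hlim := hηγ.add (ENNReal.Tendsto.mul_const (b := ENNReal.ofReal γ.len) hqγ
    (Or.inr ENNReal.ofReal_ne_top))
  rw [zero_mul, add_zero] at hlim
  exact (ENNReal.ofReal_pos.2 hlen).not_ge (ge_of_tendsto' hlim hle)

/-- A curve avoiding some `G m` and lying in `U ∪ G₀` is covered by the relatively open sets where
it lies in `U` and where it lies in `G₀`. -/
lemma isWeakUpperGradientOn_of_subset_union (h : IsCapacitarySequence μ U G η q) {f : X → ℝ}
    {Q : X → ℝ≥0∞} {G₀ W : Set X} (hU : IsWeakUpperGradientOn μ f Q U)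
    (hG₀ : IsWeakUpperGradientOn μ f Q G₀) (hG₀o : IsOpen G₀) (hW : W ⊆ U ∪ G₀) :
    IsWeakUpperGradientOn μ f Q W := by
  refine isWeakUpperGradientOn_iff_ugIneq.2 ⟨hU.1, ?_⟩
  filter_upwards [h.eventually_exists_in_compl,
    eventually_aeCurve_subcurve (isWeakUpperGradientOn_iff_ugIneq.1 hU).2,
    eventually_aeCurve_subcurve (isWeakUpperGradientOn_iff_ugIneq.1 hG₀).2]
    with γ hmiss hUγ hGγ hγ
  rcases γ.len_nonneg.eq_or_lt with hlen | hlen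
  · simp [UGIneq, ← hlen]
  obtain ⟨m, hm⟩ := hmiss hlen
  refine ugIneq_of_isOpen_cover (O := fun b => cond b (U ∪ G m) G₀)
    (Bool.forall_bool.2 ⟨hG₀o, h.isOpen_union m⟩) ?_
    (Bool.forall_bool.2 ⟨hGγ, fun s t hs hst ht hsub => ?_⟩)
  · rw [← union_eq_iUnion]
    exact hγ.mono (hW.trans (union_subset_union_left _ subset_union_left))
  · exact hUγ s t hs hst ht fun τ hτ =>
      (hsub τ hτ).resolve_right (hm.subcurve hs hst ht τ hτ)

end IsCapacitarySequence

end Capacity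

/-! ### Convex combinations -/

section Blend

lemma IsWeakUpperGradientOn.mono_on {Y : Type*} [MetricSpace Y] [MeasurableSpace Y]
    {μ : Measure Y} {f : Y → ℝ} {g g' : Y → ℝ≥0∞} {A : Set Y} (hg : IsWeakUpperGradientOn μ f g A)
    (hg' : AEMeasurable g' μ) (hle : ∀ x ∈ A, g x ≤ g' x) : IsWeakUpperGradientOn μ f g' A :=
  ⟨hg', hg.2.mono fun _ hγ => ⟨hγ.1, fun hug => hγ.2 (le_trans hug
    (setLIntegral_mono' measurableSet_Icc fun t ht => hle _ (hγ.1 t ht)))⟩⟩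

lemma IsWeakUpperGradientOn.congr_on {Y : Type*} [MetricSpace Y] [MeasurableSpace Y]
    {μ : Measure Y} {f f' : Y → ℝ} {g : Y → ℝ≥0∞} {A : Set Y} (hg : IsWeakUpperGradientOn μ f g A)
    (hff' : EqOn f f' A) : IsWeakUpperGradientOn μ f' g A := by
  refine ⟨hg.1, hg.2.mono fun γ hγ => ⟨hγ.1, fun hug => hγ.2 ?_⟩⟩
  rwa [UGIneq, hff' (hγ.1 0 γ.zero_mem), hff' (hγ.1 γ.len γ.len_mem)] at hug

lemma isWeakUpperGradientOn_of_lipschitzOnWith {Y : Type*} [MetricSpace Y] [MeasurableSpace Y]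
    (μ : Measure Y) {f : Y → ℝ} {A : Set Y} {K : ℝ≥0} (hf : LipschitzOnWith K f A) :
    IsWeakUpperGradientOn μ f (fun _ => K) A :=
  isWeakUpperGradientOn_iff_ugIneq.2
    ⟨aemeasurable_const, .of_forall fun _ hγ => (isUGAlong_of_lipschitzOnWith hf hγ).ugIneq⟩

/-- The pointwise convex combination `(1 - η) v + η w`, which replaces `v` by `w` where
`η = 1`. -/
def blend {Z : Type*} (η v w : Z → ℝ) (x : Z) : ℝ := (1 - η x) * v x + η x * w x

section Pointwise

variable {Z : Type*} {η v w : Z → ℝ} {x : Z}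

lemma blend_eq_right (hη : η x = 1) : blend η v w x = w x := by
  simp [blend, hη]

lemma abs_blend_sub_le (hη : η x ∈ Icc (0 : ℝ) 1) (c : ℝ) :
    |blend η v w x - c| ≤ |v x - c| + η x * |w x - c| := by
  have hη' : 0 ≤ 1 - η x := sub_nonneg.2 hη.2
  calc |blend η v w x - c| = |(1 - η x) * (v x - c) + η x * (w x - c)| := by
        rw [blend]; ring_nf
    _ ≤ (1 - η x) * |v x - c| + η x * |w x - c| := by
        refine (abs_add_le _ _).trans_eq ?_
        rw [abs_mul, abs_mul, abs_of_nonneg hη', abs_of_nonneg hη.1]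
    _ ≤ |v x - c| + η x * |w x - c| :=
        add_le_add (mul_le_of_le_one_left (abs_nonneg _) (sub_le_self _ hη.1)) le_rfl

lemma abs_blend_le_one (hη : η x ∈ Icc (0 : ℝ) 1) (hv : |v x| ≤ 1) (hw : |w x| ≤ 1) :
    |blend η v w x| ≤ 1 := by
  have hη' : 0 ≤ 1 - η x := sub_nonneg.2 hη.2
  calc |blend η v w x| ≤ (1 - η x) * |v x| + η x * |w x| := by
        refine (abs_add_le _ _).trans_eq ?_
        rw [abs_mul, abs_mul, abs_of_nonneg hη', abs_of_nonneg hη.1]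
    _ ≤ (1 - η x) * 1 + η x * 1 := by gcongr; exact hη.1
    _ = 1 := by ring

end Pointwise

lemma IsWeakUpperGradientOn.blend {μ : Measure X} {v w η : X → ℝ} {a b c : X → ℝ≥0∞} {A : Set X}
    {M : ℝ≥0∞} (hA : NullMeasurableSet A μ) (hv : IsWeakUpperGradientOn μ v a A)
    (hw : IsWeakUpperGradientOn μ w b A) (hη : IsWeakUpperGradientOn μ η c A)
    (ha : ∫⁻ x in A, a x ∂μ < ∞) (hb : ∫⁻ x in A, b x ∂μ < ∞) (hc : ∫⁻ x in A, c x ∂μ < ∞)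
    (hη01 : ∀ x, η x ∈ Icc (0 : ℝ) 1) (hηm : AEMeasurable η μ)
    (hvw : ∀ x, ENNReal.ofReal |v x - w x| ≤ M) :
    IsWeakUpperGradientOn μ (blend η v w)
      (fun x => ENNReal.ofReal (1 - η x) * a x + M * c x + ENNReal.ofReal (η x) * b x) A := by
  refine isWeakUpperGradientOn_iff_isUGAlong.2 ⟨?_, ?_⟩
  · exact (((aemeasurable_const.sub hηm).ennreal_ofReal.mul hv.1).add (hη.1.const_mul M)).add
      (hηm.ennreal_ofReal.mul hw.1)
  filter_upwards [hv.eventually_isUGAlong, hw.eventually_isUGAlong, hη.eventually_isUGAlong,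
    eventually_aeCurve_lintegrable_of_in hv.1 hA ha,
    eventually_aeCurve_lintegrable_of_in hw.1 hA hb,
    eventually_aeCurve_lintegrable_of_in hη.1 hA hc] with γ hvγ hwγ hηγ haγ hbγ hcγ hγ
  refine (IsUGOnIcc.convexComb γ.len_nonneg (hvγ hγ) (hwγ hγ) (hηγ hγ) (haγ hγ) (hbγ hγ) (hcγ hγ)
    fun t _ => hη01 _).mono (.of_forall fun t => ?_)
  exact add_le_add (add_le_add le_rfl (mul_le_mul_left (hvw _) _)) le_rfl

end Blend

/-! ### Convergence in `L¹_loc` -/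

section L1LocConv

lemma L1LocConv.mono_set {Y : Type*} [MetricSpace Y] [MeasurableSpace Y] {μ : Measure Y}
    {A B : Set Y} {v : ℕ → Y → ℝ} {u : Y → ℝ} (h : L1LocConv μ A v u) (hBA : B ⊆ A) :
    L1LocConv μ B v u := fun x hx =>
  let ⟨r, hr, hlim⟩ := h x (hBA hx)
  ⟨r, hr, tendsto_of_tendsto_of_tendsto_of_le_of_le tendsto_const_nhds hlim (fun _ => bot_le)
    fun _ => lintegral_mono_set (inter_subset_inter_left _ hBA)⟩

lemma L1LocConv.comp_tendsto {Y : Type*} [MetricSpace Y] [MeasurableSpace Y] {μ : Measure Y}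
    {A : Set Y} {v : ℕ → Y → ℝ} {u : Y → ℝ} (h : L1LocConv μ A v u) {φ : ℕ → ℕ}
    (hφ : Tendsto φ atTop atTop) : L1LocConv μ A (fun i => v (φ i)) u := fun x hx =>
  let ⟨r, hr, hlim⟩ := h x hx
  ⟨r, hr, hlim.comp hφ⟩

lemma l1LocConv_zero_of_tendsto {Y : Type*} [MetricSpace Y] [MeasurableSpace Y] {μ : Measure Y}
    {A : Set Y} {e : ℕ → Y → ℝ}
    (he : Tendsto (fun i => ∫⁻ x in A, ENNReal.ofReal |e i x| ∂μ) atTop (𝓝 0)) :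
    L1LocConv μ A e 0 := fun _ _ =>
  ⟨1, one_pos, tendsto_of_tendsto_of_tendsto_of_le_of_le tendsto_const_nhds he (fun _ => bot_le)
    fun _ => by simpa using lintegral_mono_set inter_subset_left⟩

variable {μ : Measure X} {A : Set X} {f v w e : ℕ → X → ℝ} {u : X → ℝ}

lemma L1LocConv.of_le_add (hv : L1LocConv μ A v u) (hA : NullMeasurableSet A μ)
    (he : L1LocConv μ A e 0) (hem : ∀ i, AEMeasurable (e i) (μ.restrict A))
    (hle : ∀ i, ∀ x ∈ A, |f i x - u x| ≤ |v i x - u x| + |e i x|) : L1LocConv μ A f u := by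
  intro x hx
  obtain ⟨r, hr, hlimv⟩ := hv x hx
  obtain ⟨s, hs, hlime⟩ := he x hx
  set B := A ∩ ball x (min r s)
  have hB : NullMeasurableSet B μ := hA.inter measurableSet_ball.nullMeasurableSet
  have hlim := hlimv.add hlime
  rw [add_zero] at hlim
  refine ⟨min r s, lt_min hr hs, tendsto_of_tendsto_of_tendsto_of_le_of_le tendsto_const_nhds hlim
    (fun _ => bot_le) fun i => ?_⟩
  calc ∫⁻ y in B, ENNReal.ofReal |f i y - u y| ∂μ
      ≤ ∫⁻ y in B, (ENNReal.ofReal |v i y - u y| + ENNReal.ofReal |e i y - 0|) ∂μ := by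
        refine lintegral_mono_ae ((ae_restrict_iff'₀ hB).2 (.of_forall fun y hy => ?_))
        rw [sub_zero, ← ENNReal.ofReal_add (abs_nonneg _) (abs_nonneg _)]
        exact ENNReal.ofReal_le_ofReal (hle i y hy.1)
    _ = ∫⁻ y in B, ENNReal.ofReal |v i y - u y| ∂μ + ∫⁻ y in B, ENNReal.ofReal |e i y - 0| ∂μ :=
        lintegral_add_right' _ ((((hem i).sub_const 0).norm.mono_measure
          (Measure.restrict_mono inter_subset_left le_rfl)).ennreal_ofReal)
    _ ≤ _ := add_le_add
        (lintegral_mono_set (inter_subset_inter_right _ (ball_subset_ball (min_le_left _ _))))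
        (lintegral_mono_set (inter_subset_inter_right _ (ball_subset_ball (min_le_right _ _))))

lemma L1LocConv.clamp (hv : L1LocConv μ A v u) (hA : NullMeasurableSet A μ)
    (hu : ∀ x ∈ A, |u x| ≤ 1) : L1LocConv μ A (fun i x => clamp (v i x)) u := by
  refine hv.of_le_add hA (e := 0) (l1LocConv_zero_of_tendsto (by simp))
    (fun _ => aemeasurable_const) fun i x hx => ?_
  simpa only [clamp_eq_self (hu x hx), Real.dist_eq, NNReal.coe_one, one_mul, Pi.zero_apply,
    abs_zero, add_zero] using lipschitzWith_clamp.dist_le_mul (v i x) (u x)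

lemma L1LocConv.blend (hv : L1LocConv μ A v u) (hw : L1LocConv μ A w u)
    (hA : NullMeasurableSet A μ) (hwm : ∀ i, AEMeasurable (w i) (μ.restrict A))
    (hum : AEMeasurable u (μ.restrict A)) {η : X → ℝ} (hη : ∀ x, η x ∈ Icc (0 : ℝ) 1) :
    L1LocConv μ A (fun i => blend η (v i) (w i)) u := by
  refine hv.of_le_add hA (e := fun i x => w i x - u x) ?_ (fun i => (hwm i).sub hum) fun i x _ => ?_
  · simpa only [L1LocConv, Pi.zero_apply, sub_zero] using hw
  · exact (abs_blend_sub_le (hη x) _).trans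
      (add_le_add le_rfl (mul_le_of_le_one_left (abs_nonneg _) (hη x).2))

/-- Near points of `U`, split a ball into its intersections with `U` and with `G ∩ Ω`. -/
lemma L1LocConv.union_inter_of_eqOn {U G Ω : Set X} (hf : L1LocConv μ U f u)
    (hw : L1LocConv μ Ω w u) (hG : IsOpen G) (hΩ : IsOpen Ω)
    (hfw : ∀ i, EqOn (f i) (w i) G) : L1LocConv μ ((U ∪ G) ∩ Ω) f u := by
  have hGΩ : ∀ x s i, ∫⁻ y in (G ∩ Ω) ∩ ball x s, ENNReal.ofReal |f i y - u y| ∂μ ≤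
      ∫⁻ y in Ω ∩ ball x s, ENNReal.ofReal |w i y - u y| ∂μ := fun x s i => by
    rw [setLIntegral_congr_fun ((hG.inter hΩ).inter isOpen_ball).measurableSet fun y hy =>
      by rw [hfw i hy.1.1]]
    exact lintegral_mono_set (inter_subset_inter_left _ inter_subset_right)
  rintro x ⟨hxU | hxG, hxΩ⟩ <;> obtain ⟨s, hs, hlimw⟩ := hw x hxΩ
  · obtain ⟨r, hr, hlimf⟩ := hf x hxU
    have hlim := hlimf.add hlimw
    rw [add_zero] at hlim
    refine ⟨min r s, lt_min hr hs, tendsto_of_tendsto_of_tendsto_of_le_of_le tendsto_const_nhds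
      hlim (fun _ => bot_le) fun i => ?_⟩
    refine (lintegral_mono_set ?_).trans ((lintegral_union_le _ _ _).trans
      (add_le_add le_rfl (hGΩ x s i)))
    rintro y ⟨⟨hyU | hyG, hyΩ⟩, hy⟩
    · exact .inl ⟨hyU, ball_subset_ball (min_le_left _ _) hy⟩
    · exact .inr ⟨⟨hyG, hyΩ⟩, ball_subset_ball (min_le_right _ _) hy⟩
  · obtain ⟨r, hr, hrG⟩ := Metric.isOpen_iff.1 hG x hxG
    refine ⟨min r s, lt_min hr hs, tendsto_of_tendsto_of_tendsto_of_le_of_le tendsto_const_nhds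
      hlimw (fun _ => bot_le) fun i => (lintegral_mono_set fun y hy => ?_).trans (hGΩ x s i)⟩
    exact ⟨⟨hrG (ball_subset_ball (min_le_left _ _) hy.2), hy.1.2⟩,
      ball_subset_ball (min_le_right _ _) hy.2⟩

end L1LocConv

/-! ### Total variation in open sets and in quasiopen sets -/

section TotalVariation

lemma LocLipOn.continuousOn {Y : Type*} [MetricSpace Y] {f : Y → ℝ} {W : Set Y}
    (hf : LocLipOn f W) : ContinuousOn f W := fun x hx =>
  let ⟨_, hr, _, hK⟩ := hf x hx
  (hK.continuousOn x ⟨hx, mem_ball_self hr⟩).mono_of_mem_nhdsWithin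
    (inter_mem self_mem_nhdsWithin (mem_nhdsWithin_of_mem_nhds (ball_mem_nhds x hr)))

/-- Functions `f i` with values in `[-1, 1]` that converge to `u` in `L¹_loc(A)` and have weak upper
gradients `g i` in `A` of mass at most `c`. In an open set this bounds the total variation of `u`
by `c`; unlike in the definition of `tvOpen`, no continuity and no minimality is required. -/
structure IsBoundedApproximation {Y : Type*} [MetricSpace Y] [MeasurableSpace Y] (μ : Measure Y)
    (A : Set Y) (u : Y → ℝ) (f : ℕ → Y → ℝ) (g : ℕ → Y → ℝ≥0∞) (c : ℝ≥0∞) : Prop where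
  abs_le_one : ∀ i x, |f i x| ≤ 1
  isWeakUpperGradientOn : ∀ i, IsWeakUpperGradientOn μ (f i) (g i) A
  lintegral_le : ∀ i, ∫⁻ x in A, g i x ∂μ ≤ c
  l1LocConv : L1LocConv μ A f u

lemma IsBoundedApproximation.comp_tendsto {Y : Type*} [MetricSpace Y] [MeasurableSpace Y]
    {μ : Measure Y} {A : Set Y} {u : Y → ℝ} {f : ℕ → Y → ℝ} {g : ℕ → Y → ℝ≥0∞} {c : ℝ≥0∞}
    (h : IsBoundedApproximation μ A u f g c) {φ : ℕ → ℕ} (hφ : Tendsto φ atTop atTop) :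
    IsBoundedApproximation μ A u (fun i => f (φ i)) (fun i => g (φ i)) c where
  abs_le_one i := h.abs_le_one (φ i)
  isWeakUpperGradientOn i := h.isWeakUpperGradientOn (φ i)
  lintegral_le i := h.lintegral_le (φ i)
  l1LocConv := h.l1LocConv.comp_tendsto hφ

variable {μ : Measure X} {Cd CP lam : ℝ} {u : X → ℝ} {c : ℝ≥0∞} {A W Ω : Set X}
  {f v : ℕ → X → ℝ} {g Q : ℕ → X → ℝ≥0∞}

lemma exists_isBoundedApproximation_of_liminf_lt (hA : NullMeasurableSet A μ)
    (hu : ∀ x ∈ A, |u x| ≤ 1) (hg : ∀ i, IsWeakUpperGradientOn μ (v i) (g i) A)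
    (hv : L1LocConv μ A v u) (hc : liminf (fun i => ∫⁻ x in A, g i x ∂μ) atTop < c) :
    ∃ f g', IsBoundedApproximation μ A u f g' c := by
  obtain ⟨φ, hφ, hφc⟩ := extraction_of_frequently_atTop
    (frequently_lt_of_liminf_lt (by isBoundedDefault) hc)
  exact ⟨fun i x => clamp (v (φ i) x), fun i => g (φ i),
    { abs_le_one := fun i x => abs_clamp_le _
      isWeakUpperGradientOn := fun i => (hg (φ i)).comp_lipschitzWith_one lipschitzWith_clamp
      lintegral_le := fun i => (hφc i).le
      l1LocConv := (hv.clamp hA hu).comp_tendsto hφ.tendsto_atTop }⟩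

lemma exists_isBoundedApproximation_of_tvOpen_lt (hΩ : IsOpen Ω) (hu : ∀ x ∈ Ω, |u x| ≤ 1)
    (hc : tvOpen μ Ω u < c) : ∃ w g, IsBoundedApproximation μ Ω u w g c := by
  simp only [tvOpen, iInf_lt_iff] at hc
  obtain ⟨w, g, -, hg, hw, hlt⟩ := hc
  exact exists_isBoundedApproximation_of_liminf_lt hΩ.measurableSet.nullMeasurableSet hu
    (fun i => (hg i).1) hw hlt

lemma IsBoundedApproximation.aemeasurable [ProperSpace X] (h : IsBoundedApproximation μ W u f Q c)
    (hc : c ≠ ∞) (hp : Poincare μ CP lam) (hd : Doubling μ Cd) (hW : IsOpen W) (i : ℕ) :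
    AEMeasurable (f i) (μ.restrict W) :=
  hp.aemeasurable_restrict_of_isWeakUpperGradientOn hd hW (h.isWeakUpperGradientOn i)
    ((h.lintegral_le i).trans_lt hc.lt_top) (h.abs_le_one i)

lemma tendsto_ofReal_div_add_one (ε : ℝ) :
    Tendsto (fun i : ℕ => ENNReal.ofReal (ε / (i + 1))) atTop (𝓝 0) := by
  simpa only [Function.comp_def, Nat.cast_add, Nat.cast_one, ENNReal.ofReal_zero] using
    ENNReal.tendsto_ofReal
      ((tendsto_const_div_atTop_nhds_zero_nat ε).comp (tendsto_add_atTop_nat 1))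

lemma IsBoundedApproximation.tvOpen_le [ProperSpace X] (h : IsBoundedApproximation μ W u f Q c)
    (hc : c ≠ ∞) (hp : Poincare μ CP lam) (hd : Doubling μ Cd) (hW : IsOpen W) :
    tvOpen μ W u ≤ c := by
  have := hd.isLocallyFiniteMeasure
  refine ENNReal.le_of_forall_pos_le_add fun ε hε _ => ?_
  choose F q' hF hq' hq'le hFf using fun i : ℕ => hp.exists_locLipOn_of_isWeakUpperGradientOn hd hW
    (h.isWeakUpperGradientOn i) ((h.lintegral_le i).trans_lt hc.lt_top) (h.abs_le_one i)
    (by positivity : 0 < (ε : ℝ) / (i + 1))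
  choose gF hgF using fun i => exists_isMinimalWUG (μ := μ)
    hW.measurableSet.nullMeasurableSet (F i)
  have hconv : L1LocConv μ W F u := by
    refine h.l1LocConv.of_le_add (e := fun i x => F i x - f i x) hW.measurableSet.nullMeasurableSet
      (l1LocConv_zero_of_tendsto (tendsto_of_tendsto_of_tendsto_of_le_of_le tendsto_const_nhds
        (tendsto_ofReal_div_add_one ε) (fun _ => bot_le) hFf))
      (fun i => ((hF i).continuousOn.aemeasurable hW.measurableSet).sub
        (h.aemeasurable hc hp hd hW i)) fun i x _ => ?_
    rw [add_comm]
    exact abs_sub_le _ _ _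
  refine (iInf₂_le F gF).trans ((iInf₂_le hF hgF).trans ((iInf_le _ hconv).trans ?_))
  refine liminf_le_of_frequently_le' (.of_forall fun i => ?_)
  calc ∫⁻ x in W, gF i x ∂μ ≤ ∫⁻ x in W, q' i x ∂μ := (hgF i).lintegral_le (hq' i)
    _ ≤ ∫⁻ x in W, Q i x ∂μ + ENNReal.ofReal (ε / (i + 1)) := hq'le i
    _ ≤ c + ε := by
        refine add_le_add (h.lintegral_le i) ?_
        rw [← ENNReal.ofReal_coe_nnreal]
        exact ENNReal.ofReal_le_ofReal (div_le_self ε.2 (le_add_of_nonneg_left i.cast_nonneg))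

end TotalVariation

section QuasiOpen

variable {μ : Measure X} {Cd CP lam : ℝ} {u : X → ℝ} {c d : ℝ≥0∞} {U Ω : Set X}
  {w : ℕ → X → ℝ} {gw : ℕ → X → ℝ≥0∞} {G : ℕ → Set X} {η : ℕ → X → ℝ} {q : ℕ → X → ℝ≥0∞}

lemma ofReal_abs_sub_le_two {a b : ℝ} (ha : |a| ≤ 1) (hb : |b| ≤ 1) :
    ENNReal.ofReal |a - b| ≤ 2 := by
  rw [← ENNReal.ofReal_ofNat 2]
  exact ENNReal.ofReal_le_ofReal ((abs_sub a b).trans (by linarith))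

lemma lintegral_ofReal_one_sub_mul_add {α : Type*} [MeasurableSpace α] {ν : Measure α} {θ : α → ℝ}
    {a : α → ℝ≥0∞} (hθ : ∀ x, θ x ∈ Icc (0 : ℝ) 1) (hθm : AEMeasurable θ ν)
    (ha : AEMeasurable a ν) :
    ∫⁻ x, ENNReal.ofReal (1 - θ x) * a x ∂ν + ∫⁻ x, ENNReal.ofReal (θ x) * a x ∂ν =
      ∫⁻ x, a x ∂ν := by
  have hmul : AEMeasurable (fun x => ENNReal.ofReal (θ x) * a x) ν := hθm.ennreal_ofReal.mul ha
  rw [← lintegral_add_right' _ hmul]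
  refine lintegral_congr fun x => ?_
  rw [← add_mul, ← ENNReal.ofReal_add (sub_nonneg.2 (hθ x).2) (hθ x).1, sub_add_cancel,
    ENNReal.ofReal_one, one_mul]

lemma eventually_two_mul_two_inv_pow_le {δ : ℝ≥0∞} (hδ : δ ≠ 0) :
    ∀ᶠ n : ℕ in atTop, 2 * (2⁻¹ : ℝ≥0∞) ^ n ≤ δ := by
  have hlim := ENNReal.Tendsto.const_mul tendsto_two_inv_pow (a := 2) (Or.inr (by simp))
  rw [mul_zero] at hlim
  exact hlim.eventually_le_const hδ.bot_lt

namespace IsCapacitarySequence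

lemma lintegral_two_mul_gradient_le {Y : Type*} [MetricSpace Y] [MeasurableSpace Y]
    {μ : Measure Y} {U : Set Y} {G : ℕ → Set Y} {η : ℕ → Y → ℝ} {q : ℕ → Y → ℝ≥0∞}
    (h : IsCapacitarySequence μ U G η q) (A : Set Y) (m : ℕ) :
    ∫⁻ x in A, 2 * q m x ∂μ ≤ 2 * 2⁻¹ ^ m := by
  rw [lintegral_const_mul'' _ (h.isWeakUpperGradientOn m).1.restrict]
  exact mul_le_mul_right ((setLIntegral_le_lintegral _ _).trans (h.lintegral_gradient_le m)) 2

lemma lintegral_gradient_lt_top {Y : Type*} [MetricSpace Y] [MeasurableSpace Y]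
    {μ : Measure Y} {U : Set Y} {G : ℕ → Set Y} {η : ℕ → Y → ℝ} {q : ℕ → Y → ℝ≥0∞}
    (h : IsCapacitarySequence μ U G η q) (A : Set Y) (m : ℕ) :
    ∫⁻ x in A, q m x ∂μ < ∞ :=
  ((setLIntegral_le_lintegral _ _).trans (h.lintegral_gradient_le m)).trans_lt
    (ENNReal.pow_lt_top (by simp))

/-- Multiplying by `1 - η (m j)` removes the mass that `gw j` carries where `η (m j)` is close to
`1`, without changing the limit. -/
lemma isBoundedApproximation_blend_zero (h : IsCapacitarySequence μ U G η q) (hΩ : IsOpen Ω)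
    (hu : ∀ x ∈ Ω, |u x| ≤ 1) (hw : IsBoundedApproximation μ Ω u w gw d) (hd : d ≠ ∞)
    {m : ℕ → ℕ} (hm : Tendsto m atTop atTop)
    (hc : ∀ j, ∫⁻ x in Ω, ENNReal.ofReal (1 - η (m j) x) * gw j x ∂μ + 2 * 2⁻¹ ^ m j ≤ c) :
    IsBoundedApproximation μ Ω u (fun j => blend (η (m j)) (w j) 0)
      (fun j x => ENNReal.ofReal (1 - η (m j) x) * gw j x + 2 * q (m j) x) c where
  abs_le_one j x := abs_blend_le_one (h.mem_Icc _ x) (hw.abs_le_one j x) (by simp)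
  isWeakUpperGradientOn j := by
    have hzero : IsWeakUpperGradientOn μ (0 : X → ℝ) (fun _ => ((0 : ℝ≥0) : ℝ≥0∞)) Ω :=
      isWeakUpperGradientOn_of_lipschitzOnWith μ (LipschitzWith.const 0).lipschitzOnWith
    simpa only [ENNReal.coe_zero, mul_zero, add_zero] using
      (hw.isWeakUpperGradientOn j).blend hΩ.measurableSet.nullMeasurableSet hzero
        ((h.isWeakUpperGradientOn (m j)).mono_set (subset_univ _))
        ((hw.lintegral_le j).trans_lt hd.lt_top) (by simp) (h.lintegral_gradient_lt_top _ _)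
        (h.mem_Icc _) (h.aemeasurable _)
        fun x => ofReal_abs_sub_le_two (hw.abs_le_one j x) (by simp)
  lintegral_le j := by
    rw [lintegral_add_right' _ ((h.isWeakUpperGradientOn (m j)).1.const_mul 2).restrict]
    exact (add_le_add le_rfl (h.lintegral_two_mul_gradient_le Ω (m j))).trans (hc j)
  l1LocConv := by
    refine hw.l1LocConv.of_le_add hΩ.measurableSet.nullMeasurableSet (e := fun j => η (m j))
      (l1LocConv_zero_of_tendsto ?_) (fun j => (h.aemeasurable _).restrict) fun j x hx => ?_
    · refine tendsto_of_tendsto_of_tendsto_of_le_of_le tendsto_const_nhds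
        (tendsto_two_inv_pow.comp hm) (fun _ => bot_le) fun j => ?_
      simp only [abs_of_nonneg (h.mem_Icc _ _).1]
      exact (setLIntegral_le_lintegral _ _).trans (h.lintegral_le (m j))
    · refine (abs_blend_sub_le (h.mem_Icc _ x) _).trans (add_le_add le_rfl ?_)
      rw [abs_of_nonneg (h.mem_Icc _ x).1, Pi.zero_apply, zero_sub, abs_neg]
      exact mul_le_of_le_one_right (h.mem_Icc _ x).1 (hu x hx)

/-- Otherwise damping `w k` by `1 - η n` would produce approximations of `u` in `Ω` with energy
less than `‖Du‖(Ω)`. -/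
lemma exists_frequently_lintegral_mul_le [ProperSpace X] (h : IsCapacitarySequence μ U G η q)
    (hp : Poincare μ CP lam) (hd : Doubling μ Cd) (hΩ : IsOpen Ω) (hu : ∀ x ∈ Ω, |u x| ≤ 1)
    (hT : tvOpen μ Ω u ≠ ∞) {δ : ℝ≥0∞} (hδ0 : δ ≠ 0) (hδ : δ ≠ ∞)
    (hw : IsBoundedApproximation μ Ω u w gw (tvOpen μ Ω u + δ)) (N : ℕ) :
    ∃ n ≥ N, ∃ᶠ k in atTop, ∫⁻ x in Ω, ENNReal.ofReal (η n x) * gw k x ∂μ ≤ 2 * δ := by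
  by_contra! hcon
  set T := tvOpen μ Ω u
  obtain ⟨N', hN'⟩ := eventually_atTop.1 ((eventually_two_mul_two_inv_pow_le
    (ENNReal.half_pos hδ0).ne').and (eventually_ge_atTop N))
  have hlarge : ∀ j : ℕ, ∃ k ≥ j,
      2 * δ < ∫⁻ x in Ω, ENNReal.ofReal (η (N' + j) x) * gw k x ∂μ := fun j => by
    have hev := hcon (N' + j) (hN' _ le_self_add).2
    obtain ⟨k, hk, hjk⟩ := (hev.and (eventually_ge_atTop j)).exists
    exact ⟨k, hjk, hk⟩
  choose k hk hkδ using hlarge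
  have hfin : T + δ ≠ ∞ := ENNReal.add_ne_top.2 ⟨hT, hδ⟩
  have hgain : ∀ j, ∫⁻ x in Ω, ENNReal.ofReal (1 - η (N' + j) x) * gw (k j) x ∂μ + δ ≤ T := by
    intro j
    refine (ENNReal.add_le_add_iff_right hδ).1 ?_
    rw [add_assoc, ← two_mul]
    refine (add_le_add le_rfl (hkδ j).le).trans (le_trans (le_of_eq ?_) (hw.lintegral_le (k j)))
    exact lintegral_ofReal_one_sub_mul_add (h.mem_Icc _) (h.aemeasurable _).restrict
      (hw.isWeakUpperGradientOn _).1.restrict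
  have hle : T ≤ T - δ / 2 := by
    refine (h.isBoundedApproximation_blend_zero hΩ hu (hw.comp_tendsto
      (tendsto_atTop_mono hk tendsto_id)) hfin (m := fun j => N' + j)
      (tendsto_atTop_mono (fun j => Nat.le_add_left j N') tendsto_id) fun j => ?_).tvOpen_le
      (ne_top_of_le_ne_top hT tsub_le_self) hp hd hΩ
    refine ENNReal.le_sub_of_add_le_right (ENNReal.div_ne_top hδ two_ne_zero) ?_
    calc _ ≤ ∫⁻ x in Ω, ENNReal.ofReal (1 - η (N' + j) x) * gw (k j) x ∂μ + δ / 2 + δ / 2 :=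
          add_le_add (add_le_add le_rfl (hN' _ le_self_add).1) le_rfl
      _ ≤ T := by rw [add_assoc, ENNReal.add_halves]; exact hgain j
  have hT0 : T ≠ 0 := fun h0 => hδ0 (le_zero_iff.1 ((le_add_self.trans (hgain 0)).trans_eq h0))
  exact (ENNReal.sub_lt_self hT hT0 (ENNReal.half_pos hδ0).ne').not_ge hle

end IsCapacitarySequence

end QuasiOpen

section QuasiOpenTotalVariation

/-- A weak upper gradient of `blend η v w` in `(U ∪ G) ∩ Ω`, where `η = 1` in `G`, `|v - w| ≤ 2`,
and `a`, `b`, `c` are weak upper gradients of `v` in `U`, `w` in `Ω` and `η`. Outside `U` nothing is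
known about `v`, but there only the values in `G` matter. -/
def blendGradient {Z : Type*} (U : Set Z) (η : Z → ℝ) (a b c : Z → ℝ≥0∞) (x : Z) : ℝ≥0∞ :=
  U.indicator (fun x => ENNReal.ofReal (1 - η x) * a x + 2 * c x) x + ENNReal.ofReal (η x) * b x

variable {μ : Measure X} {Cd CP lam : ℝ} {u : X → ℝ} {c d e : ℝ≥0∞} {U Ω : Set X}
  {v w : ℕ → X → ℝ} {g gw : ℕ → X → ℝ≥0∞} {G : ℕ → Set X} {η : ℕ → X → ℝ} {q : ℕ → X → ℝ≥0∞}

namespace IsCapacitarySequence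

lemma isWeakUpperGradientOn_blend (h : IsCapacitarySequence μ U G η q) (hΩ : IsOpen Ω)
    (hUΩ : U ⊆ Ω) {f f' : X → ℝ} {a b : X → ℝ≥0∞} (hf : IsWeakUpperGradientOn μ f a U)
    (hf' : IsWeakUpperGradientOn μ f' b Ω) (ha : ∫⁻ x in U, a x ∂μ < ∞)
    (hb : ∫⁻ x in Ω, b x ∂μ < ∞) (hf1 : ∀ x, |f x| ≤ 1) (hf'1 : ∀ x, |f' x| ≤ 1) (n : ℕ) :
    IsWeakUpperGradientOn μ (blend (η n) f f') (blendGradient U (η n) a b (q n))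
      ((U ∪ G n) ∩ Ω) := by
  have hmeas : AEMeasurable (blendGradient U (η n) a b (q n)) μ :=
    ((((aemeasurable_const.sub (h.aemeasurable n)).ennreal_ofReal.mul hf.1).add
      ((h.isWeakUpperGradientOn n).1.const_mul 2)).indicator₀ h.nullMeasurableSet).add
      ((h.aemeasurable n).ennreal_ofReal.mul hf'.1)
  have hU : IsWeakUpperGradientOn μ (blend (η n) f f') (blendGradient U (η n) a b (q n)) U := by
    refine (hf.blend h.nullMeasurableSet (hf'.mono_set hUΩ)
      ((h.isWeakUpperGradientOn n).mono_set (subset_univ _)) ha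
      ((lintegral_mono_set hUΩ).trans_lt hb) (h.lintegral_gradient_lt_top U n) (h.mem_Icc n)
      (h.aemeasurable n) fun x => ofReal_abs_sub_le_two (hf1 x) (hf'1 x)).mono_on hmeas
      fun x hx => ?_
    rw [blendGradient, indicator_of_mem hx]
  have hGΩ : IsWeakUpperGradientOn μ (blend (η n) f f') (blendGradient U (η n) a b (q n))
      (G n ∩ Ω) := by
    refine ((hf'.mono_set inter_subset_right).congr_on fun x hx =>
      (blend_eq_right (h.eq_one n x hx.1)).symm).mono_on hmeas fun x hx => ?_
    rw [blendGradient, h.eq_one n x hx.1, ENNReal.ofReal_one, one_mul]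
    exact le_add_self
  refine h.isWeakUpperGradientOn_of_subset_union hU hGΩ ((h.isOpen n).inter hΩ) ?_
  rw [union_inter_distrib_right]
  exact union_subset_union_left _ inter_subset_left

lemma lintegral_blendGradient_le (h : IsCapacitarySequence μ U G η q) {W : Set X} {a b : X → ℝ≥0∞}
    (hb : AEMeasurable b μ) (n : ℕ) :
    ∫⁻ x in W, blendGradient U (η n) a b (q n) x ∂μ ≤
      ∫⁻ x in U, a x ∂μ + 2 * 2⁻¹ ^ n + ∫⁻ x in W, ENNReal.ofReal (η n x) * b x ∂μ := by
  have hηb : AEMeasurable (fun x => ENNReal.ofReal (η n x) * b x) μ :=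
    (h.aemeasurable n).ennreal_ofReal.mul hb
  simp only [blendGradient]
  rw [lintegral_add_right' _ hηb.restrict]
  refine add_le_add ((setLIntegral_le_lintegral _ _).trans ?_) le_rfl
  rw [lintegral_indicator₀ h.nullMeasurableSet,
    lintegral_add_right' _ ((h.isWeakUpperGradientOn n).1.const_mul 2).restrict]
  refine add_le_add (lintegral_mono fun x => mul_le_of_le_one_left' ?_)
    (h.lintegral_two_mul_gradient_le U n)
  exact ENNReal.ofReal_le_one.2 (sub_le_self 1 (h.mem_Icc n x).1)

lemma isBoundedApproximation_blend (h : IsCapacitarySequence μ U G η q) (hΩ : IsOpen Ω)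
    (hUΩ : U ⊆ Ω) (hum : AEMeasurable u (μ.restrict Ω)) (hv : IsBoundedApproximation μ U u v g c)
    (hc : c ≠ ∞) (hw : IsBoundedApproximation μ Ω u w gw d) (hd : d ≠ ∞)
    (hwm : ∀ i, AEMeasurable (w i) (μ.restrict Ω)) {n : ℕ}
    (he : ∀ i, ∫⁻ x in Ω, ENNReal.ofReal (η n x) * gw i x ∂μ ≤ e) :
    IsBoundedApproximation μ ((U ∪ G n) ∩ Ω) u (fun i => blend (η n) (v i) (w i))
      (fun i => blendGradient U (η n) (g i) (gw i) (q n)) (c + 2 * 2⁻¹ ^ n + e) where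
  abs_le_one i x := abs_blend_le_one (h.mem_Icc n x) (hv.abs_le_one i x) (hw.abs_le_one i x)
  isWeakUpperGradientOn i := h.isWeakUpperGradientOn_blend hΩ hUΩ (hv.isWeakUpperGradientOn i)
    (hw.isWeakUpperGradientOn i) ((hv.lintegral_le i).trans_lt hc.lt_top)
    ((hw.lintegral_le i).trans_lt hd.lt_top) (hv.abs_le_one i) (hw.abs_le_one i) n
  lintegral_le i := (h.lintegral_blendGradient_le (hw.isWeakUpperGradientOn i).1 n).trans
    (add_le_add (add_le_add (hv.lintegral_le i) le_rfl)
      ((lintegral_mono_set inter_subset_right).trans (he i)))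
  l1LocConv := by
    have hrestrict : μ.restrict U ≤ μ.restrict Ω := Measure.restrict_mono hUΩ le_rfl
    have hUconv : L1LocConv μ U (fun i => blend (η n) (v i) (w i)) u :=
      hv.l1LocConv.blend (hw.l1LocConv.mono_set hUΩ) h.nullMeasurableSet
        (fun i => (hwm i).mono_measure hrestrict) (hum.mono_measure hrestrict) (h.mem_Icc n)
    exact hUconv.union_inter_of_eqOn hw.l1LocConv (h.isOpen n) hΩ
      fun i x hx => blend_eq_right (h.eq_one n x hx)

lemma tv_le_add [ProperSpace X] (h : IsCapacitarySequence μ U G η q) (hp : Poincare μ CP lam)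
    (hd : Doubling μ Cd) (hΩ : IsOpen Ω) (hUΩ : U ⊆ Ω) (hum : AEMeasurable u (μ.restrict Ω))
    (hu : ∀ x ∈ Ω, |u x| ≤ 1) (hT : tvOpen μ Ω u ≠ ∞) (hv : IsBoundedApproximation μ U u v g c)
    (hc : c ≠ ∞) {δ : ℝ≥0∞} (hδ0 : δ ≠ 0) (hδ : δ ≠ ∞) : tv μ U u ≤ c + δ + 2 * δ := by
  have hTδ : tvOpen μ Ω u + δ ≠ ∞ := ENNReal.add_ne_top.2 ⟨hT, hδ⟩
  obtain ⟨w, gw, hw⟩ :=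
    exists_isBoundedApproximation_of_tvOpen_lt hΩ hu (ENNReal.lt_add_right hT hδ0)
  obtain ⟨N, hN⟩ := eventually_atTop.1 (eventually_two_mul_two_inv_pow_le hδ0)
  obtain ⟨n, hn, hfreq⟩ := h.exists_frequently_lintegral_mul_le hp hd hΩ hu hT hδ0 hδ hw N
  obtain ⟨φ, hφ, hφδ⟩ := extraction_of_frequently_atTop hfreq
  have hwφ := hw.comp_tendsto hφ.tendsto_atTop
  have hblend := h.isBoundedApproximation_blend hΩ hUΩ hum hv hc hwφ hTδ
    (hwφ.aemeasurable hTδ hp hd hΩ) hφδ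
  have hW : IsOpen ((U ∪ G n) ∩ Ω) := (h.isOpen_union n).inter hΩ
  have hnδ : c + 2 * 2⁻¹ ^ n + 2 * δ ≤ c + δ + 2 * δ :=
    add_le_add (add_le_add le_rfl (hN n hn)) le_rfl
  calc tv μ U u ≤ tvOpen μ ((U ∪ G n) ∩ Ω) u :=
        iInf_le_of_le _ (iInf₂_le hW (subset_inter subset_union_left hUΩ))
    _ ≤ c + 2 * 2⁻¹ ^ n + 2 * δ :=
        hblend.tvOpen_le (ne_top_of_le_ne_top (by finiteness) hnδ) hp hd hW
    _ ≤ c + δ + 2 * δ := hnδ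

lemma tv_le_liminf [ProperSpace X] (h : IsCapacitarySequence μ U G η q) (hp : Poincare μ CP lam)
    (hd : Doubling μ Cd) (hΩ : IsOpen Ω) (hUΩ : U ⊆ Ω) (hum : AEMeasurable u (μ.restrict Ω))
    (hu : ∀ x ∈ Ω, |u x| ≤ 1) (hT : tvOpen μ Ω u ≠ ∞)
    (hg : ∀ i, IsWeakUpperGradientOn μ (v i) (g i) U) (hv : L1LocConv μ U v u) :
    tv μ U u ≤ liminf (fun i => ∫⁻ x in U, g i x ∂μ) atTop := by
  refine le_of_forall_gt_imp_ge_of_dense fun c hc => ?_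
  rcases eq_or_ne c ∞ with rfl | hc_top
  · exact le_top
  obtain ⟨f, g', hf⟩ := exists_isBoundedApproximation_of_liminf_lt h.nullMeasurableSet
    (fun x hx => hu x (hUΩ hx)) hg hv hc
  refine ENNReal.le_of_forall_pos_le_add fun ε hε _ => ?_
  have hδ : (ε / 3 : ℝ≥0) ≠ 0 := (div_pos hε three_pos).ne'
  refine (h.tv_le_add hp hd hΩ hUΩ hum hu hT hf hc_top (ENNReal.coe_ne_zero.2 hδ)
    ENNReal.coe_ne_top).trans_eq ?_
  rw [add_assoc]
  congr 1
  norm_cast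
  ring

end IsCapacitarySequence

lemma LocLipOn.memN11Loc {f : X → ℝ} (hf : LocLipOn f Ω) (hΩ : IsOpen Ω) (hd : Doubling μ Cd)
    (hUΩ : U ⊆ Ω) : MemN11Loc μ U f := by
  intro x hx
  obtain ⟨r, hr, K, hK⟩ := hf x (hUΩ hx)
  have hsub : U ∩ ball x r ⊆ Ω ∩ ball x r := inter_subset_inter_left _ hUΩ
  have hμ : μ (Ω ∩ ball x r) < ∞ :=
    (measure_mono inter_subset_right).trans_lt (hd.measure_ball_lt_top x r)
  have hbound : ∀ y ∈ Ω ∩ ball x r, |f y| ≤ |f x| + K * r := fun y hy => by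
    have hdist : dist (f y) (f x) ≤ K * r :=
      (hK.dist_le_mul y hy x ⟨hUΩ hx, mem_ball_self hr⟩).trans
        (mul_le_mul_of_nonneg_left (mem_ball.1 hy.2).le K.2)
    rw [Real.dist_eq] at hdist
    linarith [abs_sub_abs_le_abs_sub (f y) (f x)]
  refine ⟨r, hr, ENNReal.add_lt_top.2 ⟨?_, ?_⟩⟩
  · calc ∫⁻ y in U ∩ ball x r, ENNReal.ofReal |f y| ∂μ
        ≤ ∫⁻ y in Ω ∩ ball x r, ENNReal.ofReal |f y| ∂μ := lintegral_mono_set hsub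
      _ ≤ ∫⁻ _ in Ω ∩ ball x r, ENNReal.ofReal (|f x| + K * r) ∂μ :=
          setLIntegral_mono' (hΩ.inter isOpen_ball).measurableSet fun y hy =>
            ENNReal.ofReal_le_ofReal (hbound y hy)
      _ < ∞ := by
          rw [setLIntegral_const]
          exact ENNReal.mul_lt_top ENNReal.ofReal_lt_top hμ
  · refine (iInf₂_le (fun _ => (K : ℝ≥0∞))
      (isWeakUpperGradientOn_of_lipschitzOnWith μ (hK.mono hsub))).trans_lt ?_
    rw [setLIntegral_const]
    exact ENNReal.mul_lt_top ENNReal.coe_lt_top ((measure_mono hsub).trans_lt hμ)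

lemma iInf_liminf_le_tv [ProperSpace X] (hd : Doubling μ Cd) (hU : NullMeasurableSet U μ) :
    ⨅ (v : ℕ → X → ℝ) (g : ℕ → X → ℝ≥0∞) (_ : ∀ i, MemN11Loc μ U (v i))
      (_ : ∀ i, IsMinimalWUG μ (v i) (g i) U) (_ : L1LocConv μ U v u),
      liminf (fun i => ∫⁻ x in U, g i x ∂μ) atTop ≤ tv μ U u := by
  have := hd.isLocallyFiniteMeasure
  refine le_iInf fun Ω => le_iInf₂ fun hΩ hUΩ => ?_
  refine le_iInf₂ fun v g => le_iInf₂ fun hv hg => le_iInf fun hconv => ?_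
  choose g' hg' using fun i => exists_isMinimalWUG (μ := μ) hU (v i)
  refine (iInf₂_le v g').trans ((iInf₂_le (fun i => (hv i).memN11Loc hΩ hd hUΩ) hg').trans
    ((iInf_le _ (hconv.mono_set hUΩ)).trans ?_))
  refine liminf_le_liminf (.of_forall fun i => ?_)
  calc ∫⁻ x in U, g' i x ∂μ ≤ ∫⁻ x in U, g i x ∂μ := (hg' i).lintegral_le ((hg i).1.mono_set hUΩ)
    _ ≤ ∫⁻ x in Ω, g i x ∂μ := lintegral_mono_set hUΩ

end QuasiOpenTotalVariation

/-- Characterization of the total variation in `1`-quasiopen sets for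
bounded functions: if `U` is `1`-quasiopen, `Ω ⊇ U` is open, and `u` is `μ`-measurable
on `Ω` with `-1 ≤ u ≤ 1` and `‖Du‖(Ω) < ∞`, then `‖Du‖(U)` equals the infimum of
`liminf_i ∫_U g_{u_i} dμ` over sequences `u_i ∈ N^{1,1}_loc(U)` with `u_i → u` in
`L¹_loc(U)`, where `g_{u_i}` is the minimal `1`-weak upper gradient of `u_i` in `U`. -/
theorem total_variation_char_in_quasiopen_of_bounded
    (μ : Measure X) (hcomp : CompleteSpace X)
    (hdoub : ∃ Cd : ℝ, Doubling μ Cd) (hpoin : ∃ CP lam : ℝ, Poincare μ CP lam)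
    (U Ω : Set X) (hU : QuasiOpen μ U) (hΩ : IsOpen Ω) (hUΩ : U ⊆ Ω)
    (u : X → ℝ) (hmeas : AEMeasurable u (μ.restrict Ω))
    (hbdd : ∀ x ∈ Ω, -1 ≤ u x ∧ u x ≤ 1)
    (hfin : tvOpen μ Ω u < ∞) :
    tv μ U u =
      ⨅ (v : ℕ → X → ℝ) (g : ℕ → X → ℝ≥0∞) (_ : ∀ i, MemN11Loc μ U (v i))
        (_ : ∀ i, IsMinimalWUG μ (v i) (g i) U) (_ : L1LocConv μ U v u),
        Filter.liminf (fun i => ∫⁻ x in U, g i x ∂μ) Filter.atTop := by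
  obtain ⟨Cd, hd⟩ := hdoub
  obtain ⟨CP, lam, hp⟩ := hpoin
  have := hd.properSpace
  obtain ⟨G, η, q, hcap⟩ := hU.exists_isCapacitarySequence hp hd
  refine le_antisymm ?_ (iInf_liminf_le_tv hd hcap.nullMeasurableSet)
  refine le_iInf₂ fun v g => le_iInf₂ fun _ hg => le_iInf fun hv => ?_
  exact hcap.tv_le_liminf hp hd hΩ hUΩ hmeas (fun x hx => abs_le.2 (hbdd x hx)) hfin.ne
    (fun i => (hg i).1) hv

end PaperBV
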